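/- Let ν ≥ 1, let N ⊆ ℝ^ν be a compact connected smooth embedded submanifold without boundary with base point b ∈ N, and let 2 ≤ p < m be real numbers with m an integer. Assume that either (a) π_ℓ(N, b) is infinite for some ℓ ∈ {1, …, ⌊p−1⌋}, or (b) p is an integer and π_{p−1}(N, b) is nontrivial. Then there exists a map u : B^{m−1} → N, smooth on the open unit ball B^{m−1} ⊆ ℝ^{m−1}, with E^{1−1/p, p}_{B^{m−1}}(u) < ∞, such that every map U : B^{m−1} × [0,1) → N that is continuous, is C^1 on B^{m−1} × (0,1), and satisfies U(x, 0) = u(x) for all x ∈ B^{m−1}, has ∫_{B^{m−1}×(0,1)} ‖DU‖^p = ∞. -/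

import Mathlib

open Metric Set MeasureTheory Filter
open scoped ENNReal Topology

noncomputable section

/-- `N ⊆ ℝ^ν` is a smooth embedded submanifold without boundary: around each of its points
there is a smooth local diffeomorphism of the ambient space flattening `N` onto a
`d`-dimensional coordinate subspace. -/
def IsSmoothSubmanifold {ν : ℕ} (N : Set (EuclideanSpace ℝ (Fin ν))) : Prop :=
  ∃ d : ℕ, ∀ x ∈ N, ∃ (U V : Set (EuclideanSpace ℝ (Fin ν)))
      (φ ψ : EuclideanSpace ℝ (Fin ν) → EuclideanSpace ℝ (Fin ν)),
    IsOpen U ∧ IsOpen V ∧ x ∈ U ∧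
    ContDiffOn ℝ (⊤ : ℕ∞) φ U ∧ ContDiffOn ℝ (⊤ : ℕ∞) ψ V ∧
    MapsTo φ U V ∧ MapsTo ψ V U ∧
    (∀ y ∈ U, ψ (φ y) = y) ∧ (∀ z ∈ V, φ (ψ z) = z) ∧
    (∀ y ∈ U, (y ∈ N ↔ ∀ i : Fin ν, d ≤ (i : ℕ) → φ y i = 0))

/-- The Gagliardo fractional energy `E^{s,p}_A(u)`. -/
def gagliardoE {l ν : ℕ} (s p : ℝ) (A : Set (EuclideanSpace ℝ (Fin l)))
    (u : EuclideanSpace ℝ (Fin l) → EuclideanSpace ℝ (Fin ν)) : ℝ≥0∞ :=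
  ∫⁻ x in A, ∫⁻ y in A, ENNReal.ofReal (‖u y - u x‖ ^ p / ‖y - x‖ ^ ((l : ℝ) + s * p))

/-- `f` is `C^1` on the closed set `A` in the sense that it is (the restriction of)
a `C^1` map on an open neighborhood of `A`. -/
def C1OnNhd {E F : Type*} [NormedAddCommGroup E] [NormedSpace ℝ E]
    [NormedAddCommGroup F] [NormedSpace ℝ F] (f : E → F) (A : Set E) : Prop :=
  ∃ V : Set E, IsOpen V ∧ A ⊆ V ∧ ContDiffOn ℝ 1 f V

/-- `f` is `C^∞` on the closed set `A` in the sense that it is (the restriction of)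
a smooth map on an open neighborhood of `A`. -/
def SmoothOnNhd {E F : Type*} [NormedAddCommGroup E] [NormedSpace ℝ E]
    [NormedAddCommGroup F] [NormedSpace ℝ F] (f : E → F) (A : Set E) : Prop :=
  ∃ V : Set E, IsOpen V ∧ A ⊆ V ∧ ContDiffOn ℝ (⊤ : ℕ∞) f V

/-- The `C^1` extension `p`-energy `E^{1,p}_ext(u)` of a map `u : B̄^l → N`:
the infimum (in `ℝ≥0∞`, so `sInf ∅ = ∞`) of `∫_{B^l × (0,1)} ‖DU‖^p` over all `C^1` maps
`U : B̄^l × [0,1] → N` with `U(·,0) = u`. -/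
def extEnergy {l ν : ℕ} (p : ℝ) (N : Set (EuclideanSpace ℝ (Fin ν)))
    (u : EuclideanSpace ℝ (Fin l) → EuclideanSpace ℝ (Fin ν)) : ℝ≥0∞ :=
  sInf { e | ∃ U : EuclideanSpace ℝ (Fin l) × ℝ → EuclideanSpace ℝ (Fin ν),
    C1OnNhd U (closedBall 0 1 ×ˢ Icc (0 : ℝ) 1) ∧
    MapsTo U (closedBall 0 1 ×ˢ Icc (0 : ℝ) 1) N ∧
    (∀ x ∈ closedBall (0 : EuclideanSpace ℝ (Fin l)) 1, U (x, 0) = u x) ∧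
    e = ∫⁻ z in ball (0 : EuclideanSpace ℝ (Fin l)) 1 ×ˢ Ioo (0 : ℝ) 1,
          ENNReal.ofReal (‖fderiv ℝ U z‖ ^ p) }

/-- `f` and `g`, mapping `B̄^l` into `N` and agreeing on `S^{l-1}`, are homotopic within `N`
relative to the sphere `S^{l-1}`. -/
def HomotopicRelSphere {l ν : ℕ} (N : Set (EuclideanSpace ℝ (Fin ν)))
    (f g : EuclideanSpace ℝ (Fin l) → EuclideanSpace ℝ (Fin ν)) : Prop :=
  ∃ H : EuclideanSpace ℝ (Fin l) × ℝ → EuclideanSpace ℝ (Fin ν),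
    ContinuousOn H (closedBall 0 1 ×ˢ Icc (0 : ℝ) 1) ∧
    MapsTo H (closedBall 0 1 ×ˢ Icc (0 : ℝ) 1) N ∧
    (∀ x ∈ closedBall (0 : EuclideanSpace ℝ (Fin l)) 1, H (x, 0) = f x ∧ H (x, 1) = g x) ∧
    (∀ x ∈ sphere (0 : EuclideanSpace ℝ (Fin l)) 1, ∀ t ∈ Icc (0 : ℝ) 1, H (x, t) = f x)

/-- The topological `p`-energy `E^{1,p}_top(u)` of `u : B̄^l → N` with `u = b` on `S^{l-1}`:
the infimum (in `ℝ≥0∞`) of `∫_{B^l} ‖Dw‖^p` over all `C^1` maps `w : B̄^l → N` with `w = b` on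
`S^{l-1}` that are homotopic to `u` relative to `S^{l-1}`. -/
def topEnergy {l ν : ℕ} (p : ℝ) (N : Set (EuclideanSpace ℝ (Fin ν)))
    (b : EuclideanSpace ℝ (Fin ν))
    (u : EuclideanSpace ℝ (Fin l) → EuclideanSpace ℝ (Fin ν)) : ℝ≥0∞ :=
  sInf { e | ∃ w : EuclideanSpace ℝ (Fin l) → EuclideanSpace ℝ (Fin ν),
    C1OnNhd w (closedBall 0 1) ∧ MapsTo w (closedBall 0 1) N ∧
    (∀ x ∈ sphere (0 : EuclideanSpace ℝ (Fin l)) 1, w x = b) ∧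
    HomotopicRelSphere N w u ∧
    e = ∫⁻ x in ball (0 : EuclideanSpace ℝ (Fin l)) 1, ENNReal.ofReal (‖fderiv ℝ w x‖ ^ p) }


/-- Smooth inverse function theorem on a whole neighbourhood. -/
lemma aux_ift {E : Type*} [NormedAddCommGroup E] [NormedSpace ℝ E] [FiniteDimensional ℝ E]
    {f : E → E} {S : Set E} (hS : IsOpen S) (hf : ContDiffOn ℝ (⊤ : ℕ∞) f S) {a : E}
    (ha : a ∈ S) (hinj : Function.Injective (fderiv ℝ f a)) :
    ∃ (O O' : Set E) (g : E → E), IsOpen O ∧ IsOpen O' ∧ a ∈ O ∧ f a ∈ O' ∧ O ⊆ S ∧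
      ContDiffOn ℝ (⊤ : ℕ∞) g O' ∧ (∀ x ∈ O, f x ∈ O' → g (f x) = x) := by
  have : CompleteSpace E := FiniteDimensional.complete ℝ E
  have hequiv : ∀ L : E →L[ℝ] E, Function.Injective L → ∃ e : E ≃L[ℝ] E, (e : E →L[ℝ] E) = L := by
    intro L hL
    refine ⟨(LinearEquiv.ofInjectiveEndo (L : E →ₗ[ℝ] E) hL).toContinuousLinearEquiv, ?_⟩
    ext x
    rfl
  have hfa : ∀ x ∈ S, ContDiffAt ℝ (⊤ : ℕ∞) f x := fun x hx => hf.contDiffAt (hS.mem_nhds hx)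
  obtain ⟨e, he⟩ := hequiv _ hinj
  have hne : ((⊤ : ℕ∞) : WithTop ℕ∞) ≠ 0 := by simp
  have hda : HasFDerivAt f (e : E →L[ℝ] E) a := by
    rw [he]; exact ((hfa a ha).differentiableAt hne).hasFDerivAt
  set Φ := (hfa a ha).toOpenPartialHomeomorph f hda hne with hΦ
  have hsrc : a ∈ Φ.source := (hfa a ha).mem_toOpenPartialHomeomorph_source hda hne
  have hcoe : (Φ : E → E) = f := (hfa a ha).toOpenPartialHomeomorph_coe hda hne
  -- invertibility nearby
  have hcd : ContinuousAt (fderiv ℝ f) a :=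
    ((hf.continuousOn_fderiv_of_isOpen hS (by simp)).continuousAt (hS.mem_nhds ha))
  have hnb : ∀ᶠ x in 𝓝 a, fderiv ℝ f x ∈ range ((↑) : (E ≃L[ℝ] E) → E →L[ℝ] E) := by
    apply hcd.eventually
    rw [← he]
    exact ContinuousLinearEquiv.nhds e
  obtain ⟨O1, hO1, hO1o, haO1⟩ := _root_.eventually_nhds_iff.1 hnb
  refine ⟨Φ.source ∩ (S ∩ O1), Φ.target ∩ Φ.symm ⁻¹' (S ∩ O1), Φ.symm,
    Φ.open_source.inter (hS.inter hO1o), Φ.symm.isOpen_inter_preimage (hS.inter hO1o),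
    ⟨hsrc, ha, haO1⟩, ?_, fun x hx => hx.2.1, ?_, ?_⟩
  · rw [← hcoe]
    refine ⟨Φ.map_source hsrc, ?_⟩
    simp only [mem_preimage, Φ.left_inv hsrc]
    exact ⟨ha, haO1⟩
  · intro y hy
    obtain ⟨hy1, hy2, hy3⟩ := hy
    obtain ⟨e', he'⟩ := hO1 _ hy3
    apply ContDiffAt.contDiffWithinAt
    refine Φ.contDiffAt_symm (f₀' := e') hy1 ?_ ?_
    · rw [he', hcoe]
      exact ((hfa _ hy2).differentiableAt hne).hasFDerivAt
    · rw [hcoe]; exact hfa _ hy2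
  · intro x hx _
    rw [← hcoe]
    exact Φ.left_inv hx.1

/-- Local smoothness of the nearest point projection. -/
lemma aux_nearest_local {ν : ℕ} {N : Set (EuclideanSpace ℝ (Fin ν))}
    (hNsub : IsSmoothSubmanifold N)
    (π : EuclideanSpace ℝ (Fin ν) → EuclideanSpace ℝ (Fin ν))
    (hπN : ∀ y, π y ∈ N) (hπ : ∀ y, ∀ q ∈ N, dist (π y) y ≤ dist q y)
    (x : EuclideanSpace ℝ (Fin ν)) (hx : x ∈ N) :
    ∃ W, IsOpen W ∧ x ∈ W ∧ ContDiffOn ℝ (⊤ : ℕ∞) π W := by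
  obtain ⟨d, hd⟩ := hNsub
  obtain ⟨U, V, φ, ψ, hU, hV, hxU, hφ, hψ, hφm, hψm, hψφ, hφψ, hiff⟩ := hd x hx
  set z0 := φ x with hz0
  have hz0V : z0 ∈ V := hφm hxU
  have hψz0 : ψ z0 = x := hψφ x hxU
  have hne : ((⊤ : ℕ∞) : WithTop ℕ∞) ≠ 0 := by simp
  have hψa : ∀ z ∈ V, DifferentiableAt ℝ ψ z := fun z hz =>
    (hψ.contDiffAt (hV.mem_nhds hz)).differentiableAt hne
  have hdψ : ContDiffOn ℝ (⊤ : ℕ∞) (fderiv ℝ ψ) V := hψ.fderiv_of_isOpen hV (by simp)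
  let e : Fin ν → EuclideanSpace ℝ (Fin ν) := fun i => EuclideanSpace.single i (1 : ℝ)
  let Θ : EuclideanSpace ℝ (Fin ν) × EuclideanSpace ℝ (Fin ν) → EuclideanSpace ℝ (Fin ν) :=
    fun w => WithLp.toLp 2 (fun i => if (i : ℕ) < d then inner ℝ (fderiv ℝ ψ w.1 (e i)) (ψ w.1 - w.2)
      else w.1 i)
  let Γ : EuclideanSpace ℝ (Fin ν) × EuclideanSpace ℝ (Fin ν) →
      EuclideanSpace ℝ (Fin ν) × EuclideanSpace ℝ (Fin ν) := fun w => (Θ w, w.2)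
  have hS : IsOpen (V ×ˢ (univ : Set (EuclideanSpace ℝ (Fin ν)))) := hV.prod isOpen_univ
  have hfst : MapsTo Prod.fst (V ×ˢ (univ : Set (EuclideanSpace ℝ (Fin ν)))) V := fun w hw => hw.1
  have hΓ : ContDiffOn ℝ (⊤ : ℕ∞) Γ (V ×ˢ univ) := by
    refine ContDiffOn.prodMk ?_ contDiff_snd.contDiffOn
    rw [contDiffOn_euclidean]
    intro i
    by_cases hi : (i : ℕ) < d
    · simp only [Θ, hi, if_true]
      refine ContDiffOn.inner ℝ ?_ ?_
      · exact (hdψ.comp contDiff_fst.contDiffOn hfst).clm_apply contDiffOn_const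
      · exact (hψ.comp contDiff_fst.contDiffOn hfst).sub contDiff_snd.contDiffOn
    · simp only [Θ, hi, if_false]
      exact ((contDiff_euclidean.1 contDiff_id i).comp contDiff_fst).contDiffOn
  have ha : (z0, x) ∈ V ×ˢ (univ : Set (EuclideanSpace ℝ (Fin ν))) := ⟨hz0V, mem_univ _⟩
  set J := fderiv ℝ ψ z0 with hJ
  have hJinj : ∀ ζ, J ζ = 0 → ζ = 0 := by
    intro ζ hζ
    have h1 : HasFDerivAt (fun z => φ (ψ z)) ((fderiv ℝ φ x).comp J) z0 := by
      have hA : HasFDerivAt φ (fderiv ℝ φ x) (ψ z0) := by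
        rw [hψz0]
        exact ((hφ.contDiffAt (hU.mem_nhds hxU)).differentiableAt hne).hasFDerivAt
      exact hA.comp z0 (hψa z0 hz0V).hasFDerivAt
    have h2 : HasFDerivAt (fun z => φ (ψ z)) (ContinuousLinearMap.id ℝ _) z0 := by
      refine (hasFDerivAt_id z0).congr_of_eventuallyEq ?_
      filter_upwards [hV.mem_nhds hz0V] with z hz using hφψ z hz
    have h3 := h1.unique h2
    have h4 := congrArg (fun L => L ζ) h3
    simp only [ContinuousLinearMap.comp_apply, hζ, map_zero, ContinuousLinearMap.id_apply] at h4
    exact h4.symm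
  have hinj : Function.Injective (fderiv ℝ Γ (z0, x)) := by
    rw [injective_iff_map_eq_zero]
    rintro ⟨ζ, η⟩ hζ
    have hΓd : DifferentiableAt ℝ Γ (z0, x) :=
      (hΓ.contDiffAt (hS.mem_nhds ha)).differentiableAt hne
    have hη : η = 0 := by
      have h1 : HasFDerivAt (fun w => (Γ w).2) ((ContinuousLinearMap.snd ℝ _ _).comp
        (fderiv ℝ Γ (z0, x))) (z0, x) := hasFDerivAt_snd.comp _ hΓd.hasFDerivAt
      have h2 : HasFDerivAt (fun w => (Γ w).2) (ContinuousLinearMap.snd ℝ (EuclideanSpace ℝ (Fin ν))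
        (EuclideanSpace ℝ (Fin ν))) (z0, x) := hasFDerivAt_snd
      have h4 := congrArg (fun L => L (ζ, η)) (h1.unique h2)
      simp only [ContinuousLinearMap.comp_apply, hζ] at h4
      simpa using h4.symm
    subst hη
    have hcoord : ∀ i : Fin ν, HasFDerivAt (fun w => (Γ w).1 i)
        ((EuclideanSpace.proj (𝕜 := ℝ) i).comp ((ContinuousLinearMap.fst ℝ _ _).comp
          (fderiv ℝ Γ (z0, x)))) (z0, x) := by
      intro i
      exact (EuclideanSpace.proj (𝕜 := ℝ) i).hasFDerivAt.comp _
        (hasFDerivAt_fst.comp _ hΓd.hasFDerivAt)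
    have hA : ∀ i : Fin ν, ¬ (i : ℕ) < d → ζ i = 0 := by
      intro i hi
      have h2 : HasFDerivAt (fun w => (Γ w).1 i) ((EuclideanSpace.proj (𝕜 := ℝ) i).comp
          (ContinuousLinearMap.fst ℝ (EuclideanSpace ℝ (Fin ν))
          (EuclideanSpace ℝ (Fin ν)))) (z0, x) := by
        have : (fun w => (Γ w).1 i) = fun w => w.1 i := by
          funext w
          simp [Γ, Θ, hi]
        rw [this]
        exact (EuclideanSpace.proj (𝕜 := ℝ) i).hasFDerivAt.comp _ hasFDerivAt_fst
      have h4 := congrArg (fun L => L (ζ, (0 : EuclideanSpace ℝ (Fin ν)))) ((hcoord i).unique h2)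
      simp only [ContinuousLinearMap.comp_apply, hζ] at h4
      simpa using h4.symm
    have hB : ∀ i : Fin ν, (i : ℕ) < d → inner ℝ (J (e i)) (J ζ) = 0 := by
      intro i hi
      have hd1 : HasFDerivAt (fun w : EuclideanSpace ℝ (Fin ν) × EuclideanSpace ℝ (Fin ν) =>
          fderiv ℝ ψ w.1 (e i)) (fderiv ℝ (fun w : EuclideanSpace ℝ (Fin ν) × EuclideanSpace ℝ (Fin ν) =>
          fderiv ℝ ψ w.1 (e i)) (z0, x)) (z0, x) := by
        apply DifferentiableAt.hasFDerivAt
        have := (hdψ.comp contDiff_fst.contDiffOn hfst).clm_apply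
          (contDiffOn_const (c := e i))
        exact (this.contDiffAt (hS.mem_nhds ha)).differentiableAt hne
      have hd2 : HasFDerivAt (fun w : EuclideanSpace ℝ (Fin ν) × EuclideanSpace ℝ (Fin ν) =>
          ψ w.1 - w.2) (J.comp (ContinuousLinearMap.fst ℝ _ _) - ContinuousLinearMap.snd ℝ _ _)
          (z0, x) :=
        HasFDerivAt.sub (HasFDerivAt.comp (z0, x) (f := Prod.fst) (hψa z0 hz0V).hasFDerivAt
          hasFDerivAt_fst) hasFDerivAt_snd
      have h2 := hd1.inner ℝ hd2
      have h3 : (fun w => (Γ w).1 i) = fun w : EuclideanSpace ℝ (Fin ν) × EuclideanSpace ℝ (Fin ν) =>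
          inner ℝ (fderiv ℝ ψ w.1 (e i)) (ψ w.1 - w.2) := by
        funext w
        simp [Γ, Θ, hi]
      rw [← h3] at h2
      have h4 := congrArg (fun L => L (ζ, (0 : EuclideanSpace ℝ (Fin ν)))) ((hcoord i).unique h2)
      simp only [ContinuousLinearMap.comp_apply, hζ] at h4
      simp [hψz0, fderivInnerCLM_apply] at h4
      exact h4.symm
    have hζsum : ζ = ∑ i, ζ i • e i := by
      ext j
      simp [e, Finset.sum_apply, Pi.single_apply]
    have hz : ζ = 0 := by
      apply hJinj
      rw [← inner_self_eq_zero (𝕜 := ℝ)]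
      nth_rewrite 1 [hζsum]
      rw [map_sum, sum_inner]
      apply Finset.sum_eq_zero
      intro i _
      rw [map_smul, inner_smul_left]
      by_cases hi : (i : ℕ) < d
      · rw [hB i hi, mul_zero]
      · rw [hA i hi]; simp
    rw [hz]; rfl
  obtain ⟨O, O', g, hO, hO', haO, haO', hOS, hg, hgu⟩ := aux_ift hS hΓ ha hinj
  have hΘ0 : Γ (z0, x) = (0, x) := by
    have hxz := (hiff x hxU).1 hx
    simp only [Γ, Prod.mk.injEq, and_true]
    ext i
    by_cases hi : (i : ℕ) < d
    · simp [Θ, hi, hψz0]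
    · simpa [Θ, hi] using hxz i (not_lt.1 hi)
  rw [hΘ0] at haO'
  -- continuity of nearest point at x
  have hπx : Tendsto π (𝓝 x) (𝓝 x) := by
    rw [tendsto_iff_dist_tendsto_zero]
    have : Tendsto (fun y => 2 * dist y x) (𝓝 x) (𝓝 0) := by
      have h := (tendsto_id (x := 𝓝 x)).dist (tendsto_const_nhds (x := x))
      simpa using h.const_mul 2
    refine squeeze_zero (fun _ => dist_nonneg) (fun y => ?_) this
    have h1 := hπ y x hx
    have h2 := dist_triangle (π y) y x
    rw [dist_comm x y] at h1
    linarith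
  have hφx : ContinuousAt φ x := hφ.continuousOn.continuousAt (hU.mem_nhds hxU)
  have hpair : Tendsto (fun y => (φ (π y), y)) (𝓝 x) (𝓝 (z0, x)) :=
    (hφx.tendsto.comp hπx).prodMk_nhds tendsto_id
  have hev : ∀ᶠ y in 𝓝 x, π y ∈ U ∧ (φ (π y), y) ∈ O ∧ ((0 : EuclideanSpace ℝ (Fin ν)), y) ∈ O' := by
    refine (hπx.eventually (hU.mem_nhds hxU)).and ((hpair.eventually (hO.mem_nhds haO)).and ?_)
    have : Tendsto (fun y => ((0 : EuclideanSpace ℝ (Fin ν)), y)) (𝓝 x) (𝓝 (0, x)) :=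
      tendsto_const_nhds.prodMk_nhds tendsto_id
    exact this.eventually (hO'.mem_nhds haO')
  obtain ⟨W, hW, hWo, hxW⟩ := _root_.eventually_nhds_iff.1 hev
  have hkey : ∀ y ∈ W, π y = ψ (g (0, y)).1 ∧ (g (0, y)).1 ∈ V := by
    intro y hy
    obtain ⟨h1, h2, h3⟩ := hW y hy
    have hzV : φ (π y) ∈ V := hφm h1
    have hΘ : Γ (φ (π y), y) = (0, y) := by
      have hxz := (hiff _ h1).1 (hπN y)
      simp only [Γ, Prod.mk.injEq, and_true]
      ext i
      by_cases hi : (i : ℕ) < d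
      · simp only [Θ, hi, if_true]
        -- first order condition
        set z := φ (π y) with hz
        have hline : HasDerivAt (fun s : ℝ => z + s • e i) (e i) 0 := by
          simpa using ((hasDerivAt_id (0 : ℝ)).smul_const (e i)).const_add z
        have hψl : HasDerivAt (fun s : ℝ => ψ (z + s • e i)) (fderiv ℝ ψ z (e i)) 0 := by
          have hA : HasFDerivAt ψ (fderiv ℝ ψ z) (z + (0 : ℝ) • e i) := by
            simpa using (hψa z hzV).hasFDerivAt
          exact hA.comp_hasDerivAt (0 : ℝ) hline
        have hsq := (hψl.sub_const y).norm_sq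
        have hmin : IsLocalMin (fun s : ℝ => ‖ψ (z + s • e i) - y‖ ^ 2) 0 := by
          have hcont : Tendsto (fun s : ℝ => z + s • e i) (𝓝 0) (𝓝 z) := by
            simpa using hline.continuousAt.tendsto
          filter_upwards [hcont.eventually (hV.mem_nhds hzV)] with s hs
          have hmem : ψ (z + s • e i) ∈ N := by
            rw [hiff _ (hψm hs)]
            intro j hj
            rw [hφψ _ hs]
            have hij : j ≠ i := by
              rintro rfl; omega
            have := hxz j hj
            simp [e, hij, this]
          have h5 := hπ y _ hmem
          rw [dist_eq_norm, dist_eq_norm] at h5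
          simp only [zero_smul, add_zero]
          rw [hz, hψφ _ h1]
          gcongr
        have h6 := hmin.hasDerivAt_eq_zero hsq
        simp only [zero_smul, add_zero] at h6
        rw [real_inner_comm]
        simpa using h6
      · simpa [Θ, hi] using hxz i (not_lt.1 hi)
    have h4 := hgu _ h2 (by rw [hΘ]; exact h3)
    rw [hΘ] at h4
    rw [h4]
    exact ⟨(hψφ _ h1).symm, hzV⟩
  refine ⟨W, hWo, hxW, ?_⟩
  have hcomp : ContDiffOn ℝ (⊤ : ℕ∞) (fun y => ψ (g (0, y)).1) W := by
    refine hψ.comp (t := V) ?_ (fun y hy => (hkey y hy).2)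
    refine ContDiff.comp_contDiffOn contDiff_fst ?_
    refine hg.comp (contDiff_const.prodMk contDiff_id).contDiffOn (fun y hy => (hW y hy).2.2)
  exact hcomp.congr (fun y hy => (hkey y hy).1)

lemma aux_retract {ν : ℕ} {N : Set (EuclideanSpace ℝ (Fin ν))} (hc : IsCompact N)
    (hne : N.Nonempty) (hNsub : IsSmoothSubmanifold N) :
    ∃ (W : Set (EuclideanSpace ℝ (Fin ν)))
      (ρ : EuclideanSpace ℝ (Fin ν) → EuclideanSpace ℝ (Fin ν)),
      IsOpen W ∧ N ⊆ W ∧ ContDiffOn ℝ (⊤ : ℕ∞) ρ W ∧ (∀ y, ρ y ∈ N) ∧ (∀ x ∈ N, ρ x = x) ∧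
      (∀ y, ∀ q ∈ N, dist (ρ y) y ≤ dist q y) := by
  have h : ∀ y, ∃ q ∈ N, ∀ q' ∈ N, dist q y ≤ dist q' y := by
    intro y
    obtain ⟨q, hq, hq'⟩ := hc.exists_isMinOn hne
      (f := fun q => dist q y) (continuous_id.dist continuous_const).continuousOn
    exact ⟨q, hq, fun q' h => hq' h⟩
  choose π hπN hπ using h
  have hid : ∀ x ∈ N, π x = x := by
    intro x hx
    have := hπ x x hx
    rw [dist_self] at this
    exact dist_le_zero.1 this
  choose! Wf hWo hWx hWs using fun x hx => aux_nearest_local hNsub π hπN hπ x hx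
  refine ⟨⋃ x ∈ N, Wf x, π, isOpen_biUnion hWo, ?_, ?_, hπN, hid, hπ⟩
  · intro x hx
    exact mem_biUnion hx (hWx x hx)
  · intro y hy
    simp only [mem_iUnion] at hy
    obtain ⟨x, hx, hyx⟩ := hy
    exact ((hWs x hx).contDiffAt ((hWo x hx).mem_nhds hyx)).contDiffWithinAt

/-- Admissible cube maps: continuous on the cube `[-1,1]^l`, with values in `N`, equal to `b`
on the boundary. -/
structure Adm {ν l : ℕ} (N : Set (EuclideanSpace ℝ (Fin ν))) (b : EuclideanSpace ℝ (Fin ν))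
    (g : (Fin l → ℝ) → EuclideanSpace ℝ (Fin ν)) : Prop where
  cont : ContinuousOn g (closedBall 0 1)
  maps : MapsTo g (closedBall 0 1) N
  bdry : ∀ x, ‖x‖ = 1 → g x = b

/-- affine identification of `[0,1]^l` with `[-1,1]^l` -/
def cubeMap {l : ℕ} (q : Fin l → unitInterval) : Fin l → ℝ := fun i => 2 * (q i : ℝ) - 1

lemma continuous_cubeMap {l : ℕ} : Continuous (cubeMap (l := l)) := by
  unfold cubeMap
  fun_prop

lemma cubeMap_mem {l : ℕ} (q : Fin l → unitInterval) :
    cubeMap q ∈ closedBall (0 : Fin l → ℝ) 1 := by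
  rw [mem_closedBall_zero_iff, pi_norm_le_iff_of_nonneg zero_le_one]
  intro i
  have h1 := (q i).2.1
  have h2 := (q i).2.2
  rw [Real.norm_eq_abs, abs_le]
  constructor <;> simp only [cubeMap] <;> linarith

lemma cubeMap_bdry {l : ℕ} (q : Fin l → unitInterval) (hq : q ∈ Cube.boundary (Fin l)) :
    ‖cubeMap q‖ = 1 := by
  apply le_antisymm (mem_closedBall_zero_iff.1 (cubeMap_mem q))
  obtain ⟨i, hi⟩ := hq
  have h := norm_le_pi_norm (cubeMap q) i
  refine le_trans ?_ h
  rcases hi with hi | hi <;> simp [cubeMap, hi]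
  norm_num

/-- The generalized loop of an admissible map. -/
def toGL {ν l : ℕ} {N : Set (EuclideanSpace ℝ (Fin ν))} {b : EuclideanSpace ℝ (Fin ν)} (hb : b ∈ N)
    (g : (Fin l → ℝ) → EuclideanSpace ℝ (Fin ν)) (h : Adm N b g) :
    GenLoop (Fin l) ↥N ⟨b, hb⟩ :=
  ⟨⟨fun q => ⟨g (cubeMap q), h.maps (cubeMap_mem q)⟩,
    Continuous.subtype_mk (h.cont.comp_continuous continuous_cubeMap cubeMap_mem) _⟩,
    fun q hq => Subtype.ext (h.bdry _ (cubeMap_bdry q hq))⟩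

/-- The homotopy class of an admissible map. -/
def cls {ν l : ℕ} {N : Set (EuclideanSpace ℝ (Fin ν))} {b : EuclideanSpace ℝ (Fin ν)} (hb : b ∈ N)
    (g : (Fin l → ℝ) → EuclideanSpace ℝ (Fin ν)) (h : Adm N b g) :
    HomotopyGroup (Fin l) ↥N ⟨b, hb⟩ :=
  Quotient.mk (GenLoop.Homotopic.setoid (Fin l) (⟨b, hb⟩ : ↥N)) (toGL hb g h)

lemma cls_eq {ν l : ℕ} {N : Set (EuclideanSpace ℝ (Fin ν))} {b : EuclideanSpace ℝ (Fin ν)}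
    (hb : b ∈ N) {g0 g1 : (Fin l → ℝ) → EuclideanSpace ℝ (Fin ν)} (h0 : Adm N b g0)
    (h1 : Adm N b g1) (H : ℝ × (Fin l → ℝ) → EuclideanSpace ℝ (Fin ν))
    (hH : ContinuousOn H (Icc 0 1 ×ˢ closedBall 0 1))
    (hHN : MapsTo H (Icc 0 1 ×ˢ closedBall 0 1) N)
    (hHb : ∀ s ∈ Icc (0 : ℝ) 1, ∀ x, ‖x‖ = 1 → H (s, x) = b)
    (hH0 : ∀ x ∈ closedBall (0 : Fin l → ℝ) 1, H (0, x) = g0 x)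
    (hH1 : ∀ x ∈ closedBall (0 : Fin l → ℝ) 1, H (1, x) = g1 x) :
    cls hb g0 h0 = cls hb g1 h1 := by
  apply Quotient.sound
  have hmem : ∀ q : unitInterval × (Fin l → unitInterval),
      ((q.1 : ℝ), cubeMap q.2) ∈ Icc (0 : ℝ) 1 ×ˢ closedBall (0 : Fin l → ℝ) 1 :=
    fun q => ⟨q.1.2, cubeMap_mem q.2⟩
  refine ⟨⟨⟨⟨fun q => ⟨H ((q.1 : ℝ), cubeMap q.2), hHN (hmem q)⟩, ?_⟩, ?_, ?_⟩, ?_⟩⟩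
  · apply Continuous.subtype_mk
    refine hH.comp_continuous ?_ hmem
    exact (continuous_subtype_val.comp continuous_fst).prodMk (continuous_cubeMap.comp continuous_snd)
  · intro q
    exact Subtype.ext (hH0 _ (cubeMap_mem q))
  · intro q
    exact Subtype.ext (hH1 _ (cubeMap_mem q))
  · intro t q hq
    apply Subtype.ext
    change H ((t : ℝ), cubeMap q) = g0 (cubeMap q)
    rw [hHb t t.2 _ (cubeMap_bdry q hq), h0.bdry _ (cubeMap_bdry q hq)]

lemma exists_coord_of_norm {l : ℕ} {x : Fin l → ℝ} (hx : 1 ≤ ‖x‖) : ∃ i, 1 ≤ |x i| := by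
  by_contra! h
  have := (pi_norm_lt_iff (x := x) (zero_lt_one)).2 (fun i => by simpa using h i)
  linarith

lemma cls_surj {ν l : ℕ} {N : Set (EuclideanSpace ℝ (Fin ν))} {b : EuclideanSpace ℝ (Fin ν)}
    (hb : b ∈ N) (γ : HomotopyGroup (Fin l) ↥N ⟨b, hb⟩) :
    ∃ (g : (Fin l → ℝ) → EuclideanSpace ℝ (Fin ν)) (h : Adm N b g), Continuous g ∧
      (∀ x, g x ∈ N) ∧ (∀ x, 1 ≤ ‖x‖ → g x = b) ∧ cls hb g h = γ := by
  induction γ using Quotient.inductionOn with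
  | h f =>
  let cl : (Fin l → ℝ) → (Fin l → unitInterval) := fun x i =>
    projIcc 0 1 zero_le_one ((x i + 1) / 2)
  have hcl : Continuous cl := by
    refine continuous_pi fun i => continuous_projIcc.comp ?_
    fun_prop
  have hbd : ∀ x : Fin l → ℝ, 1 ≤ ‖x‖ → cl x ∈ Cube.boundary (Fin l) := by
    intro x hx
    obtain ⟨i, hi⟩ := exists_coord_of_norm hx
    refine ⟨i, ?_⟩
    rcases le_abs.1 hi with h | h
    · right; exact projIcc_of_right_le _ (by linarith)
    · left; exact projIcc_of_le_left _ (by linarith)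
  let g : (Fin l → ℝ) → EuclideanSpace ℝ (Fin ν) := fun x => (f (cl x) : ↥N)
  have hgc : Continuous g := continuous_subtype_val.comp (f.1.continuous.comp hcl)
  have hgN : ∀ x, g x ∈ N := fun x => (f (cl x)).2
  have hgb : ∀ x, 1 ≤ ‖x‖ → g x = b := by
    intro x hx
    have := f.2 (cl x) (hbd x hx)
    exact congrArg Subtype.val this
  refine ⟨g, ⟨hgc.continuousOn, fun x _ => hgN x, fun x hx => hgb x hx.ge⟩, hgc, hgN, hgb, ?_⟩
  unfold cls
  congr 1
  apply GenLoop.ext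
  intro q
  apply Subtype.ext
  change ((f (cl (cubeMap q)) : ↥N) : EuclideanSpace ℝ (Fin ν)) = f q
  congr 2
  funext i
  have : (cubeMap q i + 1) / 2 = (q i : ℝ) := by simp [cubeMap]
  change projIcc 0 1 _ ((cubeMap q i + 1) / 2) = q i
  rw [this]
  exact projIcc_val _ (q i)

/-- Data about the target: a smooth nearest point retraction near `N`, and a smooth self map `Φ`
of `N`, close to the identity, collapsing a neighbourhood of `b` to `b`. -/
structure TPkg {ν : ℕ} (N : Set (EuclideanSpace ℝ (Fin ν))) (b : EuclideanSpace ℝ (Fin ν)) where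
  W : Set (EuclideanSpace ℝ (Fin ν))
  ρ : EuclideanSpace ℝ (Fin ν) → EuclideanSpace ℝ (Fin ν)
  O : Set (EuclideanSpace ℝ (Fin ν))
  Φ : EuclideanSpace ℝ (Fin ν) → EuclideanSpace ℝ (Fin ν)
  ε0 : ℝ
  ε1 : ℝ
  L : ℝ
  ε0_pos : 0 < ε0
  ε1_pos : 0 < ε1
  L_pos : 0 < L
  hb : b ∈ N
  hW : IsOpen W
  hρ : ContDiffOn ℝ (⊤ : ℕ∞) ρ W
  hρN : ∀ y, ρ y ∈ N
  hρid : ∀ x ∈ N, ρ x = x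
  hρd : ∀ y, ∀ q ∈ N, dist (ρ y) y ≤ dist q y
  hthick : ∀ y, ∀ q ∈ N, dist y q ≤ ε0 → y ∈ W
  hρL : ∀ y, ∀ q ∈ N, dist y q ≤ ε0 → ‖fderiv ℝ ρ y‖ ≤ L
  hO : IsOpen O
  hNO : N ⊆ O
  hΦ : ContDiffOn ℝ (⊤ : ℕ∞) Φ O
  hΦN : ∀ y, Φ y ∈ N
  hΦb : ∀ y, dist y b < ε1 → Φ y = b
  hΦd : ∀ y ∈ N, dist (Φ y) y < ε0
  hΦL : ∀ y ∈ N, ‖fderiv ℝ Φ y‖ ≤ L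

lemma exists_TPkg {ν : ℕ} {N : Set (EuclideanSpace ℝ (Fin ν))} (hc : IsCompact N)
    (hNsub : IsSmoothSubmanifold N) {b : EuclideanSpace ℝ (Fin ν)} (hb : b ∈ N) :
    Nonempty (TPkg N b) := by
  obtain ⟨W, ρ, hW, hNW, hρ, hρN, hρid, hρd⟩ := aux_retract hc ⟨b, hb⟩ hNsub
  obtain ⟨ε, hε, hεW⟩ := hc.exists_cthickening_subset_open hW hNW
  have hth : ∀ y, ∀ q ∈ N, dist y q ≤ ε → y ∈ cthickening ε N := fun y q hq h =>
    mem_cthickening_of_dist_le y q ε N hq h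
  have hK : IsCompact (cthickening ε N) := hc.cthickening
  obtain ⟨L1, hL1⟩ := hK.exists_bound_of_continuousOn
    ((hρ.continuousOn_fderiv_of_isOpen hW (by simp)).mono hεW)
  let β : ContDiffBump (0 : EuclideanSpace ℝ (Fin ν)) := ⟨ε / 8, ε / 4, by linarith, by linarith⟩
  let χ : EuclideanSpace ℝ (Fin ν) → EuclideanSpace ℝ (Fin ν) := fun v =>
    v - β (v - b) • (v - b)
  have hβs : ContDiff ℝ (⊤ : ℕ∞) (fun v : EuclideanSpace ℝ (Fin ν) => β (v - b)) :=
    β.contDiff.comp (contDiff_id.sub contDiff_const)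
  have hχ : ContDiff ℝ (⊤ : ℕ∞) χ :=
    contDiff_id.sub (hβs.smul (contDiff_id.sub contDiff_const))
  have hχd : ∀ v, dist (χ v) v ≤ ε / 4 := by
    intro v
    rw [dist_eq_norm]
    have : χ v - v = - (β (v - b) • (v - b)) := by simp [χ]
    rw [this, norm_neg, norm_smul, Real.norm_of_nonneg β.nonneg]
    by_cases h : ‖v - b‖ ≤ ε / 4
    · calc β (v - b) * ‖v - b‖ ≤ 1 * (ε / 4) := by
            gcongr
            exact β.le_one
        _ = ε / 4 := one_mul _
    · have : β (v - b) = 0 := by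
        apply β.zero_of_le_dist
        rw [dist_zero_right]; exact (not_le.1 h).le
      rw [this, zero_mul]; positivity
  have hχb : ∀ v, dist v b < ε / 8 → χ v = b := by
    intro v hv
    have : β (v - b) = 1 := by
      apply β.one_of_mem_closedBall
      rw [mem_closedBall_zero_iff, ← dist_eq_norm]; exact hv.le
    simp [χ, this]
  have hO : IsOpen (χ ⁻¹' W) := hW.preimage hχ.continuous
  have hNO : N ⊆ χ ⁻¹' W := fun v hv => hεW (hth _ v hv ((hχd v).trans (by linarith)))
  have hΦ : ContDiffOn ℝ (⊤ : ℕ∞) (fun v => ρ (χ v)) (χ ⁻¹' W) :=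
    hρ.comp hχ.contDiffOn (fun v hv => hv)
  obtain ⟨L2, hL2⟩ := hc.exists_bound_of_continuousOn
    ((hΦ.continuousOn_fderiv_of_isOpen hO (by simp)).mono hNO)
  refine ⟨{ W := W, ρ := ρ, O := χ ⁻¹' W, Φ := fun v => ρ (χ v), ε0 := ε, ε1 := ε / 8,
            L := max 1 (max L1 L2), ε0_pos := hε, ε1_pos := by positivity, L_pos := by positivity,
            hb := hb, hW := hW, hρ := hρ, hρN := hρN, hρid := hρid, hρd := hρd,
            hthick := fun y q hq h => hεW (hth y q hq h), hρL := ?_, hO := hO, hNO := hNO,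
            hΦ := hΦ, hΦN := fun y => hρN _, hΦb := ?_, hΦd := ?_, hΦL := ?_ }⟩
  · intro y q hq h
    exact (hL1 y (hth y q hq h)).trans (by simp)
  · intro y hy
    simp only [hχb y hy, hρid b hb]
  · intro y hy
    have h1 := hρd (χ y) y hy
    have h2 := dist_triangle (ρ (χ y)) (χ y) y
    have h3 := hχd y
    rw [dist_comm y (χ y)] at h1
    change dist (ρ (χ y)) y < ε
    linarith
  · intro y hy
    exact (hL2 y hy).trans (by simp)

/-- Close admissible maps have the same class. -/
lemma TPkg.cls_close {ν l : ℕ} {N : Set (EuclideanSpace ℝ (Fin ν))} {b : EuclideanSpace ℝ (Fin ν)}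
    (P : TPkg N b) {g0 g1 : (Fin l → ℝ) → EuclideanSpace ℝ (Fin ν)} (h0 : Adm N b g0)
    (h1 : Adm N b g1) (h : ∀ x ∈ closedBall (0 : Fin l → ℝ) 1, dist (g0 x) (g1 x) ≤ P.ε0) :
    cls P.hb g0 h0 = cls P.hb g1 h1 := by
  have hmem : ∀ q ∈ Icc (0 : ℝ) 1 ×ˢ closedBall (0 : Fin l → ℝ) 1,
      (g0 q.2 + q.1 • (g1 q.2 - g0 q.2)) ∈ P.W := by
    intro q hq
    refine P.hthick _ (g0 q.2) (h0.maps hq.2) ?_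
    rw [dist_eq_norm, add_sub_cancel_left, norm_smul, Real.norm_of_nonneg hq.1.1, ← dist_eq_norm,
      dist_comm]
    calc q.1 * dist (g0 q.2) (g1 q.2) ≤ 1 * P.ε0 := by
          gcongr
          · exact hq.1.2
          · exact h _ hq.2
      _ = P.ε0 := one_mul _
  refine cls_eq P.hb h0 h1 (fun q => P.ρ (g0 q.2 + q.1 • (g1 q.2 - g0 q.2))) ?_ ?_ ?_ ?_ ?_
  · refine P.hρ.continuousOn.comp ?_ hmem
    have e0 : ContinuousOn (fun q : ℝ × (Fin l → ℝ) => g0 q.2) (Icc 0 1 ×ˢ closedBall 0 1) :=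
      h0.cont.comp continuousOn_snd (fun q hq => hq.2)
    have e1 : ContinuousOn (fun q : ℝ × (Fin l → ℝ) => g1 q.2) (Icc 0 1 ×ˢ closedBall 0 1) :=
      h1.cont.comp continuousOn_snd (fun q hq => hq.2)
    exact e0.add (continuousOn_fst.smul (e1.sub e0))
  · intro q hq; exact P.hρN _
  · intro s hs x hx
    simp [h0.bdry x hx, h1.bdry x hx, P.hρid b P.hb]
  · intro x hx
    simp [P.hρid _ (h0.maps hx)]
  · intro x hx
    simp [P.hρid _ (h1.maps hx)]

/-- Globally defined maps, `N`-valued and equal to `b` outside the open unit cube. -/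
structure GAdm {ν l : ℕ} (N : Set (EuclideanSpace ℝ (Fin ν))) (b : EuclideanSpace ℝ (Fin ν))
    (g : (Fin l → ℝ) → EuclideanSpace ℝ (Fin ν)) : Prop where
  cont : Continuous g
  maps : ∀ x, g x ∈ N
  bdry : ∀ x, 1 ≤ ‖x‖ → g x = b

lemma GAdm.adm {ν l : ℕ} {N : Set (EuclideanSpace ℝ (Fin ν))} {b : EuclideanSpace ℝ (Fin ν)}
    {g : (Fin l → ℝ) → EuclideanSpace ℝ (Fin ν)} (h : GAdm N b g) : Adm N b g :=
  ⟨h.cont.continuousOn, fun x _ => h.maps x, fun x hx => h.bdry x hx.ge⟩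

/-- The `p`-energy. -/
def energy {ν l : ℕ} (p : ℝ) (g : (Fin l → ℝ) → EuclideanSpace ℝ (Fin ν)) : ℝ≥0∞ :=
  ∫⁻ x, ‖fderiv ℝ g x‖ₑ ^ p

lemma exists_mollify {ν l : ℕ} {b : EuclideanSpace ℝ (Fin ν)}
    {g : (Fin l → ℝ) → EuclideanSpace ℝ (Fin ν)} (hg : Continuous g)
    {K : Set (Fin l → ℝ)} (hK : IsCompact K) (hK1 : K ⊆ ball 0 1) (hgK : ∀ x, x ∉ K → g x = b)
    {ε : ℝ} (hε : 0 < ε) :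
    ∃ f : (Fin l → ℝ) → EuclideanSpace ℝ (Fin ν), ContDiff ℝ (⊤ : ℕ∞) f ∧
      (∀ x, dist (f x) (g x) ≤ ε) ∧ (∀ x, 1 ≤ ‖x‖ → f x = b) ∧
      (ContDiff ℝ 1 g → ∀ x, ‖fderiv ℝ f x‖ ≤ ‖fderiv ℝ g x‖ + 1) := by
  set w : (Fin l → ℝ) → EuclideanSpace ℝ (Fin ν) := fun x => g x - b with hw
  have hwc : Continuous w := by fun_prop
  have hws : HasCompactSupport w := HasCompactSupport.intro hK (fun x hx => by simp [hw, hgK x hx])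
  obtain ⟨δ1, hδ1, hδ1K⟩ := hK.exists_cthickening_subset_open isOpen_ball hK1
  obtain ⟨δ2, hδ2, hu⟩ := Metric.uniformContinuous_iff.1
    (hws.uniformContinuous_of_continuous hwc) ε hε
  have h3 : ∃ δ3 > 0, ContDiff ℝ 1 g → ∀ x y, dist x y < δ3 →
      dist (fderiv ℝ w x) (fderiv ℝ w y) < 1 := by
    by_cases h : ContDiff ℝ 1 g
    · have hw1 : ContDiff ℝ 1 w := h.sub contDiff_const
      obtain ⟨δ3, hδ3, h3⟩ := Metric.uniformContinuous_iff.1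
        ((hws.fderiv ℝ).uniformContinuous_of_continuous (hw1.continuous_fderiv (by simp))) 1 one_pos
      exact ⟨δ3, hδ3, fun _ x y hxy => h3 hxy⟩
    · exact ⟨1, one_pos, fun h' => absurd h' h⟩
  obtain ⟨δ3, hδ3, h3⟩ := h3
  set r := min δ1 (min δ2 δ3) with hr
  have hr0 : 0 < r := by positivity
  let φ : ContDiffBump (0 : Fin l → ℝ) := ⟨r / 2, r, by positivity, by linarith⟩
  set c := MeasureTheory.convolution (φ.normed volume) w (ContinuousLinearMap.lsmul ℝ ℝ) volume
    with hc
  have hcs : ContDiff ℝ (⊤ : ℕ∞) c := φ.hasCompactSupport_normed.contDiff_convolution_left _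
    φ.contDiff_normed hwc.locallyIntegrable
  have hball : ∀ x y : Fin l → ℝ, y ∈ ball x φ.rOut → dist y x < δ1 ∧ dist y x < δ2 ∧ dist y x < δ3 := by
    intro x y hy
    have : dist y x < r := hy
    rw [hr] at this
    simpa [lt_min_iff] using this
  refine ⟨fun x => b + c x, contDiff_const.add hcs, ?_, ?_, ?_⟩
  · intro x
    have h := φ.dist_normed_convolution_le (μ := volume) (g := w) (x₀ := x) (ε := ε)
      hwc.aestronglyMeasurable
      (fun y hy => (hu (hball x y hy).2.1).le)
    have : dist (b + c x) (g x) = dist (c x) (w x) := by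
      rw [dist_eq_norm, dist_eq_norm, hw]; congr 1; simp only []; abel
    rw [this]; exact h
  · intro x hx
    have hz : ∀ y ∈ ball x φ.rOut, w y = 0 := by
      intro y hy
      by_contra hne
      have hyK : y ∈ K := by
        by_contra h
        exact hne (by simp [hw, hgK y h])
      have := hδ1K (mem_cthickening_of_dist_le x y δ1 K hyK
        (by rw [dist_comm]; exact (hball x y hy).1.le))
      rw [mem_ball_zero_iff] at this
      linarith
    have hzx := hz x (mem_ball_self φ.rOut_pos)
    have h := φ.dist_normed_convolution_le (μ := volume) (g := w) (x₀ := x) (ε := 0)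
      hwc.aestronglyMeasurable (fun y hy => by rw [hz y hy, hzx]; simp)
    have h2 : c x = w x := dist_le_zero.1 h
    simp [h2, hzx]
  · intro h x
    have hw1 : ContDiff ℝ 1 w := h.sub contDiff_const
    have hd := hws.hasFDerivAt_convolution_right (ContinuousLinearMap.lsmul ℝ ℝ)
      (f := φ.normed volume) (μ := volume) φ.integrable_normed.locallyIntegrable hw1 x
    have hL : (ContinuousLinearMap.precompR (Fin l → ℝ) (ContinuousLinearMap.lsmul ℝ ℝ :
        ℝ →L[ℝ] EuclideanSpace ℝ (Fin ν) →L[ℝ] EuclideanSpace ℝ (Fin ν)))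
        = ContinuousLinearMap.lsmul ℝ ℝ := by
      ext; simp
    rw [hL] at hd
    have hdc := (hw1.continuous_fderiv (by simp))
    have hb := φ.dist_normed_convolution_le (μ := volume) (g := fderiv ℝ w) (x₀ := x) (ε := 1)
      hdc.aestronglyMeasurable (fun y hy => (h3 h _ _ (hball x y hy).2.2).le)
    have e1 : fderiv ℝ (fun x => b + c x) x = _ := (hd.const_add b).fderiv
    have e2 : fderiv ℝ w x = fderiv ℝ g x := by
      rw [hw, fderiv_sub_const]
    rw [e1, ← e2]
    rw [dist_eq_norm] at hb
    have := norm_le_norm_add_norm_sub' ((MeasureTheory.convolution (φ.normed volume) (fderiv ℝ w)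
      (ContinuousLinearMap.lsmul ℝ ℝ) volume) x) (fderiv ℝ w x)
    linarith

lemma exists_smoothing {ν l : ℕ} {N : Set (EuclideanSpace ℝ (Fin ν))}
    {b : EuclideanSpace ℝ (Fin ν)} (hc : IsCompact N) (P : TPkg N b) {p : ℝ} (hp : 1 ≤ p) :
    ∃ C : ℝ≥0∞, C ≠ ⊤ ∧ ∀ (g : (Fin l → ℝ) → EuclideanSpace ℝ (Fin ν)) (hg : GAdm N b g),
      ∃ (f : (Fin l → ℝ) → EuclideanSpace ℝ (Fin ν)) (hf : GAdm N b f),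
        ContDiff ℝ (⊤ : ℕ∞) f ∧ cls P.hb f hf.adm = cls P.hb g hg.adm ∧
        (ContDiff ℝ 1 g → energy p f ≤ C * (energy p g + 1)) := by
  have hL := P.L_pos
  set C0 : ℝ≥0∞ := ENNReal.ofReal P.L ^ p * (2 ^ (p - 1)) with hC0
  set V : ℝ≥0∞ := volume (closedBall (0 : Fin l → ℝ) 1) with hV
  have hVt : V ≠ ⊤ := measure_closedBall_lt_top.ne
  have hpp : 0 ≤ p := by linarith
  refine ⟨C0 * (ENNReal.ofReal P.L ^ p + V), ?_, ?_⟩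
  · have h1 : ENNReal.ofReal P.L ^ p ≠ ⊤ := ENNReal.rpow_ne_top_of_nonneg hpp ENNReal.ofReal_ne_top
    have h2 : (2 : ℝ≥0∞) ^ (p - 1) ≠ ⊤ :=
      ENNReal.rpow_ne_top_of_nonneg (by linarith) (by simp)
    exact ENNReal.mul_ne_top (ENNReal.mul_ne_top h1 h2) (ENNReal.add_ne_top.2 ⟨h1, hVt⟩)
  intro g hg
  have hgO : ∀ x, g x ∈ P.O := fun x => P.hNO (hg.maps x)
  set g1 : (Fin l → ℝ) → EuclideanSpace ℝ (Fin ν) := fun x => P.Φ (g x) with hg1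
  have hΦb : P.Φ b = b := P.hΦb b (by simpa using P.ε1_pos)
  have hg1c : Continuous g1 := P.hΦ.continuousOn.comp_continuous hg.cont hgO
  have hg1A : GAdm N b g1 := ⟨hg1c, fun x => P.hΦN _, fun x hx => by
    simp only [hg1, hg.bdry x hx, hΦb]⟩
  set K : Set (Fin l → ℝ) := {x | P.ε1 ≤ dist (g x) b} with hKdef
  have hK1 : K ⊆ ball 0 1 := by
    intro x hx
    rw [mem_ball_zero_iff]
    by_contra h
    have := hg.bdry x (not_lt.1 h)
    have h2 : P.ε1 ≤ dist (g x) b := hx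
    rw [this, dist_self] at h2
    exact absurd P.ε1_pos (not_lt.2 h2)
  have hKc : IsCompact K := by
    refine Metric.isCompact_of_isClosed_isBounded ?_ (isBounded_ball.subset hK1)
    exact isClosed_le continuous_const (hg.cont.dist continuous_const)
  obtain ⟨g2, hg2s, hg2d, hg2b, hg2D⟩ := exists_mollify (b := b) hg1c hKc hK1
    (fun x hx => P.hΦb _ (not_le.1 hx)) (ε := P.ε0 / 2) (half_pos P.ε0_pos)
  have hε0 := P.ε0_pos
  have hg2W : ∀ x, g2 x ∈ P.W := fun x =>
    P.hthick _ (g1 x) (hg1A.maps x) ((hg2d x).trans (by linarith))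
  set f : (Fin l → ℝ) → EuclideanSpace ℝ (Fin ν) := fun x => P.ρ (g2 x) with hf
  have hfs : ContDiff ℝ (⊤ : ℕ∞) f := by
    rw [← contDiffOn_univ]
    exact P.hρ.comp hg2s.contDiffOn (fun x _ => hg2W x)
  have hfA : GAdm N b f := ⟨hfs.continuous, fun x => P.hρN _, fun x hx => by
    simp only [hf, hg2b x hx, P.hρid b P.hb]⟩
  refine ⟨f, hfA, hfs, ?_, ?_⟩
  · rw [P.cls_close hfA.adm hg1A.adm, P.cls_close hg1A.adm hg.adm]
    · intro x _
      exact (P.hΦd _ (hg.maps x)).le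
    · intro x _
      have h1 := P.hρd (g2 x) (g1 x) (hg1A.maps x)
      have h2 := dist_triangle (f x) (g2 x) (g1 x)
      have h3 := hg2d x
      rw [dist_comm (g1 x)] at h1
      simp only [hf] at h2 ⊢
      linarith
  intro hgC
  have hg1C : ContDiff ℝ 1 g1 := by
    rw [← contDiffOn_univ]
    exact (P.hΦ.of_le (by exact_mod_cast le_top)).comp hgC.contDiffOn (fun x _ => hgO x)
  have hDg1 : ∀ x, ‖fderiv ℝ g1 x‖ ≤ P.L * ‖fderiv ℝ g x‖ := by
    intro x
    have hd1 : DifferentiableAt ℝ P.Φ (g x) :=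
      (P.hΦ.contDiffAt (P.hO.mem_nhds (hgO x))).differentiableAt (by simp)
    have : fderiv ℝ g1 x = (fderiv ℝ P.Φ (g x)).comp (fderiv ℝ g x) :=
      fderiv_comp x hd1 (hgC.differentiable (by simp) x)
    rw [this]
    exact (ContinuousLinearMap.opNorm_comp_le _ _).trans (by
      gcongr; exact P.hΦL _ (hg.maps x))
  have hDf : ∀ x, ‖fderiv ℝ f x‖ ≤ P.L * (P.L * ‖fderiv ℝ g x‖ + 1) := by
    intro x
    have hd1 : DifferentiableAt ℝ P.ρ (g2 x) :=
      (P.hρ.contDiffAt (P.hW.mem_nhds (hg2W x))).differentiableAt (by simp)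
    have : fderiv ℝ f x = (fderiv ℝ P.ρ (g2 x)).comp (fderiv ℝ g2 x) :=
      fderiv_comp x hd1 (hg2s.differentiable (by simp) x)
    rw [this]
    refine (ContinuousLinearMap.opNorm_comp_le _ _).trans ?_
    gcongr
    · exact P.hρL _ (g1 x) (hg1A.maps x) ((hg2d x).trans (by linarith))
    · exact (hg2D hg1C x).trans (by linarith [hDg1 x])
  have hD0 : ∀ x, x ∉ closedBall (0 : Fin l → ℝ) 1 → fderiv ℝ f x = 0 := by
    intro x hx
    have : f =ᶠ[𝓝 x] fun _ => b := by
      filter_upwards [isClosed_closedBall.isOpen_compl.mem_nhds hx] with y hy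
      apply hfA.bdry
      rw [mem_compl_iff, mem_closedBall_zero_iff, not_le] at hy
      exact hy.le
    rw [this.fderiv_eq]; simp
  calc energy p f = ∫⁻ x in closedBall 0 1, ‖fderiv ℝ f x‖ₑ ^ p := by
        rw [energy, ← lintegral_indicator measurableSet_closedBall]
        congr 1
        ext x
        by_cases hx : x ∈ closedBall (0 : Fin l → ℝ) 1
        · rw [indicator_of_mem hx]
        · have h0 : ‖fderiv ℝ f x‖ₑ = 0 := by rw [← ofReal_norm, hD0 x hx]; simp
          rw [indicator_of_notMem hx, h0]
          exact ENNReal.zero_rpow_of_pos (by linarith)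
    _ ≤ ∫⁻ x in closedBall 0 1, C0 * (ENNReal.ofReal P.L ^ p * ‖fderiv ℝ g x‖ₑ ^ p + 1) := by
        refine lintegral_mono fun x => ?_
        have h1 : ‖fderiv ℝ f x‖ₑ ≤ ENNReal.ofReal P.L *
            (ENNReal.ofReal P.L * ‖fderiv ℝ g x‖ₑ + 1) := by
          rw [← ofReal_norm, ← ofReal_norm]
          refine (ENNReal.ofReal_le_ofReal (hDf x)).trans (le_of_eq ?_)
          rw [ENNReal.ofReal_mul hL.le, ENNReal.ofReal_add (by positivity) zero_le_one,
            ENNReal.ofReal_mul hL.le, ENNReal.ofReal_one]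
        calc ‖fderiv ℝ f x‖ₑ ^ p ≤ (ENNReal.ofReal P.L *
            (ENNReal.ofReal P.L * ‖fderiv ℝ g x‖ₑ + 1)) ^ p := by gcongr
          _ = ENNReal.ofReal P.L ^ p * (ENNReal.ofReal P.L * ‖fderiv ℝ g x‖ₑ + 1) ^ p :=
            ENNReal.mul_rpow_of_nonneg _ _ hpp
          _ ≤ ENNReal.ofReal P.L ^ p * (2 ^ (p - 1) *
              ((ENNReal.ofReal P.L * ‖fderiv ℝ g x‖ₑ) ^ p + 1 ^ p)) := by
            gcongr
            exact ENNReal.rpow_add_le_mul_rpow_add_rpow _ _ hp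
          _ = _ := by
            rw [ENNReal.mul_rpow_of_nonneg _ _ hpp, ENNReal.one_rpow, hC0]; ring
    _ = C0 * (ENNReal.ofReal P.L ^ p * (∫⁻ x in closedBall 0 1, ‖fderiv ℝ g x‖ₑ ^ p) + V) := by
        have hm : Measurable fun x => ‖fderiv ℝ g x‖ₑ ^ p :=
          ((measurable_fderiv ℝ g).enorm).pow_const p
        rw [lintegral_const_mul _ (by fun_prop), lintegral_add_right _ measurable_const,
          lintegral_const_mul _ hm]
        simp [hV]
    _ ≤ C0 * (ENNReal.ofReal P.L ^ p * energy p g + V) := by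
        gcongr
        exact setLIntegral_le_lintegral _ _
    _ ≤ C0 * (ENNReal.ofReal P.L ^ p * (energy p g + 1) + V * (energy p g + 1)) := by
        gcongr
        · exact le_self_add
        · exact le_mul_of_one_le_right (by positivity) le_add_self
    _ = _ := by ring

lemma enorm_sub_le_line {E F : Type*} [NormedAddCommGroup E] [NormedSpace ℝ E]
    [NormedAddCommGroup F] [NormedSpace ℝ F] [CompleteSpace F] {g : E → F} (hg : ContDiff ℝ 1 g)
    (x h : E) :
    ‖g (x + h) - g x‖ₑ ≤ ∫⁻ t in Ioc (0 : ℝ) 1, ‖fderiv ℝ g (x + t • h)‖ₑ * ‖h‖ₑ := by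
  have hd : ∀ t : ℝ, HasDerivAt (fun t : ℝ => g (x + t • h)) (fderiv ℝ g (x + t • h) h) t := by
    intro t
    have h1 : HasDerivAt (fun t : ℝ => x + t • h) h t := by
      simpa using ((hasDerivAt_id t).smul_const h).const_add x
    exact ((hg.differentiable (by simp) _).hasFDerivAt).comp_hasDerivAt t h1
  have hc : Continuous fun t : ℝ => fderiv ℝ g (x + t • h) h := by
    have := hg.continuous_fderiv (by simp)
    fun_prop
  have e := intervalIntegral.integral_eq_sub_of_hasDerivAt (a := 0) (b := 1)
    (fun t _ => hd t) (hc.intervalIntegrable _ _)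
  simp only [one_smul, zero_smul, add_zero] at e
  rw [← e, intervalIntegral.integral_of_le zero_le_one]
  refine (enorm_integral_le_lintegral_enorm _).trans ?_
  refine lintegral_mono fun t => ?_
  exact ContinuousLinearMap.le_opENorm _ _

lemma lintegral_smul_translate {E : Type*} [NormedAddCommGroup E] [NormedSpace ℝ E]
    [MeasurableSpace E] [BorelSpace E] [FiniteDimensional ℝ E] (μ : Measure E)
    [μ.IsAddHaarMeasure] {f : E → ℝ≥0∞} (hf : Measurable f) (a : E) {t : ℝ} (ht : 0 < t) :
    ∫⁻ y, f (a + t • y) ∂μ = ENNReal.ofReal (t ^ (-(Module.finrank ℝ E : ℝ))) * ∫⁻ y, f y ∂μ := by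
  have h1 : ∫⁻ y, f (a + t • y) ∂μ = ∫⁻ z, f (a + z) ∂(μ.map (t • ·)) := by
    rw [lintegral_map (by fun_prop) (by fun_prop)]
  rw [h1, Measure.map_addHaar_smul μ ht.ne', lintegral_smul_measure, lintegral_add_left_eq_self]
  rw [abs_of_pos (by positivity), Real.rpow_neg ht.le, Real.rpow_natCast, smul_eq_mul]

lemma lintegral_le_rpow {α : Type*} [MeasurableSpace α] (μ : Measure α) {p : ℝ} (hp : 1 < p)
    {F : α → ℝ≥0∞} (hF : AEMeasurable F μ) :
    ∫⁻ a, F a ∂μ ≤ (∫⁻ a, F a ^ p ∂μ) ^ (1 / p) * μ univ ^ (1 - 1 / p) := by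
  have hpq : p.HolderConjugate (Real.conjExponent p) := Real.HolderConjugate.conjExponent hp
  have h := ENNReal.lintegral_mul_le_Lp_mul_Lq μ hpq hF (g := fun _ => 1) aemeasurable_const
  have e : 1 / Real.conjExponent p = 1 - 1 / p := by
    have := hpq.inv_add_inv_eq_one
    rw [one_div, one_div]; linarith
  simpa [e] using h

lemma lintegral_rpow_le {α : Type*} [MeasurableSpace α] (μ : Measure α) {p : ℝ} (hp : 1 < p)
    (hμ : μ univ = 1) {F : α → ℝ≥0∞} (hF : AEMeasurable F μ) :
    (∫⁻ a, F a ∂μ) ^ p ≤ ∫⁻ a, F a ^ p ∂μ := by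
  have h := lintegral_le_rpow μ hp hF
  rw [hμ, ENNReal.one_rpow, mul_one] at h
  have hp0 : 0 < p := by linarith
  calc (∫⁻ a, F a ∂μ) ^ p ≤ ((∫⁻ a, F a ^ p ∂μ) ^ (1 / p)) ^ p := by gcongr
    _ = _ := by rw [← ENNReal.rpow_mul, one_div_mul_cancel hp0.ne', ENNReal.rpow_one]

lemma morrey {ν l : ℕ} {p : ℝ} (hp : 1 < p) (hlp : (l : ℝ) < p) :
    ∃ C : ℝ≥0∞, C ≠ ⊤ ∧ ∀ g : (Fin l → ℝ) → EuclideanSpace ℝ (Fin ν), ContDiff ℝ 1 g →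
      ∀ R : ℝ, 0 < R → ∀ x x', dist x' x ≤ R →
        ‖g x' - g x‖ₑ ≤ C * ENNReal.ofReal (R ^ (1 - l / p)) * energy p g ^ (1 / p) := by
  have hp0 : 0 < p := by linarith
  set J : ℝ≥0∞ := ∫⁻ t in Ioc (0 : ℝ) 1, ENNReal.ofReal (t ^ (-(l : ℝ) / p)) with hJ
  have hJt : J ≠ ⊤ := by
    have hi : IntervalIntegrable (fun t : ℝ => t ^ (-(l : ℝ) / p)) volume 0 1 := by
      apply intervalIntegral.intervalIntegrable_rpow'
      rw [lt_div_iff₀ hp0]; linarith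
    rw [intervalIntegrable_iff_integrableOn_Ioc_of_le zero_le_one] at hi
    have := hi.lintegral_lt_top
    exact this.ne
  refine ⟨2 * J * ENNReal.ofReal (2 ^ (1 - l / p)), ?_, ?_⟩
  · exact ENNReal.mul_ne_top (ENNReal.mul_ne_top (by simp) hJt) ENNReal.ofReal_ne_top
  intro g hg R hR x x' hx'
  set K := closedBall x R with hK
  have hvol : volume K = ENNReal.ofReal ((2 * R) ^ (l : ℝ)) := by
    rw [hK, Real.volume_pi_closedBall _ hR.le, Fintype.card_fin, Real.rpow_natCast]
  have hDc := hg.continuous_fderiv (by simp)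
  have key : ∀ z ∈ K, ∫⁻ y in K, ‖g y - g z‖ₑ ≤
      ENNReal.ofReal (2 * R) * (energy p g ^ (1 / p) * volume K ^ (1 - 1 / p) * J) := by
    intro z hz
    calc ∫⁻ y in K, ‖g y - g z‖ₑ
        ≤ ∫⁻ y in K, ∫⁻ t in Ioc (0 : ℝ) 1,
            ‖fderiv ℝ g (z + t • (y - z))‖ₑ * ENNReal.ofReal (2 * R) := by
          refine setLIntegral_mono' measurableSet_closedBall fun y hy => ?_
          have h := enorm_sub_le_line hg z (y - z)
          rw [add_sub_cancel] at h
          refine h.trans (lintegral_mono fun t => ?_)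
          gcongr
          rw [← ofReal_norm]
          apply ENNReal.ofReal_le_ofReal
          rw [← dist_eq_norm]
          have h1 : dist y x ≤ R := hy
          have h2 : dist z x ≤ R := hz
          have := dist_triangle_right y z x
          linarith
      _ = ∫⁻ t in Ioc (0 : ℝ) 1, ∫⁻ y in K,
            ‖fderiv ℝ g (z + t • (y - z))‖ₑ * ENNReal.ofReal (2 * R) := by
          rw [lintegral_lintegral_swap]
          apply Measurable.aemeasurable
          apply Measurable.mul_const
          apply Measurable.enorm
          apply Continuous.measurable
          fun_prop
      _ ≤ ∫⁻ t in Ioc (0 : ℝ) 1, (energy p g ^ (1 / p) * volume K ^ (1 - 1 / p)) *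
            ENNReal.ofReal (2 * R) * ENNReal.ofReal (t ^ (-(l : ℝ) / p)) := by
          refine setLIntegral_mono' measurableSet_Ioc fun t ht => ?_
          have hm : Measurable fun y => ‖fderiv ℝ g (z + t • (y - z))‖ₑ := by
            apply Measurable.enorm
            apply Continuous.measurable
            fun_prop
          rw [lintegral_mul_const _ hm]
          have h1 := lintegral_le_rpow (volume.restrict K) hp hm.aemeasurable
          rw [Measure.restrict_apply_univ] at h1
          have h2 : ∫⁻ y in K, ‖fderiv ℝ g (z + t • (y - z))‖ₑ ^ p
              ≤ ENNReal.ofReal (t ^ (-(l : ℝ))) * energy p g := by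
            refine (setLIntegral_le_lintegral _ _).trans (le_of_eq ?_)
            have h3 := lintegral_smul_translate (volume : Measure (Fin l → ℝ))
              (f := fun y => ‖fderiv ℝ g y‖ₑ ^ p)
              ((measurable_fderiv ℝ g).enorm.pow_const p) (z - t • z) ht.1
            rw [Module.finrank_fin_fun] at h3
            rw [energy, ← h3]
            refine lintegral_congr fun y => ?_
            have e : z + t • (y - z) = z - t • z + t • y := by rw [smul_sub]; abel
            rw [e]
          calc _ ≤ ((ENNReal.ofReal (t ^ (-(l : ℝ))) * energy p g) ^ (1 / p) *
                  volume K ^ (1 - 1 / p)) * ENNReal.ofReal (2 * R) := by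
                gcongr
                refine h1.trans ?_
                gcongr
            _ = _ := by
                rw [ENNReal.mul_rpow_of_nonneg _ _ (by positivity),
                  ENNReal.ofReal_rpow_of_nonneg (by have := ht.1; positivity) (by positivity),
                  ← Real.rpow_mul ht.1.le]
                rw [show -(l : ℝ) * (1 / p) = -(l : ℝ) / p by ring]
                ring
      _ = _ := by
          rw [lintegral_const_mul _ (by fun_prop), ← hJ]; ring
  have hxK : x ∈ K := mem_closedBall_self hR.le
  have hx'K : x' ∈ K := hx'
  have h1 : ‖g x' - g x‖ₑ * volume K ≤ 2 * (ENNReal.ofReal (2 * R) *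
      (energy p g ^ (1 / p) * volume K ^ (1 - 1 / p) * J)) := by
    calc ‖g x' - g x‖ₑ * volume K = ∫⁻ y in K, ‖g x' - g x‖ₑ := by simp
      _ ≤ ∫⁻ y in K, (‖g y - g x'‖ₑ + ‖g y - g x‖ₑ) := by
          refine lintegral_mono fun y => ?_
          have : g x' - g x = -(g y - g x') + (g y - g x) := by abel
          rw [this]
          refine (enorm_add_le _ _).trans ?_
          rw [enorm_neg]
      _ = (∫⁻ y in K, ‖g y - g x'‖ₑ) + ∫⁻ y in K, ‖g y - g x‖ₑ := by
          apply lintegral_add_right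
          have := hg.continuous
          apply Measurable.enorm
          apply Continuous.measurable
          fun_prop
      _ ≤ _ := by
          rw [two_mul]
          exact add_le_add (key x' hx'K) (key x hxK)
  have hV0 : volume K ≠ 0 := by rw [hvol]; simp; positivity
  have hVt : volume K ≠ ⊤ := by rw [hvol]; exact ENNReal.ofReal_ne_top
  rw [← ENNReal.mul_le_mul_iff_left hV0 hVt]
  refine h1.trans (le_of_eq ?_)
  have e : ENNReal.ofReal (2 * R) * volume K ^ (1 - 1 / p) =
      ENNReal.ofReal (2 ^ (1 - l / p)) * ENNReal.ofReal (R ^ (1 - l / p)) * volume K := by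
    rw [hvol, ENNReal.ofReal_rpow_of_pos (by positivity), ← ENNReal.ofReal_mul (by positivity),
      ← ENNReal.ofReal_mul (by positivity), ← ENNReal.ofReal_mul (by positivity),
      ← Real.mul_rpow (by positivity) (by positivity), ← Real.rpow_mul (by positivity),
      ← Real.rpow_add (by positivity)]
    congr 1
    nth_rewrite 1 [← Real.rpow_one (2 * R)]
    rw [← Real.rpow_add (by positivity)]
    congr 1
    field_simp
    ring
  calc _ = 2 * (ENNReal.ofReal (2 * R) * volume K ^ (1 - 1 / p)) * energy p g ^ (1 / p) * J := by
        ring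
    _ = _ := by rw [e]; ring

lemma exists_small_radius {C M : ℝ≥0∞} (hC : C ≠ ⊤) (hM : M ≠ ⊤) {α ε : ℝ} (hα : 0 < α)
    (hε : 0 < ε) : ∃ R : ℝ, 0 < R ∧ C * ENNReal.ofReal (R ^ α) * M ≤ ENNReal.ofReal ε := by
  have h : Tendsto (fun R : ℝ => C * ENNReal.ofReal (R ^ α) * M) (𝓝[>] 0) (𝓝 0) := by
    have h0 : Tendsto (fun R : ℝ => R ^ α) (𝓝[>] 0) (𝓝 0) := by
      have := (Real.continuousAt_rpow_const 0 α (Or.inr hα.le)).tendsto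
      rw [Real.zero_rpow hα.ne'] at this
      exact this.mono_left nhdsWithin_le_nhds
    have h1 : Tendsto (fun R : ℝ => ENNReal.ofReal (R ^ α)) (𝓝[>] 0) (𝓝 0) := by
      simpa using ENNReal.tendsto_ofReal h0
    have h2 := ENNReal.Tendsto.mul_const (ENNReal.Tendsto.const_mul h1 (Or.inr hC))
      (Or.inr hM)
    simpa using h2
  have hev := (h.eventually (gt_mem_nhds (ENNReal.ofReal_pos.2 hε))).and self_mem_nhdsWithin
  obtain ⟨R, hR, hR0⟩ := hev.exists
  exact ⟨R, hR0, hR.le⟩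

lemma finite_classes {ν l : ℕ} {N : Set (EuclideanSpace ℝ (Fin ν))}
    {b : EuclideanSpace ℝ (Fin ν)} (hc : IsCompact N) (P : TPkg N b) {p : ℝ} (hp : 1 < p)
    (hlp : (l : ℝ) < p) {M : ℝ≥0∞} (hM : M ≠ ⊤) :
    {γ | ∃ (g : (Fin l → ℝ) → EuclideanSpace ℝ (Fin ν)) (hg : GAdm N b g), ContDiff ℝ 1 g ∧
      energy p g ≤ M ∧ cls P.hb g hg.adm = γ}.Finite := by
  have hp0 : 0 < p := by linarith
  obtain ⟨C, hC, hmor⟩ := morrey (ν := ν) (l := l) hp hlp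
  have hε := P.ε0_pos
  have hα : 0 < 1 - (l : ℝ) / p := by
    rw [sub_pos, div_lt_one hp0]; exact hlp
  obtain ⟨R, hR, hRε⟩ := exists_small_radius hC (M := M ^ (1 / p))
    (ENNReal.rpow_ne_top_of_nonneg (by positivity) hM) hα (ε := P.ε0 / 4) (by positivity)
  obtain ⟨t, htQ, htf, ht⟩ := (isCompact_closedBall (0 : Fin l → ℝ) 1).finite_cover_balls hR
  obtain ⟨s, hsN, hsf, hs⟩ := hc.finite_cover_balls (e := P.ε0 / 4) (by positivity)
  set S := {γ | ∃ (g : (Fin l → ℝ) → EuclideanSpace ℝ (Fin ν)) (hg : GAdm N b g), ContDiff ℝ 1 g ∧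
      energy p g ≤ M ∧ cls P.hb g hg.adm = γ} with hS
  have hex : ∀ γ : S, ∃ (g : (Fin l → ℝ) → EuclideanSpace ℝ (Fin ν)) (hg : GAdm N b g),
      ContDiff ℝ 1 g ∧ energy p g ≤ M ∧ cls P.hb g hg.adm = γ.1 := fun γ => γ.2
  choose G hG hGc hGe hGγ using hex
  have hcode : ∀ (γ : S) (x : t), ∃ y : s, dist (G γ x) y < P.ε0 / 4 := by
    intro γ x
    have := hs ((hG γ).maps x)
    rw [mem_iUnion₂] at this
    obtain ⟨y, hy, h⟩ := this
    exact ⟨⟨y, hy⟩, h⟩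
  choose code hcode using hcode
  have := htf.to_subtype
  have := hsf.to_subtype
  have hosc : ∀ (γ : S) (x x' : Fin l → ℝ), dist x' x ≤ R → dist (G γ x') (G γ x) ≤ P.ε0 / 4 := by
    intro γ x x' hx
    have h1 := hmor (G γ) (hGc γ) R hR x x' hx
    have h2 : ‖G γ x' - G γ x‖ₑ ≤ ENNReal.ofReal (P.ε0 / 4) := by
      refine h1.trans (le_trans ?_ hRε)
      gcongr
      exact hGe γ
    rw [← ofReal_norm, ENNReal.ofReal_le_ofReal_iff (by positivity)] at h2
    rwa [dist_eq_norm]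
  have hinj : Function.Injective code := by
    intro γ1 γ2 h
    apply Subtype.ext
    rw [← hGγ γ1, ← hGγ γ2]
    apply P.cls_close
    intro x hx
    have := ht hx
    rw [mem_iUnion₂] at this
    obtain ⟨x0, hx0, hxx⟩ := this
    have a1 := hosc γ1 x0 x (le_of_lt hxx)
    have a2 := hosc γ2 x0 x (le_of_lt hxx)
    have b1 := hcode γ1 ⟨x0, hx0⟩
    have b2 := hcode γ2 ⟨x0, hx0⟩
    rw [h] at b1
    have t1 := dist_triangle (G γ1 x) (G γ1 x0) (code γ2 ⟨x0, hx0⟩)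
    have t2 := dist_triangle (G γ2 x) (G γ2 x0) (code γ2 ⟨x0, hx0⟩)
    have t3 := dist_triangle_right (G γ1 x) (G γ2 x) (code γ2 ⟨x0, hx0⟩)
    simp only at b1 b2
    linarith
  have : Finite S := Finite.of_injective code hinj
  exact S.toFinite

lemma GAdm.const {ν l : ℕ} {N : Set (EuclideanSpace ℝ (Fin ν))}
    {b : EuclideanSpace ℝ (Fin ν)} (hb : b ∈ N) : GAdm N b (fun _ : Fin l → ℝ => b) :=
  ⟨continuous_const, fun _ => hb, fun _ _ => rfl⟩

lemma small_energy {ν l : ℕ} (hl : 1 ≤ l) {N : Set (EuclideanSpace ℝ (Fin ν))}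
    {b : EuclideanSpace ℝ (Fin ν)} (P : TPkg N b) {p : ℝ} (hp : 1 < p)
    (hlp : (l : ℝ) < p) : ∃ c : ℝ≥0∞, c ≠ 0 ∧ c ≠ ⊤ ∧
      ∀ (g : (Fin l → ℝ) → EuclideanSpace ℝ (Fin ν)) (hg : GAdm N b g), ContDiff ℝ 1 g →
      energy p g < c → cls P.hb g hg.adm = cls P.hb _ (GAdm.const P.hb).adm := by
  have hp0 : 0 < p := by linarith
  obtain ⟨C, hC, hmor⟩ := morrey (ν := ν) (l := l) hp hlp
  have hε := P.ε0_pos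
  obtain ⟨R, hR, hRε⟩ := exists_small_radius (C := C)
    (M := ENNReal.ofReal ((2 : ℝ) ^ (1 - l / p))) hC
    ENNReal.ofReal_ne_top (α := 1 / p) (by positivity) hε
  refine ⟨ENNReal.ofReal R, (ENNReal.ofReal_pos.2 hR).ne', ENNReal.ofReal_ne_top, ?_⟩
  intro g hg hgc he
  apply P.cls_close
  intro x hx
  have h1 : ‖(fun _ => 1 : Fin l → ℝ)‖ = 1 := by
    have : Nonempty (Fin l) := ⟨⟨0, hl⟩⟩
    simp
  have hd : dist x (fun _ => 1 : Fin l → ℝ) ≤ 2 := by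
    rw [dist_eq_norm]
    refine (norm_sub_le _ _).trans ?_
    rw [mem_closedBall_zero_iff] at hx
    linarith
  have h2 := hmor g hgc 2 two_pos _ _ hd
  rw [hg.bdry _ h1.ge] at h2
  have h3 : ‖g x - b‖ₑ ≤ ENNReal.ofReal P.ε0 := by
    refine h2.trans (le_trans ?_ hRε)
    rw [mul_assoc, mul_assoc, mul_comm (ENNReal.ofReal (R ^ (1 / p)))]
    gcongr
    rw [← ENNReal.ofReal_rpow_of_pos hR]
    gcongr
  rw [← ofReal_norm, ENNReal.ofReal_le_ofReal_iff hε.le] at h3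
  rwa [dist_eq_norm]

lemma energy_lt_top {ν l : ℕ} {N : Set (EuclideanSpace ℝ (Fin ν))}
    {b : EuclideanSpace ℝ (Fin ν)} {p : ℝ} (hp : 0 < p)
    {g : (Fin l → ℝ) → EuclideanSpace ℝ (Fin ν)} (hg : GAdm N b g) (hgc : ContDiff ℝ 1 g) :
    energy p g < ⊤ := by
  have hs : HasCompactSupport (fun x => g x - b) :=
    HasCompactSupport.intro (isCompact_closedBall 0 1) (fun x hx => by
      rw [mem_closedBall_zero_iff, not_le] at hx
      rw [hg.bdry x hx.le, sub_self])
  have hs2 := (hs.fderiv ℝ)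
  have hc : Continuous (fderiv ℝ (fun x => g x - b)) :=
    (hgc.sub contDiff_const).continuous_fderiv (by simp)
  have hs3 : HasCompactSupport (fun x => ‖fderiv ℝ (fun x => g x - b) x‖ ^ p) := by
    apply hs2.comp_left (g := fun A => ‖A‖ ^ p)
    simp [Real.zero_rpow hp.ne']
  have hinteg := (Continuous.integrable_of_hasCompactSupport (μ := volume)
    (hc.norm.rpow_const (fun _ => Or.inr hp.le)) hs3).lintegral_lt_top
  refine lt_of_eq_of_lt ?_ hinteg
  refine lintegral_congr fun x => ?_
  rw [← ENNReal.ofReal_rpow_of_nonneg (norm_nonneg _) hp.le, ofReal_norm, fderiv_sub_const]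

/-- `f` is a smooth representative of a class whose energy infimum is at least `T`. -/
structure Obs {ν l : ℕ} {N : Set (EuclideanSpace ℝ (Fin ν))}
    {b : EuclideanSpace ℝ (Fin ν)} (P : TPkg N b) (p : ℝ) (C T : ℝ≥0∞)
    (f : (Fin l → ℝ) → EuclideanSpace ℝ (Fin ν)) : Prop where
  gadm : GAdm N b f
  smooth : ContDiff ℝ (⊤ : ℕ∞) f
  T0 : T ≠ 0
  Tt : T ≠ ⊤
  le : energy p f ≤ C * T
  ge : ∀ (g : (Fin l → ℝ) → EuclideanSpace ℝ (Fin ν)) (hg : GAdm N b g), ContDiff ℝ 1 g →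
    cls P.hb g hg.adm = cls P.hb f gadm.adm → T ≤ energy p g

lemma obs_infinite {ν l : ℕ} {N : Set (EuclideanSpace ℝ (Fin ν))}
    {b : EuclideanSpace ℝ (Fin ν)} (hc : IsCompact N) (P : TPkg N b) {p : ℝ} (hp : 1 < p)
    (hlp : (l : ℝ) < p) (hinf : Infinite (HomotopyGroup (Fin l) ↥N ⟨b, P.hb⟩)) :
    ∃ C : ℝ≥0∞, C ≠ ⊤ ∧ ∀ M : ℝ≥0∞, M ≠ ⊤ → ∃ (T : ℝ≥0∞)
      (f : (Fin l → ℝ) → EuclideanSpace ℝ (Fin ν)), M ≤ T ∧ Obs P p C T f := by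
  obtain ⟨C, hC, hsm⟩ := exists_smoothing (l := l) hc P hp.le
  refine ⟨C * 3, ENNReal.mul_ne_top hC (by simp), ?_⟩
  intro M hM
  have hfin := finite_classes (l := l) hc P hp hlp (M := max M 1) (by simp [hM])
  obtain ⟨γ, hγ⟩ := hfin.exists_notMem
  obtain ⟨g0, hg0, hg0c, hg0N, hg0b, hg0γ⟩ := cls_surj P.hb γ
  obtain ⟨f0, hf0, hf0s, hf0γ, -⟩ := hsm g0 ⟨hg0c, hg0N, hg0b⟩
  set S : Set ℝ≥0∞ := {e | ∃ (g : (Fin l → ℝ) → EuclideanSpace ℝ (Fin ν)) (hg : GAdm N b g),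
    ContDiff ℝ 1 g ∧ cls P.hb g hg.adm = γ ∧ energy p g = e} with hS
  have hf0c : ContDiff ℝ 1 f0 := hf0s.of_le (by exact_mod_cast le_top)
  have hf0S : energy p f0 ∈ S := ⟨f0, hf0, hf0c, hf0γ.trans hg0γ, rfl⟩
  have hTt : sInf S < ⊤ := (sInf_le hf0S).trans_lt (energy_lt_top (by linarith) hf0 hf0c)
  have hMT : max M 1 ≤ sInf S := by
    refine le_sInf ?_
    rintro e ⟨g, hg, hgc, hgγ, rfl⟩
    by_contra h
    exact hγ ⟨g, hg, hgc, (not_le.1 h).le, hgγ⟩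
  obtain ⟨e, ⟨g, hg, hgc, hgγ, rfl⟩, he⟩ := sInf_lt_iff.1
    (ENNReal.lt_add_right hTt.ne one_ne_zero)
  obtain ⟨f, hf, hfs, hfγ, hfe⟩ := hsm g hg
  have h1T : 1 ≤ sInf S := (le_max_right _ _).trans hMT
  refine ⟨sInf S, f, (le_max_left _ _).trans hMT, hf, hfs, ?_, hTt.ne, ?_, ?_⟩
  · exact (lt_of_lt_of_le one_pos h1T).ne'
  · refine (hfe hgc).trans ?_
    rw [mul_assoc]
    gcongr
    calc energy p g + 1 ≤ (sInf S + 1) + 1 := by gcongr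
      _ ≤ (sInf S + sInf S) + sInf S := by gcongr
      _ = 3 * sInf S := by ring
  · intro g' hg' hg'c h
    exact sInf_le ⟨g', hg', hg'c, h.trans (hfγ.trans hgγ), rfl⟩

lemma obs_nontrivial {ν l : ℕ} (hl : 1 ≤ l) {N : Set (EuclideanSpace ℝ (Fin ν))}
    {b : EuclideanSpace ℝ (Fin ν)} (hc : IsCompact N) (P : TPkg N b) {p : ℝ} (hp : 1 < p)
    (hlp : (l : ℝ) < p) (hn : Nontrivial (HomotopyGroup (Fin l) ↥N ⟨b, P.hb⟩)) :
    ∃ (C T : ℝ≥0∞) (f : (Fin l → ℝ) → EuclideanSpace ℝ (Fin ν)), C ≠ ⊤ ∧ Obs P p C T f := by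
  obtain ⟨C, hC, hsm⟩ := exists_smoothing (l := l) hc P hp.le
  obtain ⟨c, hc0, hct, hsmall⟩ := small_energy hl P hp hlp
  obtain ⟨γ, hγ⟩ := exists_ne (cls P.hb _ (GAdm.const (l := l) P.hb).adm)
  obtain ⟨g0, hg0, hg0c, hg0N, hg0b, hg0γ⟩ := cls_surj P.hb γ
  obtain ⟨f, hf, hfs, hfγ, -⟩ := hsm g0 ⟨hg0c, hg0N, hg0b⟩
  have hfc : ContDiff ℝ 1 f := hfs.of_le (by exact_mod_cast le_top)
  refine ⟨energy p f / c, c, f, ENNReal.div_ne_top (energy_lt_top (by linarith) hf hfc).ne hc0,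
    hf, hfs, hc0, hct, ?_, ?_⟩
  · rw [ENNReal.div_mul_cancel hc0 hct]
  · intro g hg hgc h
    by_contra h'
    exact hγ (hg0γ.symm.trans ((hfγ.symm.trans h.symm).trans (hsmall g hg hgc (not_le.1 h'))))

/-- the model kernel -/
def gker (n : ℕ) (p : ℝ) (h : EuclideanSpace ℝ (Fin n)) : ℝ :=
  min (‖h‖ ^ p) 1 / ‖h‖ ^ ((n : ℝ) + p - 1)

lemma measurable_gker (n : ℕ) (p : ℝ) : Measurable (gker n p) := by
  unfold gker
  fun_prop

lemma gker_finite {n : ℕ} (hn : 1 ≤ n) {p : ℝ} (hp : 1 < p) :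
    ∫⁻ h, ENNReal.ofReal (gker n p h) < ⊤ := by
  have : Nonempty (Fin n) := ⟨⟨0, hn⟩⟩
  have : Nontrivial (EuclideanSpace ℝ (Fin n)) := by
    apply Module.nontrivial_of_finrank_pos (R := ℝ)
    rw [finrank_euclideanSpace_fin]; omega
  apply Integrable.lintegral_lt_top
  have := (integrable_fun_norm_addHaar (volume : Measure (EuclideanSpace ℝ (Fin n)))
    (f := fun y : ℝ => min (y ^ p) 1 / y ^ ((n : ℝ) + p - 1))).2
  apply this
  rw [finrank_euclideanSpace_fin]
  have hpow : ∀ y : ℝ, 0 < y → y ^ (n - 1) / y ^ ((n : ℝ) + p - 1) = y ^ (-p) := by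
    intro y hy
    rw [← Real.rpow_natCast, ← Real.rpow_sub hy]
    congr 1
    push_cast [hn]
    ring
  rw [← Ioc_union_Ioi_eq_Ioi (zero_le_one' ℝ), integrableOn_union]
  constructor
  · have : IntegrableOn (fun _ : ℝ => (1 : ℝ)) (Ioc 0 1) := by simp
    refine this.congr_fun (fun y hy => ?_) measurableSet_Ioc
    have h1 : y ^ p ≤ 1 := Real.rpow_le_one hy.1.le hy.2 (by linarith)
    simp only [smul_eq_mul]
    rw [min_eq_left h1, mul_div_assoc', mul_comm, ← mul_div_assoc', hpow y hy.1,
      ← Real.rpow_add hy.1]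
    simp
  · have : IntegrableOn (fun y : ℝ => y ^ (-p)) (Ioi 1) :=
      integrableOn_Ioi_rpow_of_lt (by linarith) one_pos
    refine this.congr_fun (fun y hy => ?_) measurableSet_Ioi
    have hy1 : (1 : ℝ) < y := hy
    have h1 : 1 ≤ y ^ p := Real.one_le_rpow hy1.le (by linarith)
    simp only [smul_eq_mul]
    rw [min_eq_right h1, mul_one_div, hpow y (by linarith)]

lemma translate_diff_le {n ν : ℕ} {p : ℝ} (hp : 1 < p)
    {φ : EuclideanSpace ℝ (Fin n) → EuclideanSpace ℝ (Fin ν)} (hφ : ContDiff ℝ 1 φ)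
    (h : EuclideanSpace ℝ (Fin n)) :
    ∫⁻ x, ‖φ (x + h) - φ x‖ₑ ^ p ≤ ‖h‖ₑ ^ p * ∫⁻ x, ‖fderiv ℝ φ x‖ₑ ^ p := by
  have hDc := hφ.continuous_fderiv (by simp)
  have hp0 : 0 ≤ p := by linarith
  have hm : Measurable fun x => ‖fderiv ℝ φ x‖ₑ ^ p := hDc.measurable.enorm.pow_const p
  calc ∫⁻ x, ‖φ (x + h) - φ x‖ₑ ^ p
      ≤ ∫⁻ x, ∫⁻ t in Ioc (0 : ℝ) 1, ‖fderiv ℝ φ (x + t • h)‖ₑ ^ p * ‖h‖ₑ ^ p := by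
        refine lintegral_mono fun x => ?_
        calc ‖φ (x + h) - φ x‖ₑ ^ p
            ≤ (∫⁻ t in Ioc (0 : ℝ) 1, ‖fderiv ℝ φ (x + t • h)‖ₑ * ‖h‖ₑ) ^ p := by
              gcongr
              exact enorm_sub_le_line hφ x h
          _ ≤ ∫⁻ t in Ioc (0 : ℝ) 1, (‖fderiv ℝ φ (x + t • h)‖ₑ * ‖h‖ₑ) ^ p := by
              apply lintegral_rpow_le _ hp (by simp)
              apply Measurable.aemeasurable
              apply Measurable.mul_const
              apply Measurable.enorm
              apply Continuous.measurable
              fun_prop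
          _ = _ := by
              refine lintegral_congr fun t => ?_
              rw [ENNReal.mul_rpow_of_nonneg _ _ hp0]
    _ = ∫⁻ t in Ioc (0 : ℝ) 1, ∫⁻ x, ‖fderiv ℝ φ (x + t • h)‖ₑ ^ p * ‖h‖ₑ ^ p := by
        rw [lintegral_lintegral_swap]
        apply Measurable.aemeasurable
        apply Measurable.mul_const
        apply Measurable.pow_const
        apply Measurable.enorm
        apply Continuous.measurable
        fun_prop
    _ = ∫⁻ t in Ioc (0 : ℝ) 1, ‖h‖ₑ ^ p * ∫⁻ x, ‖fderiv ℝ φ x‖ₑ ^ p := by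
        refine lintegral_congr fun t => ?_
        rw [lintegral_add_right_eq_self (fun x => ‖fderiv ℝ φ x‖ₑ ^ p * ‖h‖ₑ ^ p),
          lintegral_mul_const _ hm, mul_comm]
    _ = _ := by simp

lemma translate_diff_le2 {n ν : ℕ} {p : ℝ} (hp : 1 < p)
    {φ : EuclideanSpace ℝ (Fin n) → EuclideanSpace ℝ (Fin ν)}
    {M : ℝ≥0∞} (hM : ∀ x, ‖φ x‖ₑ ≤ M) {S : Set (EuclideanSpace ℝ (Fin n))} (hS : MeasurableSet S)
    (hφS : ∀ x, x ∉ S → φ x = 0) (h : EuclideanSpace ℝ (Fin n)) :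
    ∫⁻ x, ‖φ (x + h) - φ x‖ₑ ^ p ≤ (2 * M) ^ p * (2 * volume S) := by
  have hp0 : 0 < p := by linarith
  set F : EuclideanSpace ℝ (Fin n) → ℝ≥0∞ := S.indicator (fun _ => (2 * M) ^ p) with hF
  have hFm : Measurable F := measurable_const.indicator hS
  calc ∫⁻ x, ‖φ (x + h) - φ x‖ₑ ^ p ≤ ∫⁻ x, (F (x + h) + F x) := by
        refine lintegral_mono fun x => ?_
        have hb : ‖φ (x + h) - φ x‖ₑ ^ p ≤ (2 * M) ^ p := by
          gcongr
          rw [two_mul]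
          exact enorm_sub_le.trans (add_le_add (hM _) (hM _))
        by_cases h1 : x ∈ S
        · refine hb.trans ?_
          rw [hF, indicator_of_mem h1]; exact le_add_self
        · by_cases h2 : x + h ∈ S
          · refine hb.trans ?_
            rw [hF, indicator_of_mem h2]; exact le_self_add
          · rw [hφS _ h1, hφS _ h2]
            simp [ENNReal.zero_rpow_of_pos hp0]
    _ = _ := by
        rw [lintegral_add_right _ hFm, lintegral_add_right_eq_self F, hF,
          lintegral_indicator_const hS]
        ring

lemma gagliardo_le {n ν : ℕ} (hn : 1 ≤ n) {p : ℝ} (hp : 1 < p)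
    {φ : EuclideanSpace ℝ (Fin n) → EuclideanSpace ℝ (Fin ν)} (hφ : ContDiff ℝ 1 φ)
    {A B : ℝ} (hA : 0 < A) (hB : 0 < B)
    (hφA : ∀ h, ∫⁻ x, ‖φ (x + h) - φ x‖ₑ ^ p ≤ ENNReal.ofReal A)
    (hφB : ∫⁻ x, ‖fderiv ℝ φ x‖ₑ ^ p ≤ ENNReal.ofReal B) :
    ∫⁻ x, ∫⁻ y, ENNReal.ofReal (‖φ y - φ x‖ ^ p / ‖y - x‖ ^ ((n : ℝ) + p - 1)) ≤
      (∫⁻ h, ENNReal.ofReal (gker n p h)) * ENNReal.ofReal (A ^ (1 / p) * B ^ (1 - 1 / p)) := by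
  have hp0 : 0 < p := by linarith
  have hφc := hφ.continuous
  set κ : EuclideanSpace ℝ (Fin n) → ℝ≥0∞ :=
    fun h => ENNReal.ofReal (‖h‖ ^ ((n : ℝ) + p - 1))⁻¹ with hκ
  have hκm : Measurable κ := by
    rw [hκ]; fun_prop
  set lam : ℝ := (A / B) ^ (1 / p) with hlam
  have hl0 : 0 < lam := by positivity
  have hlp : lam ^ p * B = A := by
    rw [hlam, ← Real.rpow_mul (by positivity), one_div_mul_cancel hp0.ne', Real.rpow_one]
    field_simp
  have hconv : ∀ v : EuclideanSpace ℝ (Fin ν), ENNReal.ofReal (‖v‖ ^ p) = ‖v‖ₑ ^ p := by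
    intro v
    rw [← ENNReal.ofReal_rpow_of_nonneg (norm_nonneg _) hp0.le, ofReal_norm]
  calc ∫⁻ x, ∫⁻ y, ENNReal.ofReal (‖φ y - φ x‖ ^ p / ‖y - x‖ ^ ((n : ℝ) + p - 1))
      = ∫⁻ x, ∫⁻ h, ‖φ (x + h) - φ x‖ₑ ^ p * κ h := by
        refine lintegral_congr fun x => ?_
        rw [← lintegral_add_left_eq_self _ x]
        refine lintegral_congr fun h => ?_
        rw [add_sub_cancel_left, div_eq_mul_inv, ENNReal.ofReal_mul (by positivity), hconv]
    _ = ∫⁻ h, ∫⁻ x, ‖φ (x + h) - φ x‖ₑ ^ p * κ h := by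
        rw [lintegral_lintegral_swap]
        apply Measurable.aemeasurable
        apply Measurable.mul
        · apply Measurable.pow_const
          apply Measurable.enorm
          apply Continuous.measurable
          fun_prop
        · exact hκm.comp measurable_snd
    _ ≤ ∫⁻ h, ENNReal.ofReal (min (‖h‖ ^ p * B) A * (‖h‖ ^ ((n : ℝ) + p - 1))⁻¹) := by
        refine lintegral_mono fun h => ?_
        have hm : Measurable fun x => ‖φ (x + h) - φ x‖ₑ ^ p := by
          apply Measurable.pow_const
          apply Measurable.enorm
          apply Continuous.measurable
          fun_prop
        simp only []
        rw [lintegral_mul_const _ hm, ENNReal.ofReal_mul (le_min (mul_nonneg (Real.rpow_nonneg (norm_nonneg _) _) hB.le) hA.le)]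
        gcongr
        rw [ENNReal.ofReal_min]
        refine le_min ?_ (hφA h)
        rw [ENNReal.ofReal_mul (Real.rpow_nonneg (norm_nonneg _) _),
          ← ENNReal.ofReal_rpow_of_nonneg (norm_nonneg _) hp0.le, ofReal_norm]
        refine (translate_diff_le hp hφ h).trans ?_
        gcongr
    _ = ∫⁻ h, ENNReal.ofReal (lam ^ ((n : ℝ) + p - 1))⁻¹ * ENNReal.ofReal A *
          ENNReal.ofReal (gker n p (0 + lam⁻¹ • h)) := by
        refine lintegral_congr fun h => ?_
        rw [← ENNReal.ofReal_mul (by positivity), ← ENNReal.ofReal_mul (by positivity)]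
        congr 1
        rw [gker, zero_add, norm_smul, Real.norm_of_nonneg (by positivity),
          Real.mul_rpow (by positivity) (by positivity),
          Real.mul_rpow (by positivity) (by positivity), ← hlp, Real.inv_rpow hl0.le,
          Real.inv_rpow hl0.le]
        have hlpp : 0 < lam ^ p := by positivity
        have hlnp : 0 < lam ^ ((n : ℝ) + p - 1) := by positivity
        have hmin : min (‖h‖ ^ p * B) (lam ^ p * B) =
            (lam ^ p * B) * min ((lam ^ p)⁻¹ * ‖h‖ ^ p) 1 := by
          rw [mul_min_of_nonneg _ _ (by positivity)]
          congr 1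
          · field_simp
          · ring
        rw [hmin]
        field_simp
    _ = ENNReal.ofReal (lam ^ ((n : ℝ) + p - 1))⁻¹ * ENNReal.ofReal A *
          (ENNReal.ofReal (lam ^ (n : ℝ)) * ∫⁻ h, ENNReal.ofReal (gker n p h)) := by
        rw [lintegral_const_mul _ (by have := measurable_gker n p; fun_prop),
          lintegral_smul_translate volume (f := fun h => ENNReal.ofReal (gker n p h))
          (by have := measurable_gker n p; fun_prop) 0
          (inv_pos.2 hl0), finrank_euclideanSpace_fin, Real.inv_rpow hl0.le, Real.rpow_neg hl0.le,
          inv_inv]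
    _ = (∫⁻ h, ENNReal.ofReal (gker n p h)) * (ENNReal.ofReal (lam ^ ((n : ℝ) + p - 1))⁻¹ *
          ENNReal.ofReal A * ENNReal.ofReal (lam ^ (n : ℝ))) := by ring
    _ = _ := by
        congr 1
        rw [← ENNReal.ofReal_mul (by positivity), ← ENNReal.ofReal_mul (by positivity)]
        congr 1
        rw [← Real.rpow_neg hl0.le, mul_comm, mul_comm _ A, mul_left_comm,
          ← Real.rpow_add hl0, hlam, ← Real.rpow_mul (by positivity),
          Real.div_rpow hA.le hB.le, mul_div_assoc', div_eq_mul_inv, ← Real.rpow_neg hB.le]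
        nth_rewrite 1 [← Real.rpow_one A]
        rw [← Real.rpow_add hA]
        congr 2
        · field_simp; ring
        · field_simp; ring

/-- a smooth cone-like function -/
def coneG {l : ℕ} (δ : ℝ) (Y : Fin l → ℝ) : ℝ := Real.sqrt (δ ^ 2 + ∑ i, Y i ^ 2)

section
variable {l : ℕ} {δ : ℝ}

lemma coneG_pos (hδ : 0 < δ) (Y : Fin l → ℝ) : 0 < coneG δ Y := by
  apply Real.sqrt_pos.2
  have : 0 ≤ ∑ i, Y i ^ 2 := Finset.sum_nonneg fun i _ => sq_nonneg _
  positivity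

lemma abs_le_coneG (Y : Fin l → ℝ) (i : Fin l) : |Y i| ≤ coneG δ Y := by
  apply Real.abs_le_sqrt
  have := Finset.single_le_sum (f := fun i => Y i ^ 2) (fun i _ => sq_nonneg _) (Finset.mem_univ i)
  nlinarith [sq_nonneg δ]

lemma norm_le_coneG (Y : Fin l → ℝ) : ‖Y‖ ≤ coneG δ Y := by
  rw [pi_norm_le_iff_of_nonneg (show 0 ≤ coneG δ Y from Real.sqrt_nonneg _)]
  exact fun i => abs_le_coneG Y i

lemma coneG_le (hδ : 0 < δ) {Y : Fin l → ℝ} (hY : ‖Y‖ < δ) : coneG δ Y ≤ (l + 1) * δ := by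
  apply Real.sqrt_le_iff.2 ⟨by positivity, ?_⟩
  have h : ∑ i, Y i ^ 2 ≤ l * δ ^ 2 := by
    calc ∑ i, Y i ^ 2 ≤ ∑ _i : Fin l, δ ^ 2 := by
          refine Finset.sum_le_sum fun i _ => ?_
          have := (norm_le_pi_norm Y i).trans hY.le
          rw [Real.norm_eq_abs] at this
          exact sq_le_sq' (by linarith [abs_le.1 this]) (abs_le.1 this).2
      _ = _ := by simp
  have h1 : (0 : ℝ) ≤ l := by positivity
  nlinarith [mul_nonneg h1 (sq_nonneg δ), mul_nonneg (mul_nonneg h1 h1) (sq_nonneg δ)]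

lemma contDiff_coneG (hδ : 0 < δ) : ContDiff ℝ 1 (coneG δ : (Fin l → ℝ) → ℝ) := by
  unfold coneG
  apply ContDiff.sqrt
  · fun_prop
  · intro Y
    have : 0 ≤ ∑ i, Y i ^ 2 := Finset.sum_nonneg fun i _ => sq_nonneg _
    positivity

lemma norm_fderiv_coneG (hδ : 0 < δ) (Y : Fin l → ℝ) : ‖fderiv ℝ (coneG δ) Y‖ ≤ l := by
  have hpos := coneG_pos hδ Y
  have h1 : HasFDerivAt (fun Y : Fin l → ℝ => δ ^ 2 + ∑ i, Y i ^ 2)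
      (∑ i, (2 * Y i) • ContinuousLinearMap.proj (R := ℝ) (φ := fun _ : Fin l => ℝ) i) Y := by
    apply HasFDerivAt.const_add
    apply HasFDerivAt.fun_sum
    intro i _
    have := ((ContinuousLinearMap.proj (R := ℝ) (φ := fun _ : Fin l => ℝ) i).hasFDerivAt
      (x := Y)).pow 2
    simpa using this
  have h2 := h1.sqrt (Real.sqrt_pos.1 hpos).ne'
  have h3 : fderiv ℝ (coneG δ) Y = _ := h2.fderiv
  rw [h3]
  apply ContinuousLinearMap.opNorm_le_bound _ (by positivity)
  intro V
  rw [smul_apply, sum_apply]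
  change ‖(1 / (2 * coneG δ Y)) * _‖ ≤ _
  simp only [smul_apply, ContinuousLinearMap.proj_apply, smul_eq_mul]
  rw [Finset.mul_sum]
  refine (norm_sum_le _ _).trans ?_
  calc ∑ i, ‖1 / (2 * coneG δ Y) * (2 * Y i * V i)‖ ≤ ∑ _i : Fin l, ‖V‖ := by
        refine Finset.sum_le_sum fun i _ => ?_
        have a1 := abs_le_coneG (δ := δ) Y i
        have a2 := norm_le_pi_norm V i
        have e : 1 / (2 * coneG δ Y) * (2 * Y i * V i) = (Y i / coneG δ Y) * V i := by
          field_simp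
        rw [e, norm_mul]
        have a3 : ‖Y i / coneG δ Y‖ ≤ 1 := by
          rw [norm_div, Real.norm_of_nonneg hpos.le, div_le_one hpos]
          exact a1
        calc _ ≤ 1 * ‖V‖ := by gcongr
          _ = ‖V‖ := one_mul _
    _ = l * ‖V‖ := by simp

end

lemma slice_r {ν l : ℕ} {N : Set (EuclideanSpace ℝ (Fin ν))}
    {b : EuclideanSpace ℝ (Fin ν)} {P : TPkg N b} {p : ℝ} (hp : 1 < p) {C T : ℝ≥0∞}
    {f : (Fin l → ℝ) → EuclideanSpace ℝ (Fin ν)} (hf : Obs P p C T f)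
    {δ r : ℝ} (hδ : 0 < δ) (hδr : (l + 1) * δ < r) (hr : r < 1 / 4)
    {U : (Fin l → ℝ) × ℝ → EuclideanSpace ℝ (Fin ν)}
    (hUc : ContinuousOn U (ball 0 1 ×ˢ Ico (0 : ℝ) 1))
    (hUd : ContDiffOn ℝ 1 U (ball 0 1 ×ˢ Ioo (0 : ℝ) 1))
    (hUN : MapsTo U (ball 0 1 ×ˢ Ico (0 : ℝ) 1) N)
    (hU0 : ∀ X ∈ ball (0 : Fin l → ℝ) 1, U (X, 0) = f (δ⁻¹ • X)) :
    T ≤ ∫⁻ X, {Y | coneG δ Y < r}.indicator (fun Y => ENNReal.ofReal (P.L * (l + 1) * r) ^ p *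
      ‖fderiv ℝ U (Y, r - coneG δ Y)‖ₑ ^ p) (0 + r • X) := by
  have hl0 : (0 : ℝ) ≤ l := by positivity
  have hr0 : 0 < r := lt_trans (by positivity) hδr
  have hδr' : δ < r := by nlinarith [mul_nonneg hl0 hδ.le]
  have hG := contDiff_coneG (l := l) hδ
  have hGc : Continuous (coneG δ : (Fin l → ℝ) → ℝ) := hG.continuous
  have hpos : ∀ Y : Fin l → ℝ, 0 < coneG δ Y := coneG_pos hδ
  -- the height function
  set τ : (Fin l → ℝ) → ℝ := fun X => max (r - coneG δ (r • X)) 0 with hτ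
  have hτc : Continuous τ := by rw [hτ]; fun_prop
  have hτ0 : ∀ X, 0 ≤ τ X := fun X => le_max_right _ _
  have hτ1 : ∀ X, τ X < 1 := fun X => max_lt (by linarith [hpos (r • X)]) one_pos
  have hball : ∀ X : Fin l → ℝ, ‖X‖ < 2 → r • X ∈ ball (0 : Fin l → ℝ) 1 := by
    intro X hX
    rw [mem_ball_zero_iff, norm_smul, Real.norm_of_nonneg hr0.le]
    nlinarith [norm_nonneg X]
  have hone : ∀ X : Fin l → ℝ, 1 ≤ ‖X‖ → r ≤ coneG δ (r • X) := by
    intro X hX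
    refine le_trans ?_ (norm_le_coneG _)
    rw [norm_smul, Real.norm_of_nonneg hr0.le]
    nlinarith
  have hfb : ∀ X : Fin l → ℝ, r ≤ coneG δ (r • X) → f (δ⁻¹ • (r • X)) = b := by
    intro X hX
    apply hf.gadm.bdry
    by_contra h
    rw [not_le, norm_smul, Real.norm_of_nonneg (by positivity), inv_mul_lt_iff₀ hδ, mul_one] at h
    have := coneG_le hδ h
    linarith
  set w : (Fin l → ℝ) → EuclideanSpace ℝ (Fin ν) := fun X => U (r • X, τ X) with hw
  have hwc : ContinuousOn w (ball 0 2) := by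
    refine hUc.comp (by fun_prop) ?_
    intro X hX
    exact ⟨hball X (mem_ball_zero_iff.1 hX), hτ0 X, hτ1 X⟩
  have hwN : ∀ X, ‖X‖ < 2 → w X ∈ N := fun X hX => hUN ⟨hball X hX, hτ0 X, hτ1 X⟩
  have hwb : ∀ X, ‖X‖ < 2 → r ≤ coneG δ (r • X) → w X = b := by
    intro X hX h
    have : τ X = 0 := max_eq_right (by linarith)
    simp only [hw, this]
    rw [hU0 _ (hball X hX), hfb X h]
  set g : (Fin l → ℝ) → EuclideanSpace ℝ (Fin ν) :=
    fun X => if coneG δ (r • X) < r then P.Φ (w X) else b with hg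
  -- points where the height vanishes
  have hgb : ∀ X, r ≤ coneG δ (r • X) → g =ᶠ[𝓝 X] fun _ => b := by
    intro X h
    by_cases hX : ‖X‖ < 2
    · have hca : ContinuousAt w X := hwc.continuousAt (isOpen_ball.mem_nhds (by simpa using hX))
      have hev : ∀ᶠ X' in 𝓝 X, dist (w X') b < P.ε1 := by
        have := hca.eventually (ball_mem_nhds (w X) P.ε1_pos)
        rw [hwb X hX h] at this
        exact this
      filter_upwards [hev] with X' hX'
      simp only [hg]
      split_ifs
      · exact P.hΦb _ hX'
      · rfl
    · have hev : ∀ᶠ X' in 𝓝 X, 1 < ‖X'‖ :=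
        continuous_norm.continuousAt.eventually (lt_mem_nhds (by linarith))
      filter_upwards [hev] with X' hX'
      simp only [hg]
      rw [if_neg (not_lt.2 (hone X' hX'.le))]
  -- points where the height is positive
  set ξ : (Fin l → ℝ) → (Fin l → ℝ) × ℝ := fun X => (r • X, r - coneG δ (r • X)) with hξ
  have hξs : ContDiff ℝ 1 ξ := by
    rw [hξ]
    exact (contDiff_const_smul r).prodMk (contDiff_const.sub (hG.comp (contDiff_const_smul r)))
  have hξD : ∀ X, ‖fderiv ℝ ξ X‖ ≤ (l + 1) * r := by
    intro X
    have e1 : HasFDerivAt (fun X : Fin l → ℝ => r • X) (r • ContinuousLinearMap.id ℝ (Fin l → ℝ)) X :=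
      (hasFDerivAt_id X).const_smul r
    have e2 : HasFDerivAt (fun X : Fin l → ℝ => r - coneG δ (r • X)) _ X :=
      (((hG.differentiable (by simp) (r • X)).hasFDerivAt).comp X e1).const_sub r
    have e3 := (e1.prodMk e2).fderiv
    rw [hξ, e3]
    apply ContinuousLinearMap.opNorm_le_bound _ (by positivity)
    intro V
    rw [ContinuousLinearMap.prod_apply, Prod.norm_def]
    refine max_le ?_ ?_
    · rw [smul_apply, norm_smul, Real.norm_of_nonneg hr0.le]
      have := norm_nonneg V
      simp only [ContinuousLinearMap.coe_id', id_eq]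
      nlinarith [mul_nonneg (mul_nonneg hl0 hr0.le) this]
    · rw [neg_apply, norm_neg, ContinuousLinearMap.comp_apply, smul_apply]
      refine (ContinuousLinearMap.le_opNorm _ _).trans ?_
      simp only [ContinuousLinearMap.coe_id', id_eq]
      rw [norm_smul, Real.norm_of_nonneg hr0.le]
      have h1 := norm_fderiv_coneG hδ (r • X)
      have h2 : 0 ≤ r * ‖V‖ := by positivity
      nlinarith
  have hdom : ∀ X, coneG δ (r • X) < r → ξ X ∈ ball (0 : Fin l → ℝ) 1 ×ˢ Ioo (0 : ℝ) 1 := by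
    intro X h
    refine ⟨?_, ?_, ?_⟩
    · have := norm_le_coneG (δ := δ) (r • X)
      rw [mem_ball_zero_iff]; simp only [hξ]; linarith
    · simp only [hξ]; linarith
    · simp only [hξ]; linarith [hpos (r • X)]
  have hopen : IsOpen (ball (0 : Fin l → ℝ) 1 ×ˢ Ioo (0 : ℝ) 1) := isOpen_ball.prod isOpen_Ioo
  have hgξ : ∀ X, coneG δ (r • X) < r → g =ᶠ[𝓝 X] fun X => P.Φ (U (ξ X)) := by
    intro X h
    have hev : ∀ᶠ X' in 𝓝 X, coneG δ (r • X') < r :=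
      (isOpen_lt (by fun_prop) continuous_const).mem_nhds h
    filter_upwards [hev] with X' hX'
    simp only [hg]
    rw [if_pos hX']
    have : τ X' = r - coneG δ (r • X') := max_eq_left (by linarith)
    simp only [hw, this, hξ]
  have hUat : ∀ X, coneG δ (r • X) < r → ContDiffAt ℝ 1 U (ξ X) := fun X h =>
    hUd.contDiffAt (hopen.mem_nhds (hdom X h))
  have hUξN : ∀ X, coneG δ (r • X) < r → U (ξ X) ∈ N := fun X h =>
    hUN ⟨(hdom X h).1, (hdom X h).2.1.le, (hdom X h).2.2⟩
  have hΦat : ∀ X, coneG δ (r • X) < r → ContDiffAt ℝ 1 P.Φ (U (ξ X)) := fun X h =>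
    (P.hΦ.contDiffAt (P.hO.mem_nhds (P.hNO (hUξN X h)))).of_le (by exact_mod_cast le_top)
  have hgs : ContDiff ℝ 1 g := by
    rw [contDiff_iff_contDiffAt]
    intro X
    rcases lt_or_ge (coneG δ (r • X)) r with h | h
    · refine ContDiffAt.congr_of_eventuallyEq ?_ (hgξ X h)
      exact (hΦat X h).comp X ((hUat X h).comp X hξs.contDiffAt)
    · exact contDiffAt_const.congr_of_eventuallyEq (hgb X h)
  have hgA : GAdm N b g := by
    refine ⟨hgs.continuous, fun X => ?_, fun X hX => ?_⟩
    · simp only [hg]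
      split_ifs
      · exact P.hΦN _
      · exact P.hb
    · simp only [hg]
      rw [if_neg (not_lt.2 (hone X hX))]
  have hcb2 : closedBall (0 : Fin l → ℝ) 1 ⊆ ball 0 2 := closedBall_subset_ball (by norm_num)
  have hwA : Adm N b w := ⟨hwc.mono hcb2, fun X hX => hwN X (mem_ball_zero_iff.1 (hcb2 hX)),
    fun X hX => hwb X (by linarith) (hone X hX.ge)⟩
  have hc1 : cls P.hb g hgA.adm = cls P.hb w hwA := by
    apply P.cls_close
    intro X hX
    have hX2 := mem_ball_zero_iff.1 (hcb2 hX)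
    simp only [hg]
    split_ifs with h
    · exact (P.hΦd _ (hwN X hX2)).le
    · rw [hwb X hX2 (not_lt.1 h), dist_self]; exact P.ε0_pos.le
  set w0 : (Fin l → ℝ) → EuclideanSpace ℝ (Fin ν) := fun X => f (δ⁻¹ • (r • X)) with hw0
  have hw0A : Adm N b w0 := by
    refine ⟨?_, fun X _ => hf.gadm.maps _, fun X hX => hfb X (hone X hX.ge)⟩
    have := hf.gadm.cont
    apply Continuous.continuousOn
    rw [hw0]; fun_prop
  have hc2 : cls P.hb w hwA = cls P.hb w0 hw0A := by
    refine cls_eq P.hb hwA hw0A (fun q => U (r • q.2, (1 - q.1) * τ q.2)) ?_ ?_ ?_ ?_ ?_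
    · refine hUc.comp (by fun_prop) ?_
      intro q hq
      refine ⟨hball _ (mem_ball_zero_iff.1 (hcb2 hq.2)), ?_, ?_⟩
      · exact mul_nonneg (by linarith [hq.1.2]) (hτ0 _)
      · have h1 := hτ1 q.2
        have h2 := hτ0 q.2
        have h3 := hq.1.1
        simp only
        nlinarith
    · intro q hq
      refine hUN ⟨hball _ (mem_ball_zero_iff.1 (hcb2 hq.2)), ?_, ?_⟩
      · exact mul_nonneg (by linarith [hq.1.2]) (hτ0 _)
      · have h1 := hτ1 q.2
        have h2 := hτ0 q.2
        have h3 := hq.1.1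
        simp only
        nlinarith
    · intro s hs X hX
      have hX1 := hone X hX.ge
      have : τ X = 0 := max_eq_right (by linarith)
      simp only [this, mul_zero]
      rw [hU0 _ (hball X (by linarith)), hfb X hX1]
    · intro X hX; simp [hw]
    · intro X hX
      simp only [sub_self, zero_mul]
      rw [hU0 _ (hball X (mem_ball_zero_iff.1 (hcb2 hX)))]
  have hc3 : cls P.hb w0 hw0A = cls P.hb f hf.gadm.adm := by
    refine cls_eq P.hb hw0A hf.gadm.adm
      (fun q => f (((1 - q.1) * (δ⁻¹ * r) + q.1) • q.2)) ?_ ?_ ?_ ?_ ?_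
    · have := hf.gadm.cont
      apply Continuous.continuousOn
      fun_prop
    · intro q hq; exact hf.gadm.maps _
    · intro s hs X hX
      apply hf.gadm.bdry
      have h1 : 1 ≤ δ⁻¹ * r := by
        rw [le_inv_mul_iff₀ hδ]; linarith
      have h2 := hs.1
      have h3 := hs.2
      have h4 : 1 ≤ (1 - s) * (δ⁻¹ * r) + s := by nlinarith
      rw [norm_smul, hX, mul_one, Real.norm_of_nonneg (by linarith)]
      exact h4
    · intro X hX; simp [hw0, smul_smul]
    · intro X hX; simp
  have hT := hf.ge g hgA hgs (hc1.trans (hc2.trans hc3))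
  refine hT.trans ?_
  rw [energy]
  refine lintegral_mono fun X => ?_
  simp only [zero_add]
  rcases lt_or_ge (coneG δ (r • X)) r with h | h
  · rw [indicator_of_mem (by exact h), ← ENNReal.mul_rpow_of_nonneg _ _ (by linarith)]
    gcongr
    rw [(hgξ X h).fderiv_eq]
    have dξ : DifferentiableAt ℝ ξ X := hξs.differentiable (by simp) X
    have dU : DifferentiableAt ℝ U (ξ X) := (hUat X h).differentiableAt (by simp)
    have dΦ : DifferentiableAt ℝ P.Φ (U (ξ X)) := (hΦat X h).differentiableAt (by simp)
    have e1 : HasFDerivAt (fun X => P.Φ (U (ξ X)))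
        ((fderiv ℝ P.Φ (U (ξ X))).comp ((fderiv ℝ U (ξ X)).comp (fderiv ℝ ξ X))) X :=
      dΦ.hasFDerivAt.comp X (dU.hasFDerivAt.comp X dξ.hasFDerivAt)
    rw [e1.fderiv, ← ofReal_norm, ← ofReal_norm,
      ← ENNReal.ofReal_mul (by have := P.L_pos; positivity)]
    apply ENNReal.ofReal_le_ofReal
    calc _ ≤ ‖fderiv ℝ P.Φ (U (ξ X))‖ * (‖fderiv ℝ U (ξ X)‖ * ‖fderiv ℝ ξ X‖) :=
          (ContinuousLinearMap.opNorm_comp_le _ _).trans (by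
            gcongr; exact ContinuousLinearMap.opNorm_comp_le _ _)
      _ ≤ P.L * (‖fderiv ℝ U (ξ X)‖ * ((l + 1) * r)) := by
          gcongr
          · exact P.L_pos.le
          · exact P.hΦL _ (hUξN X h)
          · exact hξD X
      _ = _ := by simp only [hξ]; ring
  · have h0 : ‖fderiv ℝ g X‖ₑ = 0 := by rw [← ofReal_norm, (hgb X h).fderiv_eq]; simp
    rw [h0, ENNReal.zero_rpow_of_pos (by linarith)]
    exact zero_le

lemma slice_lower {ν l : ℕ} {N : Set (EuclideanSpace ℝ (Fin ν))}
    {b : EuclideanSpace ℝ (Fin ν)} {P : TPkg N b} {p : ℝ} (hp : 1 < p) {C T : ℝ≥0∞}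
    {f : (Fin l → ℝ) → EuclideanSpace ℝ (Fin ν)} (hf : Obs P p C T f)
    {δ : ℝ} (hδ : 0 < δ)
    {U : (Fin l → ℝ) × ℝ → EuclideanSpace ℝ (Fin ν)}
    (hUc : ContinuousOn U (ball 0 1 ×ˢ Ico (0 : ℝ) 1))
    (hUd : ContDiffOn ℝ 1 U (ball 0 1 ×ˢ Ioo (0 : ℝ) 1))
    (hUN : MapsTo U (ball 0 1 ×ˢ Ico (0 : ℝ) 1) N)
    (hU0 : ∀ X ∈ ball (0 : Fin l → ℝ) 1, U (X, 0) = f (δ⁻¹ • X)) :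
    T * (∫⁻ r in Ioo (((l : ℝ) + 1) * δ) (1 / 4), ENNReal.ofReal (r ^ ((l : ℝ) - p))) ≤
      ENNReal.ofReal (P.L * (l + 1)) ^ p *
        ∫⁻ z in ball (0 : Fin l → ℝ) (1 / 2) ×ˢ Ioo (0 : ℝ) (1 / 2), ‖fderiv ℝ U z‖ₑ ^ p := by
  have hL := P.L_pos
  have hGc : Continuous (coneG δ : (Fin l → ℝ) → ℝ) := (contDiff_coneG (l := l) hδ).continuous
  set G : (Fin l → ℝ) × ℝ → ℝ≥0∞ := fun z => ‖fderiv ℝ U z‖ₑ ^ p with hG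
  have hGm : Measurable G := ((measurable_fderiv ℝ U).enorm).pow_const p
  set S := ball (0 : Fin l → ℝ) (1 / 2) ×ˢ Ioo (0 : ℝ) (1 / 2) with hS
  have hSm : MeasurableSet S := measurableSet_ball.prod measurableSet_Ioo
  set K : (Fin l → ℝ) × ℝ → ℝ≥0∞ := S.indicator G with hK
  have hKm : Measurable K := hGm.indicator hSm
  set c : ℝ≥0∞ := ENNReal.ofReal (P.L * (l + 1)) ^ p with hc
  have hct : c ≠ ⊤ := ENNReal.rpow_ne_top_of_nonneg (by linarith) ENNReal.ofReal_ne_top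
  have hstep : ∀ r ∈ Ioo (((l : ℝ) + 1) * δ) (1 / 4),
      T * ENNReal.ofReal (r ^ ((l : ℝ) - p)) ≤ c * ∫⁻ Y, K (Y, r - coneG δ Y) := by
    intro r hr
    have hr0 : 0 < r := lt_trans (by positivity) hr.1
    have h1 := slice_r hp hf hδ hr.1 hr.2 hUc hUd hUN hU0
    have hm : MeasurableSet {Y : Fin l → ℝ | coneG δ Y < r} :=
      (isOpen_lt hGc continuous_const).measurableSet
    have hm2 : Measurable (fun Y : Fin l → ℝ => G (Y, r - coneG δ Y)) :=
      hGm.comp (by fun_prop)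
    rw [lintegral_smul_translate volume (f := {Y | coneG δ Y < r}.indicator
      (fun Y => ENNReal.ofReal (P.L * (l + 1) * r) ^ p * ‖fderiv ℝ U (Y, r - coneG δ Y)‖ₑ ^ p))
      ((hm2.const_mul _).indicator hm) 0 hr0, Module.finrank_fin_fun] at h1
    have h2 : ∫⁻ Y, {Y | coneG δ Y < r}.indicator
      (fun Y => ENNReal.ofReal (P.L * (l + 1) * r) ^ p * ‖fderiv ℝ U (Y, r - coneG δ Y)‖ₑ ^ p) Y
        ≤ (c * ENNReal.ofReal (r ^ p)) * ∫⁻ Y, K (Y, r - coneG δ Y) := by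
      rw [← lintegral_const_mul' _ _ (ENNReal.mul_ne_top hct ENNReal.ofReal_ne_top)]
      refine lintegral_mono fun Y => ?_
      by_cases h : coneG δ Y < r
      · rw [indicator_of_mem (by exact h)]
        have hin : (Y, r - coneG δ Y) ∈ S := by
          have a1 := norm_le_coneG (δ := δ) Y
          have a2 := coneG_pos hδ Y
          have a3 := hr.2
          refine ⟨?_, ?_, ?_⟩
          · rw [mem_ball_zero_iff]; simp only; linarith
          · simp only; linarith
          · simp only; linarith
        rw [hK, indicator_of_mem hin, ENNReal.ofReal_mul (by positivity),
          ENNReal.mul_rpow_of_nonneg _ _ (by linarith : (0:ℝ) ≤ p),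
          ENNReal.ofReal_rpow_of_nonneg hr0.le (by linarith)]
      · rw [indicator_of_notMem (by exact h)]
        exact zero_le
    have h3 := h1.trans (mul_le_mul_right h2 _)
    calc T * ENNReal.ofReal (r ^ ((l : ℝ) - p))
        ≤ (ENNReal.ofReal (r ^ (-(l : ℝ))) * ((c * ENNReal.ofReal (r ^ p)) *
          ∫⁻ Y, K (Y, r - coneG δ Y))) * ENNReal.ofReal (r ^ ((l : ℝ) - p)) := by gcongr
      _ = (ENNReal.ofReal (r ^ (-(l : ℝ))) * ENNReal.ofReal (r ^ p) *
          ENNReal.ofReal (r ^ ((l : ℝ) - p))) * (c * ∫⁻ Y, K (Y, r - coneG δ Y)) := by ring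
      _ = _ := by
        rw [← ENNReal.ofReal_mul (by positivity), ← ENNReal.ofReal_mul (by positivity),
          ← Real.rpow_add hr0, ← Real.rpow_add hr0]
        simp
  have hm1 : Measurable (fun r : ℝ => ENNReal.ofReal (r ^ ((l : ℝ) - p))) := by fun_prop
  have hKr : Measurable (fun q : ℝ × (Fin l → ℝ) => K (q.2, q.1 - coneG δ q.2)) :=
    hKm.comp (by fun_prop)
  rw [← lintegral_const_mul _ hm1]
  calc _ ≤ ∫⁻ r in Ioo (((l : ℝ) + 1) * δ) (1 / 4), c * ∫⁻ Y, K (Y, r - coneG δ Y) :=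
        setLIntegral_mono' measurableSet_Ioo hstep
    _ ≤ ∫⁻ r, c * ∫⁻ Y, K (Y, r - coneG δ Y) := setLIntegral_le_lintegral _ _
    _ = c * ∫⁻ r, ∫⁻ Y, K (Y, r - coneG δ Y) := lintegral_const_mul' _ _ hct
    _ = c * ∫⁻ Y, ∫⁻ r, K (Y, r - coneG δ Y) := by
        rw [lintegral_lintegral_swap hKr.aemeasurable]
    _ = c * ∫⁻ Y, ∫⁻ t, K (Y, t) := by
        congr 2
        ext Y
        exact lintegral_sub_right_eq_self (fun t => K (Y, t)) _
    _ = c * ∫⁻ z, K z := by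
        rw [Measure.volume_eq_prod, lintegral_prod _ hKm.aemeasurable]
    _ = _ := by rw [hK, lintegral_indicator hSm]

lemma lintegral_polar {d : ℕ} {F : EuclideanSpace ℝ (Fin (d + 1)) → ℝ≥0∞} (hF : Measurable F) :
    ∫⁻ y, F y = ∫⁻ ω, (∫⁻ ρ in Ioi (0 : ℝ), ENNReal.ofReal (ρ ^ d) *
      F (ρ • (ω : EuclideanSpace ℝ (Fin (d + 1)))))
      ∂(volume : Measure (EuclideanSpace ℝ (Fin (d + 1)))).toSphere := by
  have h := (volume : Measure (EuclideanSpace ℝ (Fin (d + 1)))).measurePreserving_homeomorphUnitSphereProd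
  have hd : Module.finrank ℝ (EuclideanSpace ℝ (Fin (d + 1))) - 1 = d := by
    rw [finrank_euclideanSpace_fin]; rfl
  rw [hd] at h
  have hF2 : Measurable (fun q : sphere (0 : EuclideanSpace ℝ (Fin (d + 1))) 1 × Ioi (0 : ℝ) =>
      F ((q.2 : ℝ) • (q.1 : EuclideanSpace ℝ (Fin (d + 1))))) := by
    refine hF.comp ?_
    exact (measurable_subtype_coe.comp measurable_snd).smul
      (measurable_subtype_coe.comp measurable_fst)
  calc ∫⁻ y, F y = ∫⁻ y in ({0}ᶜ : Set (EuclideanSpace ℝ (Fin (d + 1)))), F y := by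
        rw [restrict_compl_singleton]
    _ = ∫⁻ y : ({0}ᶜ : Set (EuclideanSpace ℝ (Fin (d + 1)))), F y
          ∂(volume.comap Subtype.val) := by
        rw [lintegral_subtype_comap (measurableSet_singleton _).compl]
    _ = ∫⁻ q : sphere (0 : EuclideanSpace ℝ (Fin (d + 1))) 1 × Ioi (0 : ℝ), F ((q.2 : ℝ) • (q.1 : EuclideanSpace ℝ (Fin (d + 1))))
          ∂(volume.toSphere.prod (Measure.volumeIoiPow d)) := by
        rw [← h.lintegral_comp hF2]
        refine lintegral_congr fun y => ?_
        have hy : (y : EuclideanSpace ℝ (Fin (d + 1))) ≠ 0 := y.2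
        simp [smul_smul, norm_ne_zero_iff.2 hy]
    _ = _ := by
        rw [lintegral_prod _ hF2.aemeasurable]
        refine lintegral_congr fun ω => ?_
        have hm : Measurable (fun ρ : Ioi (0 : ℝ) =>
            F ((ρ : ℝ) • (ω : EuclideanSpace ℝ (Fin (d + 1))))) :=
          hF.comp (measurable_subtype_coe.smul_const _)
        rw [Measure.volumeIoiPow, lintegral_withDensity_eq_lintegral_mul _ (by fun_prop) hm]
        simp only [Pi.mul_apply]
        rw [lintegral_subtype_comap measurableSet_Ioi (fun ρ : ℝ => ENNReal.ofReal (ρ ^ d) *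
          F (ρ • (ω : EuclideanSpace ℝ (Fin (d + 1)))))]

lemma lintegral_cons {l : ℕ} {F : (Fin (l + 1) → ℝ) → ℝ≥0∞} (hF : Measurable F) :
    ∫⁻ X, F X = ∫⁻ z : Fin l → ℝ, ∫⁻ s : ℝ, F (Fin.cons s z) := by
  have h := volume_preserving_piFinSuccAbove (fun _ : Fin (l + 1) => ℝ) 0
  have e := h.symm.lintegral_comp hF
  rw [← e, Measure.volume_eq_prod, lintegral_prod_symm]
  · refine lintegral_congr fun z => lintegral_congr fun s => ?_
    congr 1
    exact Fin.insertNth_zero' s z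
  · exact (hF.comp (MeasurableEquiv.measurable _)).aemeasurable

/-- the model space -/
abbrev MSp (l d : ℕ) := (Fin l → ℝ) × EuclideanSpace ℝ (Fin (d + 1))

/-- distance coordinates around a sphere -/
def kmap {l d : ℕ} (x : MSp l d) : Fin (l + 1) → ℝ := Fin.cons (‖x.2‖ - 1) x.1

lemma kmap_lip {l d : ℕ} : LipschitzWith 1 (kmap (l := l) (d := d)) := by
  apply LipschitzWith.of_dist_le_mul
  intro x y
  rw [NNReal.coe_one, one_mul, dist_pi_le_iff dist_nonneg]
  intro i
  refine Fin.cases ?_ (fun j => ?_) i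
  · simp only [kmap, Fin.cons_zero]
    rw [Real.dist_eq]
    have : ‖x.2‖ - 1 - (‖y.2‖ - 1) = ‖x.2‖ - ‖y.2‖ := by ring
    rw [this]
    refine (abs_norm_sub_norm_le _ _).trans ?_
    rw [← dist_eq_norm]
    exact le_max_right _ _
  · simp only [kmap, Fin.cons_succ]
    exact (dist_le_pi_dist x.1 y.1 j).trans (le_max_left _ _)

lemma coarea_upper {l d : ℕ} {F : (Fin (l + 1) → ℝ) → ℝ≥0∞} (hF : Measurable F)
    (hF0 : ∀ X, 1 < ‖X‖ → F X = 0) {δ : ℝ} (hδ : 0 < δ) (hδ1 : δ ≤ 1) :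
    ∫⁻ x : MSp l d, F (δ⁻¹ • kmap x) ≤
      ((volume : Measure (EuclideanSpace ℝ (Fin (d + 1)))).toSphere univ * ENNReal.ofReal (2 ^ d)) *
        (ENNReal.ofReal (δ ^ ((l + 1 : ℕ) : ℝ)) * ∫⁻ X, F X) := by
  set σ := (volume : Measure (EuclideanSpace ℝ (Fin (d + 1)))).toSphere univ with hσ
  have hσt : σ ≠ ⊤ := measure_ne_top _ _
  have hk : Measurable (kmap (l := l) (d := d)) := kmap_lip.continuous.measurable
  have hm : Measurable (fun x : MSp l d => F (δ⁻¹ • kmap x)) := by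
    refine hF.comp ?_
    exact hk.const_smul δ⁻¹
  have hsc := lintegral_smul_translate (volume : Measure (Fin (l + 1) → ℝ)) (f := F) hF 0
    (inv_pos.2 hδ)
  rw [Module.finrank_fin_fun, Real.inv_rpow hδ.le, Real.rpow_neg hδ.le, inv_inv] at hsc
  rw [← hsc]
  simp only [zero_add]
  rw [lintegral_cons (F := fun X => F (δ⁻¹ • X)) (hF.comp (measurable_const_smul δ⁻¹)),
    Measure.volume_eq_prod, lintegral_prod _ hm.aemeasurable,
    ← lintegral_const_mul' _ _ (ENNReal.mul_ne_top hσt ENNReal.ofReal_ne_top)]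
  refine lintegral_mono fun z => ?_
  have hm2 : Measurable (fun y : EuclideanSpace ℝ (Fin (d + 1)) => F (δ⁻¹ • kmap (z, y))) :=
    hm.comp (by fun_prop)
  simp only
  rw [lintegral_polar hm2]
  calc _ ≤ ∫⁻ ω : sphere (0 : EuclideanSpace ℝ (Fin (d + 1))) 1, (ENNReal.ofReal (2 ^ d) *
          ∫⁻ s : ℝ, F (δ⁻¹ • (Fin.cons s z : Fin (l + 1) → ℝ)))
          ∂(volume : Measure (EuclideanSpace ℝ (Fin (d + 1)))).toSphere := by
        refine lintegral_mono fun ω => ?_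
        rw [← lintegral_const_mul' _ _ ENNReal.ofReal_ne_top]
        rw [← lintegral_sub_right_eq_self (fun s : ℝ => ENNReal.ofReal (2 ^ d) *
          F (δ⁻¹ • (Fin.cons s z : Fin (l + 1) → ℝ))) 1]
        refine (setLIntegral_mono' measurableSet_Ioi ?_).trans (setLIntegral_le_lintegral (Ioi 0) _)
        intro ρ hρ
        have hω : ‖(ω : EuclideanSpace ℝ (Fin (d + 1)))‖ = 1 := by
          have := ω.2; rwa [mem_sphere_zero_iff_norm] at this
        have hρ0 : 0 < ρ := hρ
        have e : kmap (z, ρ • (ω : EuclideanSpace ℝ (Fin (d + 1)))) = Fin.cons (ρ - 1) z := by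
          simp [kmap, norm_smul, hω, abs_of_pos hρ0]
        rw [e]
        by_cases h2 : ρ ≤ 2
        · gcongr
        · rw [hF0]
          · simp
          · refine lt_of_lt_of_le ?_ (norm_le_pi_norm _ 0)
            rw [Pi.smul_apply, Fin.cons_zero, norm_smul, Real.norm_of_nonneg (by positivity),
              Real.norm_of_nonneg (by linarith), lt_inv_mul_iff₀ hδ]
            linarith
    _ = _ := by rw [lintegral_const]; ring

section
variable {ν l d : ℕ} {N : Set (EuclideanSpace ℝ (Fin ν))}
    {b : EuclideanSpace ℝ (Fin ν)} {δ : ℝ}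
    {f : (Fin (l + 1) → ℝ) → EuclideanSpace ℝ (Fin ν)}

/-- model map -/
def vmap (δ : ℝ) (f : (Fin (l + 1) → ℝ) → EuclideanSpace ℝ (Fin ν)) (x : MSp l d) :
    EuclideanSpace ℝ (Fin ν) := f (δ⁻¹ • kmap x)

lemma one_le_norm_kmap (hδ : 0 < δ) {x : MSp l d} (h : δ ≤ ‖kmap x‖) : 1 ≤ ‖δ⁻¹ • kmap x‖ := by
  rw [norm_smul, Real.norm_of_nonneg (by positivity), le_inv_mul_iff₀ hδ]
  linarith

lemma norm_kmap_snd (x : MSp l d) : |‖x.2‖ - 1| ≤ ‖kmap x‖ := by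
  have := norm_le_pi_norm (kmap x) 0
  simpa [kmap] using this

lemma norm_kmap_fst (x : MSp l d) : ‖x.1‖ ≤ ‖kmap x‖ := by
  rw [pi_norm_le_iff_of_nonneg (norm_nonneg _)]
  intro i
  have := norm_le_pi_norm (kmap x) i.succ
  simpa [kmap] using this

lemma vmap_far (hf : GAdm N b f) (hδ : 0 < δ) (hδ1 : δ ≤ 1 / 2) {x : MSp l d} (hx : 2 ≤ ‖x‖) :
    vmap δ f x = b := by
  apply hf.bdry
  apply one_le_norm_kmap hδ
  rw [Prod.norm_def, le_max_iff] at hx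
  rcases hx with h | h
  · linarith [norm_kmap_fst x]
  · have := norm_kmap_snd x
    have := le_abs_self (‖x.2‖ - 1)
    linarith

lemma vmap_near (hf : GAdm N b f) (hδ : 0 < δ) (hδ1 : δ ≤ 1 / 2) {x : MSp l d} (hx : x.2 = 0) :
    vmap δ f =ᶠ[𝓝 x] fun _ => b := by
  have hev : ∀ᶠ x' : MSp l d in 𝓝 x, ‖x'.2‖ < 1 / 2 := by
    have : ContinuousAt (fun x' : MSp l d => ‖x'.2‖) x := by fun_prop
    apply this.eventually (gt_mem_nhds _)
    simp only [hx]; norm_num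
  filter_upwards [hev] with x' hx'
  apply hf.bdry
  apply one_le_norm_kmap hδ
  have := norm_kmap_snd x'
  have := neg_abs_le (‖x'.2‖ - 1)
  linarith

lemma contDiffAt_kmap {x : MSp l d} (hx : x.2 ≠ 0) : ContDiffAt ℝ (⊤ : ℕ∞) kmap x := by
  rw [contDiffAt_pi]
  intro i
  refine Fin.cases ?_ (fun j => ?_) i
  · simp only [kmap, Fin.cons_zero]
    exact ((contDiffAt_norm ℝ hx).comp x contDiffAt_snd).sub contDiffAt_const
  · simp only [kmap, Fin.cons_succ]
    fun_prop

lemma contDiff_vmap (hf : GAdm N b f) (hfs : ContDiff ℝ (⊤ : ℕ∞) f) (hδ : 0 < δ)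
    (hδ1 : δ ≤ 1 / 2) : ContDiff ℝ (⊤ : ℕ∞) (vmap (d := d) δ f) := by
  rw [contDiff_iff_contDiffAt]
  intro x
  by_cases hx : x.2 = 0
  · exact contDiffAt_const.congr_of_eventuallyEq (vmap_near hf hδ hδ1 hx)
  · exact hfs.contDiffAt.comp x ((contDiffAt_kmap hx).const_smul δ⁻¹)

lemma fderiv_vmap_le (hf : GAdm N b f) (hfs : ContDiff ℝ (⊤ : ℕ∞) f) (hδ : 0 < δ)
    (hδ1 : δ ≤ 1 / 2) (x : MSp l d) :
    ‖fderiv ℝ (vmap δ f) x‖ ≤ δ⁻¹ * ‖fderiv ℝ f (δ⁻¹ • kmap x)‖ := by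
  by_cases hx : x.2 = 0
  · rw [(vmap_near hf hδ hδ1 hx).fderiv_eq]
    simp only [fderiv_fun_const, Pi.zero_apply, norm_zero]
    positivity
  · have h1 : HasFDerivAt kmap (fderiv ℝ kmap x) x :=
      ((contDiffAt_kmap hx).differentiableAt (by simp)).hasFDerivAt
    have h2 : HasFDerivAt f (fderiv ℝ f (δ⁻¹ • kmap x)) (δ⁻¹ • kmap x) :=
      (hfs.differentiable (by simp) _).hasFDerivAt
    have h3 : HasFDerivAt (vmap δ f) _ x := h2.comp x (h1.const_smul δ⁻¹)
    rw [h3.fderiv]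
    refine (ContinuousLinearMap.opNorm_comp_le _ _).trans ?_
    rw [norm_smul, Real.norm_of_nonneg (by positivity)]
    have h4 : ‖fderiv ℝ (kmap (l := l) (d := d)) x‖ ≤ 1 := by
      simpa using norm_fderiv_le_of_lipschitz ℝ (kmap_lip (l := l) (d := d)) (x₀ := x)
    have h5 : 0 ≤ ‖fderiv ℝ f (δ⁻¹ • kmap x)‖ := norm_nonneg _
    have h6 : 0 < δ⁻¹ := by positivity
    calc _ ≤ ‖fderiv ℝ f (δ⁻¹ • kmap x)‖ * (δ⁻¹ * 1) := by gcongr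
      _ = _ := by ring

end

/-- restriction to a slice -/
def sliceA {l d : ℕ} (ω : EuclideanSpace ℝ (Fin (d + 1))) :
    (Fin (l + 1) → ℝ) × ℝ →L[ℝ] MSp l d × ℝ :=
  ((((ContinuousLinearMap.pi fun j : Fin l =>
      ContinuousLinearMap.proj (R := ℝ) (φ := fun _ : Fin (l + 1) => ℝ) j.succ)).prod
    ((ContinuousLinearMap.proj (R := ℝ) (φ := fun _ : Fin (l + 1) => ℝ) 0).smulRight ω)).comp
      (ContinuousLinearMap.fst ℝ (Fin (l + 1) → ℝ) ℝ)).prod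
    (ContinuousLinearMap.snd ℝ (Fin (l + 1) → ℝ) ℝ)

lemma sliceA_apply {l d : ℕ} (ω : EuclideanSpace ℝ (Fin (d + 1))) (q : (Fin (l + 1) → ℝ) × ℝ) :
    sliceA ω q = ((fun j : Fin l => q.1 j.succ, q.1 0 • ω), q.2) := rfl

lemma norm_sliceA_le {l d : ℕ} {ω : EuclideanSpace ℝ (Fin (d + 1))} (hω : ‖ω‖ = 1) :
    ‖sliceA (l := l) ω‖ ≤ 1 := by
  apply ContinuousLinearMap.opNorm_le_bound _ zero_le_one
  intro q
  rw [one_mul, sliceA_apply, Prod.norm_def, Prod.norm_def]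
  have h1 : ‖q.1‖ ≤ ‖q‖ := norm_fst_le q
  have h2 : ‖q.2‖ ≤ ‖q‖ := norm_snd_le q
  refine max_le (max_le ?_ ?_) h2
  · rw [pi_norm_le_iff_of_nonneg (norm_nonneg _)]
    exact fun j => (norm_le_pi_norm q.1 _).trans h1
  · simp only [norm_smul, hω, mul_one]
    exact (norm_le_pi_norm q.1 0).trans h1

lemma model_lower {ν l d : ℕ} {N : Set (EuclideanSpace ℝ (Fin ν))}
    {b : EuclideanSpace ℝ (Fin ν)} {P : TPkg N b} {p : ℝ} (hp : 1 < p) {C T : ℝ≥0∞}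
    {f : (Fin (l + 1) → ℝ) → EuclideanSpace ℝ (Fin ν)} (hf : Obs P p C T f)
    {δ : ℝ} (hδ : 0 < δ)
    {U : MSp l d × ℝ → EuclideanSpace ℝ (Fin ν)}
    (hUc : ContinuousOn U (ball 0 3 ×ˢ Ico (0 : ℝ) 1))
    (hUd : ContDiffOn ℝ 1 U (ball 0 3 ×ˢ Ioo (0 : ℝ) 1))
    (hUN : MapsTo U (ball 0 3 ×ˢ Ico (0 : ℝ) 1) N)
    (hU0 : ∀ x ∈ ball (0 : MSp l d) 3, U (x, 0) = vmap δ f x) :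
    (volume : Measure (EuclideanSpace ℝ (Fin (d + 1)))).toSphere univ *
    (T * (∫⁻ r in Ioo ((((l + 1 : ℕ) : ℝ) + 1) * δ) (1 / 4),
      ENNReal.ofReal (r ^ (((l + 1 : ℕ) : ℝ) - p)))) ≤
      (ENNReal.ofReal (P.L * ((l + 1 : ℕ) + 1)) ^ p * ENNReal.ofReal (2 ^ d)) *
        ∫⁻ z in ball (0 : MSp l d) 3 ×ˢ Ioo (0 : ℝ) 1, ‖fderiv ℝ U z‖ₑ ^ p := by
  set σ := (volume : Measure (EuclideanSpace ℝ (Fin (d + 1)))).toSphere with hσ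
  set G : MSp l d × ℝ → ℝ≥0∞ := fun z => ‖fderiv ℝ U z‖ₑ ^ p with hG
  have hGm : Measurable G := ((measurable_fderiv ℝ U).enorm).pow_const p
  set S := ball (0 : MSp l d) 3 ×ˢ Ioo (0 : ℝ) 1 with hS
  have hSo : IsOpen S := isOpen_ball.prod isOpen_Ioo
  have hSm : MeasurableSet S := measurableSet_ball.prod measurableSet_Ioo
  set K : MSp l d × ℝ → ℝ≥0∞ := S.indicator G with hK
  have hKm : Measurable K := hGm.indicator hSm
  set M : MSp l d → ℝ≥0∞ := fun x => ∫⁻ t, K (x, t) with hM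
  have hMm : Measurable M := hKm.lintegral_prod_right'
  set c : ℝ≥0∞ := ENNReal.ofReal (P.L * ((l + 1 : ℕ) + 1)) ^ p with hc
  have hct : c ≠ ⊤ := ENNReal.rpow_ne_top_of_nonneg (by linarith) ENNReal.ofReal_ne_top
  set I := ∫⁻ r in Ioo ((((l + 1 : ℕ) : ℝ) + 1) * δ) (1 / 4),
      ENNReal.ofReal (r ^ (((l + 1 : ℕ) : ℝ) - p)) with hI
  have hstep : ∀ ω : sphere (0 : EuclideanSpace ℝ (Fin (d + 1))) 1,
      T * I ≤ (c * ENNReal.ofReal (2 ^ d)) * ∫⁻ z, ∫⁻ ρ in Ioi (0 : ℝ), ENNReal.ofReal (ρ ^ d) *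
        M (z, ρ • (ω : EuclideanSpace ℝ (Fin (d + 1)))) := by
    intro ω
    have hω : ‖(ω : EuclideanSpace ℝ (Fin (d + 1)))‖ = 1 := by
      have := ω.2; rwa [mem_sphere_zero_iff_norm] at this
    set A : (Fin (l + 1) → ℝ) × ℝ → MSp l d × ℝ := fun q =>
      ((0, (ω : EuclideanSpace ℝ (Fin (d + 1)))), 0) + sliceA (ω : EuclideanSpace ℝ (Fin (d + 1))) q
      with hA
    have hAv : ∀ q, A q = ((fun j : Fin l => q.1 j.succ,
        (1 + q.1 0) • (ω : EuclideanSpace ℝ (Fin (d + 1)))), q.2) := by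
      intro q
      simp only [hA, sliceA_apply, add_smul, one_smul]
      simp
    have hAs : ContDiff ℝ 1 A := contDiff_const.add (sliceA _).contDiff
    have hAball : ∀ q : (Fin (l + 1) → ℝ) × ℝ, q.1 ∈ ball (0 : Fin (l + 1) → ℝ) 1 →
        (A q).1 ∈ ball (0 : MSp l d) 3 := by
      intro q hq
      rw [mem_ball_zero_iff] at hq ⊢
      rw [hAv, Prod.norm_def]
      refine max_lt ?_ ?_
      · refine lt_of_le_of_lt ?_ (show (1 : ℝ) < 3 by norm_num)
        rw [pi_norm_le_iff_of_nonneg zero_le_one]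
        exact fun j => (norm_le_pi_norm q.1 _).trans hq.le
      · simp only [norm_smul, hω, mul_one]
        have h1 := (norm_le_pi_norm q.1 0).trans hq.le
        have h2 := norm_add_le (1 : ℝ) (q.1 0)
        rw [norm_one] at h2
        linarith
    have hA2 : ∀ q, (A q).2 = q.2 := fun q => by rw [hAv]
    have h1 := slice_lower hp hf hδ (U := fun q => U (A q))
      (hUc.comp hAs.continuous.continuousOn fun q hq => ⟨hAball q hq.1, by rw [hA2]; exact hq.2⟩)
      (hUd.comp hAs.contDiffOn fun q hq => ⟨hAball q hq.1, by rw [hA2]; exact hq.2⟩)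
      (fun q hq => hUN ⟨hAball q hq.1, by rw [hA2]; exact hq.2⟩)
      (by
        intro X hX
        have hb := hAball (X, 0) hX
        have e : A (X, 0) = ((A (X, 0)).1, 0) := by
          rw [Prod.ext_iff]; exact ⟨rfl, hA2 _⟩
        rw [e, hU0 _ hb, hAv, vmap]
        congr 2
        rw [mem_ball_zero_iff] at hX
        have h0 := (norm_le_pi_norm X 0).trans_lt hX
        rw [Real.norm_eq_abs, abs_lt] at h0
        funext i
        refine Fin.cases ?_ (fun j => ?_) i
        · simp only [kmap, Fin.cons_zero, norm_smul, hω, mul_one]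
          rw [Real.norm_of_nonneg (by linarith)]; ring
        · simp only [kmap, Fin.cons_succ])
    refine h1.trans ?_
    rw [mul_assoc]
    refine mul_le_mul_right ?_ c
    set S' := ball (0 : Fin (l + 1) → ℝ) (1 / 2) ×ˢ Ioo (0 : ℝ) (1 / 2) with hS'
    have hS'm : MeasurableSet S' := measurableSet_ball.prod measurableSet_Ioo
    have hAm : Measurable A := hAs.continuous.measurable
    set M' : (Fin (l + 1) → ℝ) → ℝ≥0∞ := (ball (0 : Fin (l + 1) → ℝ) (1 / 2)).indicator
      (fun X => M (A (X, 0)).1) with hM'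
    have hM'm : Measurable M' := by
      refine Measurable.indicator ?_ measurableSet_ball
      exact hMm.comp (measurable_fst.comp (hAm.comp (by fun_prop)))
    have h2 : ∫⁻ q in S', ‖fderiv ℝ (fun q => U (A q)) q‖ₑ ^ p ≤ ∫⁻ X, M' X := by
      calc ∫⁻ q in S', ‖fderiv ℝ (fun q => U (A q)) q‖ₑ ^ p
          ≤ ∫⁻ q in S', K (A q) := by
            refine setLIntegral_mono' hS'm fun q hq => ?_
            have hq1 : q.1 ∈ ball (0 : Fin (l + 1) → ℝ) 1 := ball_subset_ball (by norm_num) hq.1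
            have hAS : A q ∈ S := ⟨hAball q hq1, by
              rw [hA2]; exact ⟨hq.2.1, hq.2.2.trans (by norm_num)⟩⟩
            rw [hK, indicator_of_mem hAS]
            simp only [hG]
            gcongr
            have dU : HasFDerivAt U (fderiv ℝ U (A q)) (A q) :=
              ((hUd.contDiffAt (hSo.mem_nhds hAS)).differentiableAt (by simp)).hasFDerivAt
            have dA : HasFDerivAt A (sliceA (ω : EuclideanSpace ℝ (Fin (d + 1)))) q :=
              (sliceA _).hasFDerivAt.const_add _
            have dUA : HasFDerivAt (fun q => U (A q)) _ q := dU.comp q dA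
            rw [dUA.fderiv, ← ofReal_norm, ← ofReal_norm]
            apply ENNReal.ofReal_le_ofReal
            refine (ContinuousLinearMap.opNorm_comp_le _ _).trans ?_
            have := norm_sliceA_le (l := l) hω
            nlinarith [norm_nonneg (fderiv ℝ U (A q))]
        _ = ∫⁻ q, S'.indicator (fun q => K (A q)) q := (lintegral_indicator hS'm _).symm
        _ = ∫⁻ X, ∫⁻ t, S'.indicator (fun q => K (A q)) (X, t) := by
            rw [Measure.volume_eq_prod, lintegral_prod]
            exact ((hKm.comp hAm).indicator hS'm).aemeasurable
        _ ≤ ∫⁻ X, M' X := by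
            refine lintegral_mono fun X => ?_
            by_cases hX : X ∈ ball (0 : Fin (l + 1) → ℝ) (1 / 2)
            · simp only [hM']
              rw [indicator_of_mem hX]
              simp only [hM]
              refine lintegral_mono fun t => ?_
              refine (indicator_le_self _ _ _).trans_eq ?_
              rw [hAv, hAv]
            · have : ∀ t, S'.indicator (fun q => K (A q)) (X, t) = 0 := fun t =>
                indicator_of_notMem (fun h => hX h.1) _
              simp [this]
    refine h2.trans ?_
    rw [lintegral_cons hM'm, ← lintegral_const_mul' _ _ ENNReal.ofReal_ne_top]
    refine lintegral_mono fun z => ?_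
    simp only
    rw [← lintegral_const_mul' _ _ ENNReal.ofReal_ne_top,
      ← lintegral_sub_right_eq_self (fun s : ℝ => M' (Fin.cons s z)) 1,
      ← lintegral_indicator measurableSet_Ioi]
    refine lintegral_mono fun ρ => ?_
    simp only
    by_cases hX : (Fin.cons (ρ - 1) z : Fin (l + 1) → ℝ) ∈ ball (0 : Fin (l + 1) → ℝ) (1 / 2)
    · have h0 := (norm_le_pi_norm (Fin.cons (ρ - 1) z : Fin (l + 1) → ℝ) 0).trans_lt
        (mem_ball_zero_iff.1 hX)
      rw [Fin.cons_zero, Real.norm_eq_abs, abs_lt] at h0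
      have hρ : ρ ∈ Ioi (0 : ℝ) := by simp only [mem_Ioi]; linarith
      rw [hM', indicator_of_mem hX, indicator_of_mem hρ, hAv]
      simp only [Fin.cons_succ, Fin.cons_zero, add_sub_cancel]
      rw [← mul_assoc, ← ENNReal.ofReal_mul (by positivity), ← mul_pow]
      refine le_mul_of_one_le_left (by positivity) ?_
      rw [ENNReal.one_le_ofReal]
      exact one_le_pow₀ (by linarith)
    · rw [hM', indicator_of_notMem hX]
      exact zero_le
  have hmpol : Measurable (fun q : sphere (0 : EuclideanSpace ℝ (Fin (d + 1))) 1 × (Fin l → ℝ) =>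
      ∫⁻ ρ in Ioi (0 : ℝ), ENNReal.ofReal (ρ ^ d) *
        M (q.2, ρ • (q.1 : EuclideanSpace ℝ (Fin (d + 1))))) := by
    apply Measurable.lintegral_prod_right'
      (f := fun w : (sphere (0 : EuclideanSpace ℝ (Fin (d + 1))) 1 × (Fin l → ℝ)) × ℝ =>
        ENNReal.ofReal (w.2 ^ d) * M (w.1.2, w.2 • (w.1.1 : EuclideanSpace ℝ (Fin (d + 1)))))
    refine Measurable.mul (by fun_prop) (hMm.comp ?_)
    refine (measurable_snd.comp measurable_fst).prodMk ?_
    exact measurable_snd.smul (measurable_subtype_coe.comp (measurable_fst.comp measurable_fst))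
  have hcc : c * ENNReal.ofReal (2 ^ d) ≠ ⊤ := ENNReal.mul_ne_top hct ENNReal.ofReal_ne_top
  calc σ univ * (T * I) = ∫⁻ _ω, (T * I) ∂σ := by rw [lintegral_const]; ring
    _ ≤ ∫⁻ ω, ((c * ENNReal.ofReal (2 ^ d)) * ∫⁻ z, ∫⁻ ρ in Ioi (0 : ℝ), ENNReal.ofReal (ρ ^ d) *
        M (z, ρ • (ω : EuclideanSpace ℝ (Fin (d + 1))))) ∂σ := lintegral_mono hstep
    _ = (c * ENNReal.ofReal (2 ^ d)) * ∫⁻ ω, (∫⁻ z, ∫⁻ ρ in Ioi (0 : ℝ), ENNReal.ofReal (ρ ^ d) *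
        M (z, ρ • (ω : EuclideanSpace ℝ (Fin (d + 1))))) ∂σ := lintegral_const_mul' _ _ hcc
    _ = (c * ENNReal.ofReal (2 ^ d)) * ∫⁻ z, (∫⁻ ω, (∫⁻ ρ in Ioi (0 : ℝ), ENNReal.ofReal (ρ ^ d) *
        M (z, ρ • (ω : EuclideanSpace ℝ (Fin (d + 1))))) ∂σ) := by
        rw [lintegral_lintegral_swap hmpol.aemeasurable]
    _ = (c * ENNReal.ofReal (2 ^ d)) * ∫⁻ z, ∫⁻ y, M (z, y) := by
        congr 2
        ext z
        rw [lintegral_polar (F := fun y => M (z, y)) (hMm.comp (by fun_prop))]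
    _ = (c * ENNReal.ofReal (2 ^ d)) * ∫⁻ x, M x := by
        rw [Measure.volume_eq_prod, lintegral_prod _ hMm.aemeasurable]
    _ = (c * ENNReal.ofReal (2 ^ d)) * ∫⁻ z, K z := by
        congr 1
        exact (lintegral_prod _ hKm.aemeasurable).symm
    _ = _ := by rw [hK, lintegral_indicator hSm]

lemma lintegral_clequiv {E F : Type*} [NormedAddCommGroup E] [NormedSpace ℝ E]
    [FiniteDimensional ℝ E] [MeasureSpace E] [BorelSpace E]
    [NormedAddCommGroup F] [NormedSpace ℝ F] [FiniteDimensional ℝ F] [MeasureSpace F] [BorelSpace F]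
    (hE : (volume : Measure E).IsAddHaarMeasure) (hF : (volume : Measure F).IsAddHaarMeasure)
    (g : E ≃L[ℝ] F) : ∃ c : ℝ≥0∞, c ≠ ⊤ ∧ ∀ φ : F → ℝ≥0∞, Measurable φ →
      ∫⁻ x, φ (g x) = c * ∫⁻ y, φ y := by
  have : (Measure.map g (volume : Measure E)).IsAddHaarMeasure := g.isAddHaarMeasure_map _
  refine ⟨(Measure.map g (volume : Measure E)).addHaarScalarFactor volume,
    ENNReal.coe_ne_top, fun φ hφ => ?_⟩
  have h := Measure.isAddLeftInvariant_eq_smul (Measure.map g (volume : Measure E))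
    (volume : Measure F)
  rw [← lintegral_map hφ g.continuous.measurable]
  conv_lhs => rw [h]
  rw [lintegral_smul_measure]
  rfl

lemma cell_bounds {ν l d n : ℕ} {N : Set (EuclideanSpace ℝ (Fin ν))}
    {b : EuclideanSpace ℝ (Fin ν)} (hc : IsCompact N) (P : TPkg N b) {p : ℝ} (hp : 1 < p)
    (hn : n = l + (d + 1)) :
    ∃ (R0 C1 Q : ℝ), 0 < R0 ∧ 0 < C1 ∧ 0 < Q ∧
      ∀ (C T : ℝ≥0∞) (f : (Fin (l + 1) → ℝ) → EuclideanSpace ℝ (Fin ν)), Obs P p C T f →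
      ∀ E : ℝ, 0 < E → energy p f ≤ ENNReal.ofReal E → ∀ δ : ℝ, 0 < δ → δ ≤ 1 / 2 →
      ∃ v : EuclideanSpace ℝ (Fin n) → EuclideanSpace ℝ (Fin ν),
        ContDiff ℝ (⊤ : ℕ∞) v ∧ (∀ x, v x ∈ N) ∧ (∀ x, R0 ≤ ‖x‖ → v x = b) ∧
        (∫⁻ x, ∫⁻ y, ENNReal.ofReal (‖v y - v x‖ ^ p / ‖y - x‖ ^ ((n : ℝ) + p - 1)) ≤
          ENNReal.ofReal (C1 * δ ^ (((l + 1 : ℕ) : ℝ) + 1 - p) * E ^ (1 - 1 / p))) ∧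
        ∀ U : EuclideanSpace ℝ (Fin n) × ℝ → EuclideanSpace ℝ (Fin ν),
          ContinuousOn U (ball 0 R0 ×ˢ Ico (0 : ℝ) 1) →
          ContDiffOn ℝ 1 U (ball 0 R0 ×ˢ Ioo (0 : ℝ) 1) →
          MapsTo U (ball 0 R0 ×ˢ Ico (0 : ℝ) 1) N →
          (∀ x ∈ ball (0 : EuclideanSpace ℝ (Fin n)) R0, U (x, 0) = v x) →
          T * (∫⁻ r in Ioo ((((l + 1 : ℕ) : ℝ) + 1) * δ) (1 / 4),
            ENNReal.ofReal (r ^ (((l + 1 : ℕ) : ℝ) - p))) ≤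
          ENNReal.ofReal Q * ∫⁻ z in ball (0 : EuclideanSpace ℝ (Fin n)) R0 ×ˢ Ioo (0 : ℝ) 1,
            ‖fderiv ℝ U z‖ₑ ^ p := by
  have hp0 : 0 < p := by linarith
  have hfr : Module.finrank ℝ (EuclideanSpace ℝ (Fin n)) = Module.finrank ℝ (MSp l d) := by
    rw [Module.finrank_prod, finrank_euclideanSpace_fin, finrank_euclideanSpace_fin,
      Module.finrank_fin_fun, hn]
  let g : EuclideanSpace ℝ (Fin n) ≃L[ℝ] MSp l d := ContinuousLinearEquiv.ofFinrankEq hfr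
  have hH1 : (volume : Measure (EuclideanSpace ℝ (Fin n))).IsAddHaarMeasure := inferInstance
  have hH20 : (volume : Measure (Fin l → ℝ)).IsAddHaarMeasure := isAddHaarMeasure_volume_pi _
  have hH2 : (volume : Measure (MSp l d)).IsAddHaarMeasure :=
    Measure.prod.instIsAddHaarMeasure _ _
  have hH3 : (volume : Measure (MSp l d × ℝ)).IsAddHaarMeasure :=
    Measure.prod.instIsAddHaarMeasure _ _
  have hH4 : (volume : Measure (EuclideanSpace ℝ (Fin n) × ℝ)).IsAddHaarMeasure := by
    rw [Measure.volume_eq_prod]; infer_instance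
  obtain ⟨c1, hc1, hg1⟩ := lintegral_clequiv hH1 hH2 g
  let q : (MSp l d × ℝ) ≃L[ℝ] (EuclideanSpace ℝ (Fin n) × ℝ) :=
    g.symm.prodCongr (ContinuousLinearEquiv.refl ℝ ℝ)
  have hq : ∀ z, q z = (g.symm z.1, z.2) := fun z => rfl
  obtain ⟨c2, hc2, hg2⟩ := lintegral_clequiv hH3 hH4 q
  obtain ⟨D, hD⟩ : ∃ D : ℝ, ∀ x ∈ N, ‖x - b‖ ≤ D := by
    obtain ⟨D, hD⟩ := (hc.image (f := fun x => x - b) (by fun_prop)).isBounded.exists_norm_le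
    exact ⟨D, fun x hx => hD _ ⟨x, hx, rfl⟩⟩
  set σ := (volume : Measure (EuclideanSpace ℝ (Fin (d + 1)))).toSphere univ with hσ
  have hσt : σ ≠ ⊤ := measure_ne_top _ _
  have hσ0 : σ ≠ 0 := by
    rw [hσ, Ne, Measure.measure_univ_eq_zero]
    exact Measure.toSphere_ne_zero _
  -- change of variables
  set CC : ℝ≥0∞ := c1 * (σ * ENNReal.ofReal (2 ^ d)) with hCC
  have hCCt : CC ≠ ⊤ := ENNReal.mul_ne_top hc1 (ENNReal.mul_ne_top hσt ENNReal.ofReal_ne_top)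
  have hco : ∀ (F : (Fin (l + 1) → ℝ) → ℝ≥0∞), Measurable F → (∀ X, 1 < ‖X‖ → F X = 0) →
      ∀ δ : ℝ, 0 < δ → δ ≤ 1 / 2 → ∫⁻ x, F (δ⁻¹ • kmap (g x)) ≤
        CC * (ENNReal.ofReal (δ ^ ((l + 1 : ℕ) : ℝ)) * ∫⁻ X, F X) := by
    intro F hF hF0 δ hδ hδ1
    have hk : Measurable (kmap (l := l) (d := d)) := kmap_lip.continuous.measurable
    have hm : Measurable (fun x : MSp l d => F (δ⁻¹ • kmap x)) := by
      refine hF.comp ?_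
      exact hk.const_smul δ⁻¹
    rw [hg1 _ hm, hCC, mul_assoc]
    refine mul_le_mul_right ?_ c1
    exact coarea_upper hF hF0 hδ (by linarith)
  -- constants
  set KA : ℝ≥0∞ := (2 * ENNReal.ofReal D) ^ p * (2 * (CC * volume (ball (0 : Fin (l + 1) → ℝ) 1)))
    with hKA
  have hKAt : KA ≠ ⊤ := by
    refine ENNReal.mul_ne_top (ENNReal.rpow_ne_top_of_nonneg hp0.le ?_) ?_
    · exact ENNReal.mul_ne_top (by simp) ENNReal.ofReal_ne_top
    · exact ENNReal.mul_ne_top (by simp) (ENNReal.mul_ne_top hCCt measure_ball_lt_top.ne)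
  set a : ℝ := KA.toReal + 1 with ha
  have ha0 : 0 < a := by have := ENNReal.toReal_nonneg (a := KA); linarith
  have haK : KA ≤ ENNReal.ofReal a := by
    rw [← ENNReal.ofReal_toReal hKAt]
    exact ENNReal.ofReal_le_ofReal (by linarith)
  set β : ℝ := ‖(g : EuclideanSpace ℝ (Fin n) →L[ℝ] MSp l d)‖ ^ p * CC.toReal + 1 with hβ
  have hβ0 : 0 < β := by positivity
  set J : ℝ := (∫⁻ h, ENNReal.ofReal (gker n p h)).toReal + 1 with hJ
  have hJ0 : 0 < J := by positivity
  have hJle : ∫⁻ h, ENNReal.ofReal (gker n p h) ≤ ENNReal.ofReal J := by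
    rw [← ENNReal.ofReal_toReal (gker_finite (n := n) (by omega) hp).ne]
    exact ENNReal.ofReal_le_ofReal (by linarith)
  set QQ : ℝ≥0∞ := (ENNReal.ofReal (P.L * ((l + 1 : ℕ) + 1)) ^ p * ENNReal.ofReal (2 ^ d)) *
    (‖(q : MSp l d × ℝ →L[ℝ] EuclideanSpace ℝ (Fin n) × ℝ)‖ₑ ^ p * c2) with hQQ
  have hQQt : QQ ≠ ⊤ := by
    refine ENNReal.mul_ne_top (ENNReal.mul_ne_top (ENNReal.rpow_ne_top_of_nonneg hp0.le
      ENNReal.ofReal_ne_top) ENNReal.ofReal_ne_top) (ENNReal.mul_ne_top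
      (ENNReal.rpow_ne_top_of_nonneg hp0.le enorm_ne_top) hc2)
  set R0 : ℝ := 3 * ‖(g.symm : MSp l d →L[ℝ] EuclideanSpace ℝ (Fin n))‖ + 1 with hR0
  have hR : ∀ x : MSp l d, ‖x‖ < 3 → ‖g.symm x‖ < R0 := by
    intro x hx
    have h1 := (g.symm : MSp l d →L[ℝ] EuclideanSpace ℝ (Fin n)).le_opNorm x
    have h2 := norm_nonneg (g.symm : MSp l d →L[ℝ] EuclideanSpace ℝ (Fin n))
    have h3 : ‖g.symm x‖ ≤ ‖(g.symm : MSp l d →L[ℝ] EuclideanSpace ℝ (Fin n))‖ * ‖x‖ := h1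
    nlinarith
  refine ⟨R0, J * (a ^ (1 / p) * β ^ (1 - 1 / p)), (QQ / σ).toReal + 1, by positivity,
    by positivity, by positivity, ?_⟩
  intro C T f hf E hE hfE δ hδ hδ1
  have hfs1 : ContDiff ℝ 1 f := hf.smooth.of_le (by exact_mod_cast le_top)
  have hvs : ContDiff ℝ (⊤ : ℕ∞) (fun x : EuclideanSpace ℝ (Fin n) => vmap δ f (g x)) :=
    (contDiff_vmap hf.gadm hf.smooth hδ hδ1).comp g.contDiff
  have hvs1 : ContDiff ℝ 1 (fun x : EuclideanSpace ℝ (Fin n) => vmap δ f (g x)) :=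
    hvs.of_le (by exact_mod_cast le_top)
  refine ⟨fun x => vmap δ f (g x), hvs, fun x => hf.gadm.maps _, ?_, ?_, ?_⟩
  · intro x hx
    apply vmap_far hf.gadm hδ hδ1
    by_contra h
    have := hR (g x) (by linarith)
    rw [ContinuousLinearEquiv.symm_apply_apply] at this
    linarith
  · have hAB := gagliardo_le (n := n) (by omega) hp hvs1
      (A := a * δ ^ ((l + 1 : ℕ) : ℝ)) (B := β * (δ ^ (((l + 1 : ℕ) : ℝ) - p) * E))
      (by positivity) (by positivity) ?_ ?_
    · refine hAB.trans ?_
      refine (mul_le_mul_left hJle _).trans ?_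
      rw [← ENNReal.ofReal_mul hJ0.le]
      apply ENNReal.ofReal_le_ofReal
      apply le_of_eq
      rw [Real.mul_rpow ha0.le (by positivity), Real.mul_rpow hβ0.le (by positivity),
        Real.mul_rpow (by positivity) hE.le, ← Real.rpow_mul hδ.le, ← Real.rpow_mul hδ.le]
      have e : δ ^ (((l + 1 : ℕ) : ℝ) + 1 - p) = δ ^ (((l + 1 : ℕ) : ℝ) * (1 / p)) *
          δ ^ ((((l + 1 : ℕ) : ℝ) - p) * (1 - 1 / p)) := by
        rw [← Real.rpow_add hδ]
        congr 1
        field_simp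
        ring
      rw [e]
      ring
    · intro h
      set S : Set (EuclideanSpace ℝ (Fin n)) := {x | ‖δ⁻¹ • kmap (g x)‖ < 1} with hS
      have hkc : Continuous (kmap (l := l) (d := d)) := kmap_lip.continuous
      have hSo : IsOpen S := isOpen_lt (by fun_prop) continuous_const
      have h1 := translate_diff_le2 hp (φ := fun x => vmap δ f (g x) - b) (M := ENNReal.ofReal D)
        (fun x => by
          rw [← ofReal_norm]
          exact ENNReal.ofReal_le_ofReal (hD _ (hf.gadm.maps _)))
        hSo.measurableSet (fun x hx => by
          rw [sub_eq_zero]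
          exact hf.gadm.bdry _ (not_lt.1 hx)) h
      simp only [sub_sub_sub_cancel_right] at h1
      refine h1.trans ?_
      have h2 : volume S ≤ CC * (ENNReal.ofReal (δ ^ ((l + 1 : ℕ) : ℝ)) *
          volume (ball (0 : Fin (l + 1) → ℝ) 1)) := by
        have h3 := hco ((ball (0 : Fin (l + 1) → ℝ) 1).indicator 1)
          (measurable_one.indicator measurableSet_ball) (fun X hX => by
            apply indicator_of_notMem
            rw [mem_ball_zero_iff]; linarith) δ hδ hδ1
        rw [lintegral_indicator_one measurableSet_ball] at h3
        refine le_trans (le_of_eq ?_) h3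
        rw [← lintegral_indicator_one hSo.measurableSet]
        refine lintegral_congr fun x => ?_
        simp only [indicator, hS, mem_ofPred_eq, mem_ball_zero_iff, Pi.one_apply]
      calc _ ≤ (2 * ENNReal.ofReal D) ^ p * (2 * (CC * (ENNReal.ofReal (δ ^ ((l + 1 : ℕ) : ℝ)) *
          volume (ball (0 : Fin (l + 1) → ℝ) 1)))) := by gcongr
        _ = KA * ENNReal.ofReal (δ ^ ((l + 1 : ℕ) : ℝ)) := by rw [hKA]; ring
        _ ≤ ENNReal.ofReal a * ENNReal.ofReal (δ ^ ((l + 1 : ℕ) : ℝ)) := by gcongr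
        _ = _ := (ENNReal.ofReal_mul ha0.le).symm
    · have hFm : Measurable (fun X : Fin (l + 1) → ℝ => ‖fderiv ℝ f X‖ₑ ^ p) :=
        ((measurable_fderiv ℝ f).enorm).pow_const p
      have h3 := hco (fun X => ‖fderiv ℝ f X‖ₑ ^ p) hFm (fun X hX => by
        have hev : f =ᶠ[𝓝 X] fun _ => b := by
          have : ∀ᶠ X' in 𝓝 X, 1 < ‖X'‖ :=
            continuous_norm.continuousAt.eventually (lt_mem_nhds hX)
          filter_upwards [this] with X' hX'
          exact hf.gadm.bdry _ hX'.le
        have h0 : ‖fderiv ℝ f X‖ₑ = 0 := by rw [← ofReal_norm, hev.fderiv_eq]; simp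
        rw [h0, ENNReal.zero_rpow_of_pos hp0]) δ hδ hδ1
      calc ∫⁻ x, ‖fderiv ℝ (fun x : EuclideanSpace ℝ (Fin n) => vmap δ f (g x)) x‖ₑ ^ p
          ≤ ∫⁻ x, ENNReal.ofReal ((δ⁻¹ * ‖(g : EuclideanSpace ℝ (Fin n) →L[ℝ] MSp l d)‖) ^ p) *
            ‖fderiv ℝ f (δ⁻¹ • kmap (g x))‖ₑ ^ p := by
            refine lintegral_mono fun x => ?_
            rw [← ENNReal.ofReal_rpow_of_nonneg (by positivity) hp0.le,
              ← ENNReal.mul_rpow_of_nonneg _ _ hp0.le]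
            gcongr
            have dv : HasFDerivAt (vmap δ f) (fderiv ℝ (vmap δ f) (g x)) (g x) :=
              ((contDiff_vmap hf.gadm hf.smooth hδ hδ1).differentiable (by simp) _).hasFDerivAt
            have dvg : HasFDerivAt (fun x : EuclideanSpace ℝ (Fin n) => vmap δ f (g x)) _ x :=
              dv.comp x g.hasFDerivAt
            rw [dvg.fderiv, ← ofReal_norm, ← ofReal_norm, ← ENNReal.ofReal_mul (by positivity)]
            apply ENNReal.ofReal_le_ofReal
            refine (ContinuousLinearMap.opNorm_comp_le _ _).trans ?_
            calc _ ≤ (δ⁻¹ * ‖fderiv ℝ f (δ⁻¹ • kmap (g x))‖) *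
                  ‖(g : EuclideanSpace ℝ (Fin n) →L[ℝ] MSp l d)‖ := by
                  gcongr
                  exact fderiv_vmap_le hf.gadm hf.smooth hδ hδ1 _
              _ = _ := by ring
        _ = ENNReal.ofReal ((δ⁻¹ * ‖(g : EuclideanSpace ℝ (Fin n) →L[ℝ] MSp l d)‖) ^ p) *
            ∫⁻ x, ‖fderiv ℝ f (δ⁻¹ • kmap (g x))‖ₑ ^ p :=
            lintegral_const_mul' _ _ ENNReal.ofReal_ne_top
        _ ≤ ENNReal.ofReal ((δ⁻¹ * ‖(g : EuclideanSpace ℝ (Fin n) →L[ℝ] MSp l d)‖) ^ p) *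
            (CC * (ENNReal.ofReal (δ ^ ((l + 1 : ℕ) : ℝ)) * ENNReal.ofReal E)) := by
            refine mul_le_mul_right (h3.trans ?_) _
            refine mul_le_mul_right ?_ _
            exact mul_le_mul_right hfE _
        _ ≤ _ := by
            rw [← ENNReal.ofReal_toReal hCCt, ← ENNReal.ofReal_mul (by positivity),
              ← ENNReal.ofReal_mul (by positivity), ← ENNReal.ofReal_mul (by positivity)]
            apply ENNReal.ofReal_le_ofReal
            rw [Real.mul_rpow (by positivity) (by positivity), Real.inv_rpow hδ.le,
              Real.rpow_sub hδ]
            have h5 : 0 < δ ^ ((l + 1 : ℕ) : ℝ) / δ ^ p * E := by positivity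
            calc _ = (‖(g : EuclideanSpace ℝ (Fin n) →L[ℝ] MSp l d)‖ ^ p * CC.toReal) *
                  (δ ^ ((l + 1 : ℕ) : ℝ) / δ ^ p * E) := by field_simp
              _ ≤ _ := by gcongr; linarith
  · intro U hUc hUd hUN hU0
    have hqin : ∀ z : MSp l d × ℝ, z.1 ∈ ball (0 : MSp l d) 3 →
        (q z).1 ∈ ball (0 : EuclideanSpace ℝ (Fin n)) R0 := by
      intro z hz
      rw [mem_ball_zero_iff] at hz ⊢
      exact hR _ hz
    have h1 := model_lower hp hf hδ (U := fun z => U (q z))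
      (hUc.comp q.continuous.continuousOn fun z hz => ⟨hqin z hz.1, hz.2⟩)
      (hUd.comp q.contDiff.contDiffOn fun z hz => ⟨hqin z hz.1, hz.2⟩)
      (fun z hz => hUN ⟨hqin z hz.1, hz.2⟩)
      (fun x hx => by
        have := hU0 _ (hqin (x, 0) hx)
        rw [hq] at this ⊢
        rw [this]
        simp only [ContinuousLinearEquiv.apply_symm_apply])
    set W := ball (0 : EuclideanSpace ℝ (Fin n)) R0 ×ˢ Ioo (0 : ℝ) 1 with hW
    have hWo : IsOpen W := isOpen_ball.prod isOpen_Ioo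
    set G : EuclideanSpace ℝ (Fin n) × ℝ → ℝ≥0∞ := fun z => ‖fderiv ℝ U z‖ₑ ^ p with hG
    have hGm : Measurable G := ((measurable_fderiv ℝ U).enorm).pow_const p
    have h2 : ∫⁻ z in ball (0 : MSp l d) 3 ×ˢ Ioo (0 : ℝ) 1,
        ‖fderiv ℝ (fun z => U (q z)) z‖ₑ ^ p ≤
        (‖(q : MSp l d × ℝ →L[ℝ] EuclideanSpace ℝ (Fin n) × ℝ)‖ₑ ^ p * c2) * ∫⁻ z in W, G z := by
      have hSm : MeasurableSet (ball (0 : MSp l d) 3 ×ˢ Ioo (0 : ℝ) 1) :=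
        measurableSet_ball.prod measurableSet_Ioo
      calc _ ≤ ∫⁻ z in ball (0 : MSp l d) 3 ×ˢ Ioo (0 : ℝ) 1,
            ‖(q : MSp l d × ℝ →L[ℝ] EuclideanSpace ℝ (Fin n) × ℝ)‖ₑ ^ p *
              W.indicator G (q z) := by
            refine setLIntegral_mono' hSm fun z hz => ?_
            have hzW : q z ∈ W := ⟨hqin z hz.1, hz.2⟩
            rw [indicator_of_mem hzW]
            simp only [hG]
            rw [← ENNReal.mul_rpow_of_nonneg _ _ hp0.le]
            gcongr
            have dU : HasFDerivAt U (fderiv ℝ U (q z)) (q z) :=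
              ((hUd.contDiffAt (hWo.mem_nhds hzW)).differentiableAt (by simp)).hasFDerivAt
            have dUq : HasFDerivAt (fun z => U (q z)) _ z := dU.comp z q.hasFDerivAt
            rw [dUq.fderiv, ← ofReal_norm, ← ofReal_norm, ← ofReal_norm,
              ← ENNReal.ofReal_mul (by positivity)]
            apply ENNReal.ofReal_le_ofReal
            refine (ContinuousLinearMap.opNorm_comp_le _ _).trans ?_
            rw [mul_comm]
        _ ≤ ∫⁻ z, ‖(q : MSp l d × ℝ →L[ℝ] EuclideanSpace ℝ (Fin n) × ℝ)‖ₑ ^ p *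
              W.indicator G (q z) := setLIntegral_le_lintegral _ _
        _ = _ := by
            rw [lintegral_const_mul' _ _ (ENNReal.rpow_ne_top_of_nonneg hp0.le enorm_ne_top),
              hg2 _ (hGm.indicator hWo.measurableSet), lintegral_indicator hWo.measurableSet,
              mul_assoc]
    have h3 := (h1.trans (mul_le_mul_right h2 _)).trans_eq
      (show _ = QQ * ∫⁻ z in W, G z by rw [hQQ]; simp only [mul_assoc])
    have h4 : QQ / σ ≤ ENNReal.ofReal ((QQ / σ).toReal + 1) := by
      have ht : QQ / σ ≠ ⊤ := ENNReal.div_ne_top hQQt hσ0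
      conv_lhs => rw [← ENNReal.ofReal_toReal ht]
      exact ENNReal.ofReal_le_ofReal (by linarith)
    refine le_trans ?_ (mul_le_mul_left h4 _)
    rw [ENNReal.div_eq_inv_mul, mul_assoc, ← ENNReal.div_eq_inv_mul,
      ENNReal.le_div_iff_mul_le (Or.inl hσ0) (Or.inl hσt), mul_comm]
    exact h3

lemma log_lower {A : ℝ} (hA : 0 ≤ A) :
    ENNReal.ofReal A ≤ ∫⁻ r in Ioo (Real.exp (-A) / 4) (1 / 4), ENNReal.ofReal (r ^ (-1 : ℝ)) := by
  have ha : 0 < Real.exp (-A) / 4 := by positivity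
  have hab : Real.exp (-A) / 4 ≤ 1 / 4 := by
    have := Real.exp_le_one_iff.2 (neg_nonpos.2 hA)
    linarith
  have hI : IntegrableOn (fun r : ℝ => r⁻¹) (Ioc (Real.exp (-A) / 4) (1 / 4)) := by
    have : IntervalIntegrable (fun r : ℝ => r⁻¹) volume (Real.exp (-A) / 4) (1 / 4) := by
      apply intervalIntegral.intervalIntegrable_inv
      · intro x hx
        rw [uIcc_of_le hab] at hx
        exact (ha.trans_le hx.1).ne'
      · exact continuousOn_id
    exact this.1
  have h1 := integral_inv_of_pos ha (by norm_num : (0 : ℝ) < 1 / 4)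
  rw [intervalIntegral.integral_of_le hab] at h1
  have h2 : Real.log (1 / 4 / (Real.exp (-A) / 4)) = A := by
    rw [show (1 : ℝ) / 4 / (Real.exp (-A) / 4) = Real.exp A by
      rw [Real.exp_neg]; field_simp]
    exact Real.log_exp A
  rw [h2] at h1
  have hnn : 0 ≤ᵐ[volume.restrict (Ioc (Real.exp (-A) / 4) (1 / 4))] fun r : ℝ => r⁻¹ := by
    refine (ae_restrict_iff' measurableSet_Ioc).2 (ae_of_all _ fun r hr => ?_)
    exact inv_nonneg.2 (ha.trans hr.1).le
  have h3 := ofReal_integral_eq_lintegral_ofReal hI hnn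
  rw [h1] at h3
  rw [h3, Measure.restrict_congr_set Ioo_ae_eq_Ioc]
  refine le_of_eq (lintegral_congr fun r => ?_)
  rw [Real.rpow_neg_one]

lemma pow_lower {q : ℝ} (hq : q ≤ 0) :
    ENNReal.ofReal (1 / 8) ≤ ∫⁻ r in Ioo (1 / 8 : ℝ) (1 / 4), ENNReal.ofReal (r ^ q) := by
  calc ENNReal.ofReal (1 / 8) = ∫⁻ r in Ioo (1 / 8 : ℝ) (1 / 4), 1 := by
        rw [lintegral_one, Measure.restrict_apply_univ, Real.volume_Ioo]; norm_num
    _ ≤ _ := by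
        refine setLIntegral_mono' measurableSet_Ioo fun r hr => ?_
        rw [← ENNReal.ofReal_one]
        refine ENNReal.ofReal_le_ofReal ?_
        exact Real.one_le_rpow_of_pos_of_le_one_of_nonpos (by linarith [hr.1]) (by linarith [hr.2]) hq

/-- The elementary building block. -/
def Cell {ν n : ℕ} (N : Set (EuclideanSpace ℝ (Fin ν))) (b : EuclideanSpace ℝ (Fin ν)) (p R0 K X : ℝ)
    (v : EuclideanSpace ℝ (Fin n) → EuclideanSpace ℝ (Fin ν)) : Prop :=
  1 ≤ X ∧ ContDiff ℝ (⊤ : ℕ∞) v ∧ (∀ x, v x ∈ N) ∧ (∀ x, R0 ≤ ‖x‖ → v x = b) ∧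
  (∫⁻ x, ∫⁻ y, ENNReal.ofReal (‖v y - v x‖ ^ p / ‖y - x‖ ^ ((n : ℝ) + p - 1)) ≤
    ENNReal.ofReal X) ∧
  ∀ U : EuclideanSpace ℝ (Fin n) × ℝ → EuclideanSpace ℝ (Fin ν),
    ContinuousOn U (ball 0 R0 ×ˢ Ico (0 : ℝ) 1) →
    ContDiffOn ℝ 1 U (ball 0 R0 ×ˢ Ioo (0 : ℝ) 1) →
    MapsTo U (ball 0 R0 ×ˢ Ico (0 : ℝ) 1) N →
    (∀ x ∈ ball (0 : EuclideanSpace ℝ (Fin n)) R0, U (x, 0) = v x) →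
    ENNReal.ofReal (K * X) ≤ ∫⁻ z in ball (0 : EuclideanSpace ℝ (Fin n)) R0 ×ˢ Ioo (0 : ℝ) 1,
      ‖fderiv ℝ U z‖ₑ ^ p

lemma cancel_Q {Q Y : ℝ} (hQ : 0 < Q) {A B : ℝ≥0∞} (h1 : ENNReal.ofReal (Q * Y) ≤ A)
    (h2 : A ≤ ENNReal.ofReal Q * B) : ENNReal.ofReal Y ≤ B := by
  rw [ENNReal.ofReal_mul hQ.le] at h1
  exact (ENNReal.mul_le_mul_iff_right (by simpa using hQ) ENNReal.ofReal_ne_top).1 (h1.trans h2)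

lemma exists_cell {ν l d n : ℕ} {N : Set (EuclideanSpace ℝ (Fin ν))}
    {b : EuclideanSpace ℝ (Fin ν)} (hc : IsCompact N) (P : TPkg N b) {p : ℝ} (hp : 1 < p)
    (hn : n = l + (d + 1)) (hlp : ((l + 1 : ℕ) : ℝ) ≤ p - 1)
    (h : Infinite (HomotopyGroup (Fin (l + 1)) ↥N ⟨b, P.hb⟩) ∨ (((l + 1 : ℕ) : ℝ) = p - 1 ∧
      Nontrivial (HomotopyGroup (Fin (l + 1)) ↥N ⟨b, P.hb⟩))) :
    ∃ R0 : ℝ, 0 < R0 ∧ ∀ K : ℝ, 0 ≤ K → ∃ (X : ℝ)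
      (v : EuclideanSpace ℝ (Fin n) → EuclideanSpace ℝ (Fin ν)), Cell N b p R0 K X v := by
  obtain ⟨R0, C1, Q, hR0, hC1, hQ, hcell⟩ := cell_bounds (d := d) (l := l) hc P hp hn
  refine ⟨R0, hR0, fun K hK => ?_⟩
  have hp0 : 0 < p := by linarith
  have hL1 : (1 : ℝ) ≤ ((l + 1 : ℕ) : ℝ) + 1 := by
    have : (0 : ℝ) ≤ ((l + 1 : ℕ) : ℝ) := Nat.cast_nonneg _
    linarith
  set L : ℝ := ((l + 1 : ℕ) : ℝ) + 1 with hL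
  have hL0 : 0 < L := by linarith
  by_cases hcrit : ((l + 1 : ℕ) : ℝ) = p - 1
  · -- critical case
    have hnt : Nontrivial (HomotopyGroup (Fin (l + 1)) ↥N ⟨b, P.hb⟩) := by
      rcases h with h | h
      · exact Infinite.instNontrivial _
      · exact h.2
    obtain ⟨C, T, f, hC, hf⟩ := obs_nontrivial (by omega) hc P hp (by linarith) hnt
    have hen : energy p f ≠ ⊤ := ne_top_of_le_ne_top (ENNReal.mul_ne_top hC hf.Tt) hf.le
    set E : ℝ := (energy p f).toReal + 1 with hE
    have hE0 : 0 < E := by positivity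
    have hEle : energy p f ≤ ENNReal.ofReal E := by
      conv_lhs => rw [← ENNReal.ofReal_toReal hen]
      exact ENNReal.ofReal_le_ofReal (by linarith)
    set X0 : ℝ := C1 * E ^ (1 - 1 / p) with hX0
    set X : ℝ := max X0 1 with hX
    have hτ : 0 < T.toReal := ENNReal.toReal_pos hf.T0 hf.Tt
    have hX1 : 1 ≤ X := le_max_right _ _
    set A : ℝ := Q * (K * X) / T.toReal with hA
    have hA0 : 0 ≤ A := by positivity
    have hLp : L - p = 0 := by rw [hL]; linarith
    obtain ⟨v, hv1, hv2, hv3, hv4, hv5⟩ := hcell C T f hf E hE0 hEle (Real.exp (-A) / 4 / L)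
      (by positivity) (by
        rw [div_div, div_le_iff₀ (by positivity)]
        have := Real.exp_le_one_iff.2 (neg_nonpos.2 hA0)
        nlinarith)
    rw [hLp, Real.rpow_zero, mul_one] at hv4
    refine ⟨X, v, hX1, hv1, hv2, hv3, hv4.trans (ENNReal.ofReal_le_ofReal (le_max_left _ _)), ?_⟩
    intro U h1 h2 h3 h4
    refine cancel_Q hQ ?_ (hv5 U h1 h2 h3 h4)
    rw [mul_div_cancel₀ _ hL0.ne', show ((l + 1 : ℕ) : ℝ) - p = -1 by linarith]
    refine le_trans ?_ (mul_le_mul_right (log_lower hA0) T)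
    conv_rhs => rw [← ENNReal.ofReal_toReal hf.Tt, ← ENNReal.ofReal_mul hτ.le]
    apply ENNReal.ofReal_le_ofReal
    rw [hA, mul_div_cancel₀ _ hτ.ne']
  · have hinf : Infinite (HomotopyGroup (Fin (l + 1)) ↥N ⟨b, P.hb⟩) := by
      rcases h with h | h
      · exact h
      · exact absurd h.1 hcrit
    obtain ⟨C, hC, hobs⟩ := obs_infinite hc P hp (by linarith) hinf
    set δ : ℝ := 1 / 8 / L with hδ
    have hδ0 : 0 < δ := by positivity
    have hδ1 : δ ≤ 1 / 2 := by
      rw [hδ, div_le_iff₀ hL0]; linarith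
    set B : ℝ := C1 * δ ^ (L - p) * (C.toReal + 1) ^ (1 - 1 / p) with hB
    have hB0 : 0 ≤ B := by positivity
    set Z : ℝ := 8 * Q * K * (B + 1) with hZ
    have hZ0 : 0 ≤ Z := by positivity
    obtain ⟨T, f, hMT, hf⟩ := hobs (ENNReal.ofReal (max 1 (Z ^ p))) ENNReal.ofReal_ne_top
    set τ := T.toReal with hτd
    have hMτ : max 1 (Z ^ p) ≤ τ := (ENNReal.ofReal_le_iff_le_toReal hf.Tt).1 hMT
    have hτ1 : 1 ≤ τ := (le_max_left _ _).trans hMτ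
    have hτ0 : 0 < τ := by linarith
    have hZτ : Z ≤ τ ^ (1 / p) := by
      have := Real.rpow_le_rpow (by positivity) ((le_max_right _ _).trans hMτ)
        (by positivity : 0 ≤ 1 / p)
      rwa [← Real.rpow_mul hZ0, mul_one_div_cancel hp0.ne', Real.rpow_one] at this
    have hE0 : 0 < (C.toReal + 1) * τ := by positivity
    have hEle : energy p f ≤ ENNReal.ofReal ((C.toReal + 1) * τ) := by
      refine hf.le.trans ?_
      conv_lhs => rw [← ENNReal.ofReal_toReal hC, ← ENNReal.ofReal_toReal hf.Tt,
        ← ENNReal.ofReal_mul ENNReal.toReal_nonneg]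
      exact ENNReal.ofReal_le_ofReal (by nlinarith)
    obtain ⟨v, hv1, hv2, hv3, hv4, hv5⟩ := hcell C T f hf _ hE0 hEle δ hδ0 hδ1
    have hq0 : 0 ≤ 1 - 1 / p := by
      rw [sub_nonneg, div_le_one hp0]; exact hp.le
    refine ⟨(B + 1) * τ ^ (1 - 1 / p), v, ?_, hv1, hv2, hv3, hv4.trans ?_, ?_⟩
    · have := Real.one_le_rpow hτ1 hq0
      nlinarith
    · apply ENNReal.ofReal_le_ofReal
      rw [Real.mul_rpow (by positivity) hτ0.le, ← mul_assoc]
      have : 0 ≤ τ ^ (1 - 1 / p) := by positivity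
      rw [add_mul, one_mul]
      linarith
    · intro U h1 h2 h3 h4
      refine cancel_Q hQ ?_ (hv5 U h1 h2 h3 h4)
      rw [show L * δ = 1 / 8 by rw [hδ]; field_simp]
      refine le_trans ?_ (mul_le_mul_right (pow_lower (by linarith)) T)
      conv_rhs => rw [← ENNReal.ofReal_toReal hf.Tt, ← ENNReal.ofReal_mul hτ0.le]
      apply ENNReal.ofReal_le_ofReal
      have h5 : τ = τ ^ (1 / p) * τ ^ (1 - 1 / p) := by
        rw [← Real.rpow_add hτ0]; simp
      have h6 : 0 ≤ τ ^ (1 - 1 / p) := by positivity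
      have h7 := mul_le_mul_of_nonneg_right hZτ h6
      rw [← h5] at h7
      calc Q * (K * ((B + 1) * τ ^ (1 - 1 / p))) = Z * τ ^ (1 - 1 / p) * (1 / 8) := by
            rw [hZ]; ring
        _ ≤ _ := by nlinarith

lemma scaled_gag {ν n : ℕ} {p r : ℝ} (hr : 0 < r) (a : EuclideanSpace ℝ (Fin n))
    {v : EuclideanSpace ℝ (Fin n) → EuclideanSpace ℝ (Fin ν)} (hv : Continuous v) :
    ∫⁻ x, ∫⁻ y, ENNReal.ofReal (‖v (r⁻¹ • (y - a)) - v (r⁻¹ • (x - a))‖ ^ p /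
      ‖y - x‖ ^ ((n : ℝ) + p - 1)) = ENNReal.ofReal (r ^ ((n : ℝ) + 1 - p)) *
    ∫⁻ x, ∫⁻ y, ENNReal.ofReal (‖v y - v x‖ ^ p / ‖y - x‖ ^ ((n : ℝ) + p - 1)) := by
  set h : EuclideanSpace ℝ (Fin n) → EuclideanSpace ℝ (Fin n) → ℝ≥0∞ := fun x y =>
    ENNReal.ofReal (‖v y - v x‖ ^ p / ‖y - x‖ ^ ((n : ℝ) + p - 1)) with hh
  set h' : EuclideanSpace ℝ (Fin n) → EuclideanSpace ℝ (Fin n) → ℝ≥0∞ := fun x y =>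
    ENNReal.ofReal (‖v (r⁻¹ • (y - a)) - v (r⁻¹ • (x - a))‖ ^ p /
      ‖y - x‖ ^ ((n : ℝ) + p - 1)) with hh'
  have hm : Measurable (Function.uncurry h') := by
    have hvm := hv.measurable
    simp only [hh', Function.uncurry_def]
    fun_prop
  have e1 : ∀ x y, h' (a + r • x) (a + r • y) =
      ENNReal.ofReal (r ^ (-((n : ℝ) + p - 1))) * h x y := by
    intro x y
    simp only [hh, hh']
    rw [← ENNReal.ofReal_mul (by positivity)]
    congr 1
    have : ∀ z : EuclideanSpace ℝ (Fin n), r⁻¹ • (a + r • z - a) = z := fun z => by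
      rw [add_sub_cancel_left, inv_smul_smul₀ hr.ne']
    rw [this, this, add_sub_add_left_eq_sub, ← smul_sub, norm_smul, Real.norm_eq_abs,
      abs_of_pos hr, Real.mul_rpow hr.le (norm_nonneg _), Real.rpow_neg hr.le]
    rw [div_mul_eq_div_div, div_right_comm, div_eq_inv_mul]
  have e2 : ∀ x, ∫⁻ y, h' (a + r • x) y = ENNReal.ofReal (r ^ (1 - p)) * ∫⁻ y, h x y := by
    intro x
    have h2 := lintegral_smul_translate volume (f := fun y => h' (a + r • x) y)
      hm.of_uncurry_left a hr
    simp only [e1] at h2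
    rw [lintegral_const_mul' _ _ ENNReal.ofReal_ne_top, finrank_euclideanSpace_fin] at h2
    have h3 : ENNReal.ofReal (r ^ (n : ℝ)) * ENNReal.ofReal (r ^ (-(n : ℝ))) = 1 := by
      rw [← ENNReal.ofReal_mul (by positivity), ← Real.rpow_add hr]; simp
    calc ∫⁻ y, h' (a + r • x) y = ENNReal.ofReal (r ^ (n : ℝ)) *
          (ENNReal.ofReal (r ^ (-(n : ℝ))) * ∫⁻ y, h' (a + r • x) y) := by
          rw [← mul_assoc, h3, one_mul]
      _ = _ := by
          rw [← h2, ← mul_assoc, ← ENNReal.ofReal_mul (by positivity), ← Real.rpow_add hr]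
          congr 3; ring
  have h2 := lintegral_smul_translate volume (f := fun x => ∫⁻ y, h' x y)
    (hm.lintegral_prod_right) a hr
  simp only [e2] at h2
  rw [lintegral_const_mul' _ _ ENNReal.ofReal_ne_top, finrank_euclideanSpace_fin] at h2
  have h3 : ENNReal.ofReal (r ^ (n : ℝ)) * ENNReal.ofReal (r ^ (-(n : ℝ))) = 1 := by
    rw [← ENNReal.ofReal_mul (by positivity), ← Real.rpow_add hr]; simp
  calc ∫⁻ x, ∫⁻ y, h' x y = ENNReal.ofReal (r ^ (n : ℝ)) *
        (ENNReal.ofReal (r ^ (-(n : ℝ))) * ∫⁻ x, ∫⁻ y, h' x y) := by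
        rw [← mul_assoc, h3, one_mul]
    _ = _ := by
        rw [← h2, ← mul_assoc, ← ENNReal.ofReal_mul (by positivity), ← Real.rpow_add hr]
        congr 3; ring

lemma scaled_ext {ν n : ℕ} {N : Set (EuclideanSpace ℝ (Fin ν))}
    {b : EuclideanSpace ℝ (Fin ν)} {p R0 K X r : ℝ} (hp : 0 < p) (hr : 0 < r)
    {v : EuclideanSpace ℝ (Fin n) → EuclideanSpace ℝ (Fin ν)} (hcell : Cell N b p R0 K X v)
    (a : EuclideanSpace ℝ (Fin n))
    {U : EuclideanSpace ℝ (Fin n) × ℝ → EuclideanSpace ℝ (Fin ν)}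
    (h1 : ContinuousOn U (ball a (r * R0) ×ˢ Ico (0 : ℝ) r))
    (h2 : ContDiffOn ℝ 1 U (ball a (r * R0) ×ˢ Ioo (0 : ℝ) r))
    (h3 : MapsTo U (ball a (r * R0) ×ˢ Ico (0 : ℝ) r) N)
    (h4 : ∀ x ∈ ball a (r * R0), U (x, 0) = v (r⁻¹ • (x - a))) :
    ENNReal.ofReal (r ^ ((n : ℝ) + 1 - p) * (K * X)) ≤
      ∫⁻ z in ball a (r * R0) ×ˢ Ioo (0 : ℝ) r, ‖fderiv ℝ U z‖ₑ ^ p := by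
  obtain ⟨-, -, -, -, -, hU⟩ := hcell
  set A : EuclideanSpace ℝ (Fin n) × ℝ := (a, 0) with hA
  set G : EuclideanSpace ℝ (Fin n) × ℝ → ℝ≥0∞ := fun z => ‖fderiv ℝ U z‖ₑ ^ p with hG
  have hGm : Measurable G := (measurable_fderiv ℝ U).enorm.pow_const p
  set W : Set (EuclideanSpace ℝ (Fin n) × ℝ) := ball a (r * R0) ×ˢ Ioo (0 : ℝ) r with hW
  have hWo : MeasurableSet W := (isOpen_ball.prod isOpen_Ioo).measurableSet
  have hb : ∀ x, a + r • x ∈ ball a (r * R0) ↔ x ∈ ball (0 : EuclideanSpace ℝ (Fin n)) R0 := by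
    intro x
    rw [mem_ball, mem_ball_zero_iff, dist_eq_norm, add_sub_cancel_left, norm_smul,
      Real.norm_eq_abs, abs_of_pos hr, mul_lt_mul_iff_right₀ hr]
  have hm0 : MapsTo (fun z : EuclideanSpace ℝ (Fin n) × ℝ => A + r • z)
      (ball 0 R0 ×ˢ Ico (0 : ℝ) 1) (ball a (r * R0) ×ˢ Ico (0 : ℝ) r) := by
    rintro ⟨x, t⟩ ⟨hx, ht⟩
    refine ⟨(hb x).2 hx, ?_⟩
    simp only [hA, Prod.snd_add, Prod.smul_snd, smul_eq_mul, zero_add]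
    exact ⟨mul_nonneg hr.le ht.1, by nlinarith [ht.2]⟩
  have hm1 : ∀ z : EuclideanSpace ℝ (Fin n) × ℝ,
      z ∈ (ball 0 R0 ×ˢ Ioo (0 : ℝ) 1) ↔ A + r • z ∈ W := by
    rintro ⟨x, t⟩
    simp only [hA, hW, mem_prod, Prod.fst_add, Prod.smul_fst, Prod.snd_add, Prod.smul_snd,
      smul_eq_mul, zero_add, hb, mem_Ioo, mul_pos_iff_of_pos_left hr, mul_lt_iff_lt_one_right hr]
  have hcs : ContDiff ℝ 1 (fun z : EuclideanSpace ℝ (Fin n) × ℝ => A + r • z) := by fun_prop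
  have key := hU (fun z => U (A + r • z)) (h1.comp hcs.continuous.continuousOn hm0)
    (h2.comp hcs.contDiffOn (fun z hz => (hm1 z).1 hz)) (h3.comp hm0) (by
      intro x hx
      have := h4 _ ((hb x).2 hx)
      rw [add_sub_cancel_left, inv_smul_smul₀ hr.ne'] at this
      rw [← this]
      congr 1
      ext <;> simp [hA])
  have hfd : ∀ z, ‖fderiv ℝ (fun z => U (A + r • z)) z‖ₑ ^ p =
      ENNReal.ofReal (r ^ p) * G (A + r • z) := by
    intro z
    have := fderiv_comp_smul (f := fun z => U (A + z)) (x := z) r (𝕜 := ℝ)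
    rw [this, fderiv_comp_add_left, enorm_smul, ENNReal.mul_rpow_of_nonneg _ _ hp.le,
      Real.enorm_of_nonneg hr.le, ENNReal.ofReal_rpow_of_nonneg hr.le hp.le]
  have hI : ∫⁻ z in ball (0 : EuclideanSpace ℝ (Fin n)) R0 ×ˢ Ioo (0 : ℝ) 1,
      ‖fderiv ℝ (fun z => U (A + r • z)) z‖ₑ ^ p = ENNReal.ofReal (r ^ p) *
        (ENNReal.ofReal (r ^ (-((n : ℝ) + 1))) * ∫⁻ z in W, G z) := by
    have hH4 : (volume : Measure (EuclideanSpace ℝ (Fin n) × ℝ)).IsAddHaarMeasure := by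
      rw [Measure.volume_eq_prod]; infer_instance
    have h5 := lintegral_smul_translate volume (f := W.indicator G) (hGm.indicator hWo) A hr
    rw [lintegral_indicator hWo, Module.finrank_prod, finrank_euclideanSpace_fin,
      Module.finrank_self] at h5
    push_cast at h5
    rw [← h5, ← lintegral_indicator (isOpen_ball.prod isOpen_Ioo).measurableSet,
      ← lintegral_const_mul' _ _ ENNReal.ofReal_ne_top]
    refine lintegral_congr fun z => ?_
    by_cases hz : z ∈ (ball (0 : EuclideanSpace ℝ (Fin n)) R0 ×ˢ Ioo (0 : ℝ) 1)
    · rw [indicator_of_mem hz, indicator_of_mem ((hm1 z).1 hz), hfd]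
    · rw [indicator_of_notMem hz, indicator_of_notMem (fun h => hz ((hm1 z).2 h)), mul_zero]
  rw [hI, ← mul_assoc, ← ENNReal.ofReal_mul (by positivity), ← Real.rpow_add hr] at key
  rw [ENNReal.ofReal_mul (by positivity)]
  refine (mul_le_mul_right key _).trans_eq ?_
  rw [← mul_assoc, ← ENNReal.ofReal_mul (by positivity), ← Real.rpow_add hr,
    show (n : ℝ) + 1 - p + (p + -((n : ℝ) + 1)) = 0 by ring, Real.rpow_zero,
    ENNReal.ofReal_one, one_mul]

lemma placed_cell {ν n : ℕ} {N : Set (EuclideanSpace ℝ (Fin ν))}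
    {b : EuclideanSpace ℝ (Fin ν)} {p R0 : ℝ} (hp : 0 < p) (hR0 : 0 < R0)
    (hs : 0 < (n : ℝ) + 1 - p)
    (hcell : ∀ K : ℝ, 0 ≤ K → ∃ (X : ℝ)
      (v : EuclideanSpace ℝ (Fin n) → EuclideanSpace ℝ (Fin ν)), Cell N b p R0 K X v)
    (k : ℕ) (a : EuclideanSpace ℝ (Fin n)) {ρ : ℝ} (hρ : 0 < ρ) :
    ∃ φ : EuclideanSpace ℝ (Fin n) → EuclideanSpace ℝ (Fin ν), ContDiff ℝ (⊤ : ℕ∞) φ ∧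
      (∀ x, φ x ∈ N) ∧ (∀ x, x ∉ ball a ρ → φ x = b) ∧
      (∫⁻ x, ∫⁻ y, ENNReal.ofReal (‖φ y - φ x‖ ^ p / ‖y - x‖ ^ ((n : ℝ) + p - 1)) ≤
        ENNReal.ofReal ((1 / 2) ^ k)) ∧
      ∀ U : EuclideanSpace ℝ (Fin n) × ℝ → EuclideanSpace ℝ (Fin ν),
        ContinuousOn U (ball a ρ ×ˢ Ico (0 : ℝ) 1) →
        ContDiffOn ℝ 1 U (ball a ρ ×ˢ Ioo (0 : ℝ) 1) →
        MapsTo U (ball a ρ ×ˢ Ico (0 : ℝ) 1) N →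
        (∀ x ∈ ball a ρ, U (x, 0) = φ x) →
        (k : ℝ≥0∞) ≤ ∫⁻ z in ball a ρ ×ˢ Ioo (0 : ℝ) 1, ‖fderiv ℝ U z‖ₑ ^ p := by
  set s : ℝ := (n : ℝ) + 1 - p with hsd
  set σ : ℝ := min 1 (ρ / R0) with hσ
  have hσ0 : 0 < σ := lt_min one_pos (by positivity)
  have hσ1 : σ ≤ 1 := min_le_left _ _
  have hσR : σ * R0 ≤ ρ := by
    have := min_le_right 1 (ρ / R0)
    rwa [← hσ, le_div_iff₀ hR0] at this
  obtain ⟨X, v, hv⟩ := hcell (k * 2 ^ k / σ ^ s) (by positivity)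
  obtain ⟨hX, hvs, hvN, hvb, hvG, -⟩ := id hv
  have hX0 : 0 < X := by linarith
  have hy0 : 0 < (1 / 2 : ℝ) ^ k * σ ^ s / X := by positivity
  set r : ℝ := ((1 / 2) ^ k * σ ^ s / X) ^ (1 / s) with hr
  have hr0 : 0 < r := by positivity
  have hrs : r ^ s = (1 / 2) ^ k * σ ^ s / X := by
    rw [hr, ← Real.rpow_mul hy0.le, one_div_mul_cancel hs.ne', Real.rpow_one]
  have hσs : σ ^ s ≤ 1 := Real.rpow_le_one hσ0.le hσ1 hs.le
  have hσs0 : 0 < σ ^ s := by positivity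
  have hk1 : (1 / 2 : ℝ) ^ k ≤ 1 := pow_le_one₀ (by norm_num) (by norm_num)
  have hk0 : (0 : ℝ) < (1 / 2 : ℝ) ^ k := by positivity
  have hrσ : r ≤ σ := by
    rw [← Real.rpow_le_rpow_iff hr0.le hσ0.le hs, hrs, div_le_iff₀ hX0]
    nlinarith
  have hrR : r * R0 ≤ ρ := (mul_le_mul_of_nonneg_right hrσ hR0.le).trans hσR
  have hr1 : r ≤ 1 := hrσ.trans hσ1
  refine ⟨fun x => v (r⁻¹ • (x - a)), hvs.comp (by fun_prop), fun x => hvN _, ?_, ?_, ?_⟩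
  · intro x hx
    apply hvb
    rw [mem_ball, dist_eq_norm, not_lt] at hx
    rw [norm_smul, norm_inv, Real.norm_eq_abs, abs_of_pos hr0, ← div_eq_inv_mul,
      le_div_iff₀ hr0]
    linarith
  · rw [scaled_gag hr0 a hvs.continuous]
    refine (mul_le_mul_right hvG _).trans ?_
    rw [← ENNReal.ofReal_mul (by positivity)]
    apply ENNReal.ofReal_le_ofReal
    rw [← hsd, hrs, div_mul_cancel₀ _ hX0.ne']
    nlinarith
  · intro U h1 h2 h3 h4
    have hsub : ball a (r * R0) ⊆ ball a ρ := ball_subset_ball hrR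
    have hI1 : Ico (0 : ℝ) r ⊆ Ico 0 1 := Ico_subset_Ico_right hr1
    have hI2 : Ioo (0 : ℝ) r ⊆ Ioo 0 1 := Ioo_subset_Ioo_right hr1
    have h5 := scaled_ext hp hr0 hv a (h1.mono (prod_mono hsub hI1)) (h2.mono (prod_mono hsub hI2))
      (h3.mono_left (prod_mono hsub hI1)) (fun x hx => h4 x (hsub hx))
    refine le_trans ?_ (h5.trans (lintegral_mono_set (prod_mono hsub hI2)))
    rw [← ENNReal.ofReal_natCast]
    apply ENNReal.ofReal_le_ofReal
    rw [← hsd, hrs]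
    apply le_of_eq
    have h6 : (1 / 2 : ℝ) ^ k * 2 ^ k = 1 := by rw [← mul_pow]; norm_num
    field_simp
    linear_combination (-(k : ℝ)) * h6

lemma centers_sep {E : Type*} [NormedAddCommGroup E] [NormedSpace ℝ E] {e : E} (he : ‖e‖ = 1)
    {j k : ℕ} (hjk : j < k) {x : E}
    (hj : x ∈ ball ((1 - (1 / 2 : ℝ) ^ (j + 1)) • e) ((1 / 2 : ℝ) ^ (j + 1) / 8))
    (hk : x ∈ ball ((1 - (1 / 2 : ℝ) ^ (k + 1)) • e) ((1 / 2 : ℝ) ^ (k + 1) / 8)) : False := by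
  rw [mem_ball] at hj hk
  have h1 := dist_triangle_left ((1 - (1 / 2 : ℝ) ^ (j + 1)) • e)
    ((1 - (1 / 2 : ℝ) ^ (k + 1)) • e) x
  rw [dist_eq_norm (_ • e), ← sub_smul, norm_smul, he, mul_one, Real.norm_eq_abs] at h1
  have h2 : (1 / 2 : ℝ) ^ (k + 1) ≤ (1 / 2 : ℝ) ^ (j + 1) * (1 / 2) := by
    rw [← pow_succ]
    exact pow_le_pow_of_le_one (by norm_num) (by norm_num) (by omega)
  have h3 := neg_abs_le (1 - (1 / 2 : ℝ) ^ (j + 1) - (1 - (1 / 2 : ℝ) ^ (k + 1)))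
  have h4 : (0 : ℝ) < (1 / 2 : ℝ) ^ (j + 1) := by positivity
  linarith

lemma norm_in_cell {E : Type*} [NormedAddCommGroup E] [NormedSpace ℝ E] {e : E} (he : ‖e‖ = 1)
    {k : ℕ} {x : E}
    (hk : x ∈ ball ((1 - (1 / 2 : ℝ) ^ (k + 1)) • e) ((1 / 2 : ℝ) ^ (k + 1) / 8)) :
    1 - 2 * (1 / 2 : ℝ) ^ (k + 1) < ‖x‖ ∧ ‖x‖ < 1 := by
  rw [mem_ball, dist_eq_norm] at hk
  have h1 : (1 / 2 : ℝ) ^ (k + 1) ≤ 1 := pow_le_one₀ (by norm_num) (by norm_num)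
  have h0 : (0 : ℝ) < (1 / 2 : ℝ) ^ (k + 1) := by positivity
  have h2 : ‖(1 - (1 / 2 : ℝ) ^ (k + 1)) • e‖ = 1 - (1 / 2 : ℝ) ^ (k + 1) := by
    rw [norm_smul, he, mul_one, Real.norm_eq_abs, abs_of_nonneg (by linarith)]
  have h3 := abs_norm_sub_norm_le x ((1 - (1 / 2 : ℝ) ^ (k + 1)) • e)
  rw [h2] at h3
  have h4 := abs_le.1 h3
  constructor <;> linarith [h4.1, h4.2]

lemma assembly {ν n : ℕ} {N : Set (EuclideanSpace ℝ (Fin ν))}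
    {b : EuclideanSpace ℝ (Fin ν)} {p R0 : ℝ} (hp : 0 < p) (hR0 : 0 < R0) (hn : 1 ≤ n)
    (hs : 0 < (n : ℝ) + 1 - p)
    (hcell : ∀ K : ℝ, 0 ≤ K → ∃ (X : ℝ)
      (v : EuclideanSpace ℝ (Fin n) → EuclideanSpace ℝ (Fin ν)), Cell N b p R0 K X v) :
    ∃ u : EuclideanSpace ℝ (Fin n) → EuclideanSpace ℝ (Fin ν),
      ContDiffOn ℝ (⊤ : ℕ∞) u (ball 0 1) ∧
      MapsTo u (ball 0 1) N ∧
      gagliardoE (1 - 1 / p) p (ball 0 1) u < ⊤ ∧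
      ∀ U : EuclideanSpace ℝ (Fin n) × ℝ → EuclideanSpace ℝ (Fin ν),
        ContinuousOn U (ball 0 1 ×ˢ Ico (0 : ℝ) 1) →
        ContDiffOn ℝ 1 U (ball 0 1 ×ˢ Ioo (0 : ℝ) 1) →
        MapsTo U (ball 0 1 ×ˢ Ico (0 : ℝ) 1) N →
        (∀ x ∈ ball (0 : EuclideanSpace ℝ (Fin n)) 1, U (x, 0) = u x) →
        (∫⁻ z in ball (0 : EuclideanSpace ℝ (Fin n)) 1 ×ˢ Ioo (0 : ℝ) 1,
            ENNReal.ofReal (‖fderiv ℝ U z‖ ^ p)) = ⊤ := by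
  obtain ⟨e, he⟩ : ∃ e : EuclideanSpace ℝ (Fin n), ‖e‖ = 1 :=
    ⟨EuclideanSpace.single ⟨0, hn⟩ 1, by simp⟩
  set a : ℕ → EuclideanSpace ℝ (Fin n) := fun k => (1 - (1 / 2 : ℝ) ^ (k + 1)) • e with ha
  set ρ : ℕ → ℝ := fun k => (1 / 2 : ℝ) ^ (k + 1) / 8 with hρ
  choose φ hφs hφN hφb hφG hφU using fun k : ℕ =>
    placed_cell hp hR0 hs hcell k (a k) (show 0 < ρ k by simp only [hρ]; positivity)
  have hdisj : ∀ j k x, x ∈ ball (a j) (ρ j) → x ∈ ball (a k) (ρ k) → j = k := by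
    intro j k x hj hk
    rcases lt_trichotomy j k with h | h | h
    · exact (centers_sep he h hj hk).elim
    · exact h
    · exact (centers_sep he h hk hj).elim
  have hex : ∀ x, ∃ j, ∀ i, i ≠ j → φ i x = b := by
    intro x
    by_cases h : ∃ j, x ∈ ball (a j) (ρ j)
    · obtain ⟨j, hj⟩ := h
      refine ⟨j, fun i hi => hφb i x fun hx => hi (hdisj _ _ _ hx hj)⟩
    · push Not at h
      exact ⟨0, fun i _ => hφb i x (h i)⟩
  choose j hj using hex
  have hu1 : ∀ k x, x ∈ ball (a k) (ρ k) → φ (j x) x = φ k x := by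
    intro k x hx
    by_cases h : j x = k
    · rw [h]
    · rw [hj x k (Ne.symm h), hφb (j x) x fun hx2 => h (hdisj _ _ _ hx2 hx)]
  refine ⟨fun x => φ (j x) x, ?_, fun x _ => hφN _ _, ?_, ?_⟩
  · intro x0 hx0
    refine ContDiffAt.contDiffWithinAt ?_
    rw [mem_ball_zero_iff] at hx0
    obtain ⟨k0, hk0⟩ := exists_pow_lt_of_lt_one (show 0 < (1 - ‖x0‖) / 2 by linarith)
      (by norm_num : (1 / 2 : ℝ) < 1)
    have hsm : ContDiffAt ℝ (⊤ : ℕ∞) (fun x => b + ∑ k ∈ Finset.range k0, (φ k x - b)) x0 := by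
      apply ContDiff.contDiffAt
      refine contDiff_const.add (ContDiff.sum fun k _ => (hφs k).sub contDiff_const)
    refine hsm.congr_of_eventuallyEq ?_
    have hopen : IsOpen {x : EuclideanSpace ℝ (Fin n) | ‖x‖ < 1 - 2 * (1 / 2 : ℝ) ^ k0} :=
      isOpen_lt continuous_norm continuous_const
    filter_upwards [hopen.mem_nhds (show ‖x0‖ < 1 - 2 * (1 / 2 : ℝ) ^ k0 by linarith)] with x hx
    have hx' : ‖x‖ < 1 - 2 * (1 / 2 : ℝ) ^ k0 := hx
    have hbig : ∀ k, k0 ≤ k → φ k x = b := by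
      intro k hk
      refine hφb k x fun hxk => ?_
      have h1 := (norm_in_cell he hxk).1
      have h2 : (1 / 2 : ℝ) ^ (k + 1) ≤ (1 / 2 : ℝ) ^ k0 :=
        pow_le_pow_of_le_one (by norm_num) (by norm_num) (by omega)
      linarith
    by_cases hjk : j x < k0
    · rw [Finset.sum_eq_single_of_mem (j x) (Finset.mem_range.2 hjk)
        (fun i _ hi => by rw [hj x i hi, sub_self])]
      abel
    · rw [hbig _ (not_lt.1 hjk), Finset.sum_eq_zero, add_zero]
      intro i hi
      rw [hj x i (fun h => hjk (h ▸ Finset.mem_range.1 hi)), sub_self]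
  · -- finite Gagliardo energy
    have hkey : ∀ x y, ∃ i, ‖φ (j y) y - φ (j x) x‖ ≤ 2 * ‖φ i y - φ i x‖ := by
      intro x y
      by_cases h : j x = j y
      · refine ⟨j x, ?_⟩
        rw [← h]
        linarith [norm_nonneg (φ (j x) y - φ (j x) x)]
      · have h1 : φ (j x) y = b := hj y _ h
        have h2 : φ (j y) x = b := hj x _ (Ne.symm h)
        have h3 : ‖φ (j y) y - φ (j x) x‖ ≤ ‖φ (j y) y - φ (j y) x‖ + ‖φ (j x) y - φ (j x) x‖ := by
          rw [h1, h2]; exact norm_sub_le_norm_sub_add_norm_sub _ _ _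
        rcases le_total ‖φ (j y) y - φ (j y) x‖ ‖φ (j x) y - φ (j x) x‖ with h4 | h4
        · exact ⟨j x, by linarith⟩
        · exact ⟨j y, by linarith⟩
    set w : ℕ → EuclideanSpace ℝ (Fin n) → EuclideanSpace ℝ (Fin n) → ℝ≥0∞ := fun k x y =>
      ENNReal.ofReal (‖φ k y - φ k x‖ ^ p / ‖y - x‖ ^ ((n : ℝ) + p - 1)) with hw
    have hwm : ∀ k, Measurable (Function.uncurry (w k)) := by
      intro k
      have hvm := (hφs k).continuous.measurable
      simp only [hw, Function.uncurry_def]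
      fun_prop
    have hpt : ∀ x y, ENNReal.ofReal (‖φ (j y) y - φ (j x) x‖ ^ p /
        ‖y - x‖ ^ ((n : ℝ) + (1 - 1 / p) * p)) ≤ ENNReal.ofReal (2 ^ p) * ∑' k, w k x y := by
      intro x y
      obtain ⟨i, hi⟩ := hkey x y
      refine le_trans ?_ (mul_le_mul_right (ENNReal.le_tsum i) _)
      rw [hw, ← ENNReal.ofReal_mul (by positivity)]
      apply ENNReal.ofReal_le_ofReal
      rw [show (n : ℝ) + (1 - 1 / p) * p = (n : ℝ) + p - 1 by field_simp; ring, ← mul_div_assoc,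
        ← Real.mul_rpow (by norm_num) (norm_nonneg _)]
      gcongr
    have hle : gagliardoE (1 - 1 / p) p (ball 0 1) (fun x => φ (j x) x) ≤
        ENNReal.ofReal (2 ^ p) * ENNReal.ofReal (∑' k : ℕ, (1 / 2 : ℝ) ^ k) := by
      unfold gagliardoE
      calc _ ≤ ∫⁻ x, ∫⁻ y, ENNReal.ofReal (‖φ (j y) y - φ (j x) x‖ ^ p /
              ‖y - x‖ ^ ((n : ℝ) + (1 - 1 / p) * p)) :=
            (setLIntegral_le_lintegral _ _).trans
              (lintegral_mono fun x => setLIntegral_le_lintegral _ _)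
        _ ≤ ∫⁻ x, ∫⁻ y, ENNReal.ofReal (2 ^ p) * ∑' k, w k x y :=
            lintegral_mono fun x => lintegral_mono fun y => hpt x y
        _ = ENNReal.ofReal (2 ^ p) * ∑' k, ∫⁻ x, ∫⁻ y, w k x y := by
            have h1 : ∀ x, ∫⁻ y, ENNReal.ofReal (2 ^ p) * ∑' k, w k x y =
                ENNReal.ofReal (2 ^ p) * ∑' k, ∫⁻ y, w k x y := by
              intro x
              rw [lintegral_const_mul' _ _ ENNReal.ofReal_ne_top, lintegral_tsum]
              exact fun k => ((hwm k).of_uncurry_left).aemeasurable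
            simp only [h1]
            rw [lintegral_const_mul' _ _ ENNReal.ofReal_ne_top, lintegral_tsum]
            exact fun k => ((hwm k).lintegral_prod_right).aemeasurable
        _ ≤ ENNReal.ofReal (2 ^ p) * ∑' k : ℕ, ENNReal.ofReal ((1 / 2 : ℝ) ^ k) :=
            mul_le_mul_right (ENNReal.tsum_le_tsum fun k => hφG k) _
        _ = _ := by
            rw [ENNReal.ofReal_tsum_of_nonneg (fun k => by positivity) summable_geometric_two]
    exact hle.trans_lt (ENNReal.mul_lt_top ENNReal.ofReal_lt_top ENNReal.ofReal_lt_top)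
  · intro U h1 h2 h3 h4
    have hcv : ∀ z, ENNReal.ofReal (‖fderiv ℝ U z‖ ^ p) = ‖fderiv ℝ U z‖ₑ ^ p := by
      intro z
      rw [← ENNReal.ofReal_rpow_of_nonneg (norm_nonneg _) hp.le, ofReal_norm]
    simp only [hcv]
    have hsub : ∀ k, ball (a k) (ρ k) ⊆ ball (0 : EuclideanSpace ℝ (Fin n)) 1 := fun k x hx =>
      mem_ball_zero_iff.2 (norm_in_cell he hx).2
    have hk : ∀ k : ℕ, (k : ℝ≥0∞) ≤
        ∫⁻ z in ball (0 : EuclideanSpace ℝ (Fin n)) 1 ×ˢ Ioo (0 : ℝ) 1, ‖fderiv ℝ U z‖ₑ ^ p := by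
      intro k
      refine (hφU k U (h1.mono (prod_mono (hsub k) subset_rfl))
        (h2.mono (prod_mono (hsub k) subset_rfl)) (h3.mono_left (prod_mono (hsub k) subset_rfl))
        (fun x hx => ?_)).trans (lintegral_mono_set (prod_mono (hsub k) subset_rfl))
      rw [h4 x (hsub k hx)]
      exact hu1 k x hx
    by_contra hne
    obtain ⟨k, hk2⟩ := ENNReal.exists_nat_gt hne
    exact absurd (hk k) (not_le.2 hk2)

/-- analytical obstruction: if `2 ≤ p < m` and either `π_ℓ(N)` is infinite for
some `1 ≤ ℓ ≤ ⌊p-1⌋`, or `p ∈ ℕ` and `π_{p-1}(N)` is nontrivial, then there is a map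
`u : B^{m-1} → N`, smooth on the open ball and with finite `W^{1-1/p,p}` energy, admitting no
finite-energy extension `U : B^{m-1} × [0,1) → N` continuous up to `t = 0` and `C^1` inside. -/
theorem statement2 (ν : ℕ) (hν : 1 ≤ ν) (N : Set (EuclideanSpace ℝ (Fin ν)))
    (hNcpt : IsCompact N) (hNconn : IsConnected N) (hNsub : IsSmoothSubmanifold N)
    (b : EuclideanSpace ℝ (Fin ν)) (hb : b ∈ N)
    (m : ℕ) (p : ℝ) (hp2 : 2 ≤ p) (hpm : p < m)
    (hobstruction :
      (∃ l : ℕ, 1 ≤ l ∧ (l : ℝ) ≤ p - 1 ∧ Infinite (HomotopyGroup (Fin l) ↥N ⟨b, hb⟩)) ∨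
      (∃ k : ℕ, (k : ℝ) = p ∧ Nontrivial (HomotopyGroup (Fin (k - 1)) ↥N ⟨b, hb⟩))) :
    ∃ u : EuclideanSpace ℝ (Fin (m - 1)) → EuclideanSpace ℝ (Fin ν),
      ContDiffOn ℝ (⊤ : ℕ∞) u (ball 0 1) ∧
      MapsTo u (ball 0 1) N ∧
      gagliardoE (1 - 1 / p) p (ball 0 1) u < ⊤ ∧
      ∀ U : EuclideanSpace ℝ (Fin (m - 1)) × ℝ → EuclideanSpace ℝ (Fin ν),
        ContinuousOn U (ball 0 1 ×ˢ Ico (0 : ℝ) 1) →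
        ContDiffOn ℝ 1 U (ball 0 1 ×ˢ Ioo (0 : ℝ) 1) →
        MapsTo U (ball 0 1 ×ˢ Ico (0 : ℝ) 1) N →
        (∀ x ∈ ball (0 : EuclideanSpace ℝ (Fin (m - 1))) 1, U (x, 0) = u x) →
        (∫⁻ z in ball (0 : EuclideanSpace ℝ (Fin (m - 1))) 1 ×ˢ Ioo (0 : ℝ) 1,
            ENNReal.ofReal (‖fderiv ℝ U z‖ ^ p)) = ⊤ := by
  obtain ⟨P⟩ := exists_TPkg hNcpt hNsub hb
  have hm3 : 2 < m := by
    have : (2 : ℝ) < m := by linarith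
    exact_mod_cast this
  have hmc : ((m - 1 : ℕ) : ℝ) = (m : ℝ) - 1 := by
    rw [Nat.cast_sub (by omega)]; simp
  have main : ∀ l : ℕ, ((l + 1 : ℕ) : ℝ) ≤ p - 1 →
      (Infinite (HomotopyGroup (Fin (l + 1)) ↥N ⟨b, P.hb⟩) ∨ (((l + 1 : ℕ) : ℝ) = p - 1 ∧
        Nontrivial (HomotopyGroup (Fin (l + 1)) ↥N ⟨b, P.hb⟩))) →
      ∃ R0 : ℝ, 0 < R0 ∧ ∀ K : ℝ, 0 ≤ K → ∃ (X : ℝ)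
        (v : EuclideanSpace ℝ (Fin (m - 1)) → EuclideanSpace ℝ (Fin ν)),
          Cell N b p R0 K X v := by
    intro l hl h
    have h1 : l + 1 < m - 1 := by
      have : ((l + 1 : ℕ) : ℝ) < ((m - 1 : ℕ) : ℝ) := by rw [hmc]; linarith
      exact_mod_cast this
    exact exists_cell (d := m - 1 - l - 1) hNcpt P (by linarith) (by omega) hl h
  have hcell : ∃ R0 : ℝ, 0 < R0 ∧ ∀ K : ℝ, 0 ≤ K → ∃ (X : ℝ)
        (v : EuclideanSpace ℝ (Fin (m - 1)) → EuclideanSpace ℝ (Fin ν)),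
          Cell N b p R0 K X v := by
    rcases hobstruction with ⟨l, hl1, hlp, hinf⟩ | ⟨k, hkp, hnt⟩
    · obtain ⟨l, rfl⟩ : ∃ l', l = l' + 1 := ⟨l - 1, by omega⟩
      exact main l hlp (Or.inl hinf)
    · have hk2 : 2 ≤ k := by
        have : (2 : ℝ) ≤ k := by linarith
        exact_mod_cast this
      obtain ⟨l, rfl⟩ : ∃ l, k = l + 2 := ⟨k - 2, by omega⟩
      have hl : ((l + 1 : ℕ) : ℝ) = p - 1 := by
        rw [← hkp]; push_cast; ring
      exact main l hl.le (Or.inr ⟨hl, hnt⟩)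
  obtain ⟨R0, hR0, hc⟩ := hcell
  exact assembly (by linarith) hR0 (by omega) (by rw [hmc]; linarith) hc


end
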